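/- arXiv:2012.07568 — 8 statements merged into one kernel-verified Lean document; each statement's English description precedes it below -/
import Mathlib

section
/- Let K be a field of characteristic different from 2, let b, c be positive integers, m ≥ 1, and ε₁, ε₂ ∈ {−1, +1}. The polynomial X^{2m} + b·ε₁·X^m + c·ε₂ ∈ K[X] (with b, c interpreted via the canonical map ℕ → K) is reducible over K if and only if at least one of the following holds: (i) b² − 4cε₂ is a square in K; (ii) there is a prime p dividing m such that X^{2p} + b·ε₁·X^p + c·ε₂ is reducible over K; (iii) 4 ∣ m and X^8 + b·ε₁·X^4 + c·ε₂ is reducible over K. -/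
open Polynomial

universe u

open IntermediateField in
lemma aux_integral {K E : Type*} [Field K] [Field E] [Algebra K E] {x : E} {f : K[X]}
    (hf : f ≠ 0) (hx : minpoly K x = f) : IsIntegral K x := by
  by_contra h
  exact hf (hx.symm.trans (minpoly.eq_zero h))

open IntermediateField in
lemma aux_norm {K E : Type*} [Field K] [Field E] [Algebra K E] {x : E} {n : ℕ} (hn : 0 < n) {a : K}
    (hx : minpoly K x = X ^ n - C a) :
    Algebra.norm K (AdjoinSimple.gen K x) = (-1) ^ n * (-a) := by
  have hi := aux_integral (X_pow_sub_C_ne_zero hn a) hx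
  rw [← adjoin.powerBasis_gen hi, Algebra.PowerBasis.norm_gen_eq_coeff_zero_minpoly]
  simp [minpoly_gen, hx, hn.ne]

lemma aux_descend {K L : Type*} [Field K] [Field L] [Algebra K L] [FiniteDimensional K L]
    (f : K[X]) (hm : f.Monic) (θ : L) (hf : aeval θ f = 0)
    (hdeg : Module.finrank K L = f.natDegree)
    (d : ℕ) (hd : 0 < d) (h : Irreducible (expand K d f)) : Irreducible (X ^ d - C θ) := by
  have hu : ¬ IsUnit (X ^ d - C θ) := by
    rw [Polynomial.isUnit_iff_degree_eq_zero, degree_X_pow_sub_C hd, Nat.cast_eq_zero]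
    exact hd.ne'
  obtain ⟨g, hg, hg'⟩ := WfDvdMonoid.exists_irreducible_factor hu (X_pow_sub_C_ne_zero hd θ)
  suffices hdg : d ≤ natDegree g from (associated_of_dvd_of_natDegree_le hg'
    (X_pow_sub_C_ne_zero hd θ) (natDegree_X_pow_sub_C.trans_le hdg)).irreducible hg
  have := Fact.mk hg
  have hpow : (AdjoinRoot.root g) ^ d = algebraMap L (AdjoinRoot g) θ := by
    have := eval₂_eq_zero_of_dvd_of_eval₂_eq_zero _ _ hg' (AdjoinRoot.eval₂_root g)
    rwa [eval₂_sub, eval₂_pow, eval₂_C, eval₂_X, sub_eq_zero] at this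
  have hfr : Module.finrank L (AdjoinRoot g) = g.natDegree := by
    rw [(AdjoinRoot.powerBasis hg.ne_zero).finrank, AdjoinRoot.powerBasis_dim hg.ne_zero]
  have : FiniteDimensional L (AdjoinRoot g) := (AdjoinRoot.powerBasis hg.ne_zero).finite
  have : FiniteDimensional K (AdjoinRoot g) := FiniteDimensional.trans K L (AdjoinRoot g)
  have hmin : expand K d f = minpoly K (AdjoinRoot.root g) := by
    apply minpoly.eq_of_irreducible_of_monic h
    · rw [expand_aeval, hpow, aeval_algebraMap_apply, hf, map_zero]
    · exact hm.expand hd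
  have h1 := minpoly.natDegree_le (A := K) (AdjoinRoot.root g)
  rw [← hmin, natDegree_expand, ← Module.finrank_mul_finrank K L (AdjoinRoot g), hfr, hdeg] at h1
  have hpos : 0 < f.natDegree := hdeg ▸ Module.finrank_pos
  exact Nat.le_of_mul_le_mul_left h1 hpos

open IntermediateField in
lemma aux_descend_gen {K E : Type*} [Field K] [Field E] [Algebra K E] {x : E}
    (f : K[X]) (hm : f.Monic) (hx : minpoly K x = f)
    (d : ℕ) (hd : 0 < d) (h : Irreducible (expand K d f)) :
    Irreducible (X ^ d - C (AdjoinSimple.gen K x)) := by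
  have hi := aux_integral hm.ne_zero hx
  have : FiniteDimensional K K⟮x⟯ := adjoin.finiteDimensional hi
  apply aux_descend f hm _ _ _ d hd h
  · rw [← hx, ← minpoly_gen K x]; exact minpoly.aeval _ _
  · rw [adjoin.finrank hi, hx]

open IntermediateField in
lemma aux_pow_two (k : ℕ) : ∀ {L : Type u} [Field L] {a : L}, Irreducible (X ^ 4 - C a) →
    Irreducible (X ^ (2 ^ (k + 2)) - C a) := by
  induction k with
  | zero => intro L _ a h; simpa using h
  | succ k ih =>
    intro L _ a h
    have ha0 : a ≠ 0 := ne_zero_of_irreducible_X_pow_sub_C' (by norm_num) h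
    have hexp : expand L 2 (X ^ 2 - C a) = X ^ 4 - C a := by
      simp [← pow_mul]
    rw [show 2 ^ (k + 1 + 2) = 2 ^ (k + 2) * 2 by ring]
    apply X_pow_mul_sub_C_irreducible
    · exact of_irreducible_expand two_ne_zero (by rw [hexp]; exact h)
    intro E _ _ x hx
    apply ih
    have h2 : Irreducible (X ^ 2 - C (AdjoinSimple.gen L x)) :=
      aux_descend_gen _ (monic_X_pow_sub_C a two_ne_zero) hx 2 two_pos (by rw [hexp]; exact h)
    have hsq : (AdjoinSimple.gen L x) ^ 2 = algebraMap L _ a := by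
      have : aeval (AdjoinSimple.gen L x) (X ^ 2 - C a) = 0 := by
        rw [← hx, ← minpoly_gen L x]; exact minpoly.aeval _ _
      simpa [sub_eq_zero] using this
    have hN := aux_norm two_pos hx
    generalize AdjoinSimple.gen L x = α at *
    rw [show 4 = 2 * 2 by norm_num]
    apply X_pow_mul_sub_C_irreducible h2
    intro F _ _ y hy
    apply X_pow_sub_C_irreducible_of_prime Nat.prime_two
    intro δ hδ
    have hN' := aux_norm two_pos hy
    rw [← hδ, map_pow] at hN'
    generalize Algebra.norm (↥L⟮x⟯) δ = η at hN'
    have e1 : α = - η ^ 2 := by rw [hN']; ring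
    have e2 : (Algebra.norm L η) ^ 2 = - a := by
      have : Algebra.norm L (η ^ 2) = Algebra.norm L α := by
        have h3 : η ^ 2 = algebraMap L L⟮x⟯ (-1) * α := by rw [hN']; simp
        have hfr : Module.finrank L L⟮x⟯ = 2 := by
          rw [adjoin.finrank (aux_integral (X_pow_sub_C_ne_zero two_pos a) hx), hx,
            natDegree_X_pow_sub_C]
        rw [h3, map_mul, Algebra.norm_algebraMap, hfr]; simp
      rw [← map_pow, this, hN]; ring
    set s := Algebra.norm L η
    have hs : s ≠ 0 := by
      intro h0; rw [h0] at e2; apply ha0; linear_combination e2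
    have hs' : algebraMap L L⟮x⟯ s ≠ 0 := by simpa using hs
    have e3 : α ^ 2 = - (algebraMap L L⟮x⟯ s) ^ 2 := by
      rw [hsq, ← map_pow, e2]; simp
    apply pow_ne_of_irreducible_X_pow_sub_C h2 dvd_rfl (by norm_num)
      (α / algebraMap L L⟮x⟯ s * η)
    rw [mul_pow, div_pow, e3, e1]
    field_simp

open IntermediateField in
lemma aux_capelli {L : Type u} [Field L] {a : L} {n : ℕ} (hn : n ≠ 0)
    (hp : ∀ p : ℕ, p.Prime → p ∣ n → Irreducible (X ^ p - C a))
    (h4 : 4 ∣ n → Irreducible (X ^ 4 - C a)) : Irreducible (X ^ n - C a) := by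
  obtain ⟨k, r, hr, rfl⟩ := Nat.exists_eq_two_pow_mul_odd hn
  have h2 : Irreducible (X ^ 2 ^ k - C a) := by
    match k with
    | 0 => simpa using irreducible_X_sub_C a
    | 1 => simpa using hp 2 Nat.prime_two (by simp)
    | k + 2 => exact aux_pow_two k (h4 ⟨2 ^ k * r, by ring⟩)
  rw [mul_comm]
  apply X_pow_mul_sub_C_irreducible h2
  intro E _ _ x hx
  apply X_pow_sub_C_irreducible_of_odd hr
  intro p pp hpr y hy
  have hN := aux_norm (by positivity) hx
  rw [← hy, map_pow] at hN
  have hodd : Odd p := hr.of_dvd_nat hpr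
  have hpa := pow_ne_of_irreducible_X_pow_sub_C (hp p pp (hpr.mul_left _)) dvd_rfl pp.ne_one
  rcases neg_one_pow_eq_or L (2 ^ k) with h | h
  · apply hpa (- Algebra.norm L y)
    rw [hodd.neg_pow, hN, h]; ring
  · apply hpa (Algebra.norm L y)
    rw [hN, h]; ring

lemma aux_main {K : Type u} [Field K] {f : K[X]} (hf : f.Monic) {m : ℕ} (hm : m ≠ 0)
    (h1 : Irreducible f)
    (hp : ∀ p : ℕ, p.Prime → p ∣ m → Irreducible (expand K p f))
    (h4 : 4 ∣ m → Irreducible (expand K 4 f)) : Irreducible (expand K m f) := by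
  rw [expand_eq_comp_X_pow]
  apply irreducible_comp hf (monic_X_pow m) h1
  intro E _ _ x hx
  rw [Polynomial.map_pow, map_X]
  apply aux_capelli hm
  · intro p pp hpm
    exact aux_descend_gen f hf hx p pp.pos (hp p pp hpm)
  · intro h
    exact aux_descend_gen f hf hx 4 (by norm_num) (h4 h)

/-- Schinzel's reducibility criterion for `X^{2m} + bε₁X^m + cε₂` over a field of
characteristic different from 2. -/
theorem schinzel_quadratic_in_xm (K : Type*) [Field K] (hchar : ringChar K ≠ 2)
    (b c m : ℕ) (hb : 0 < b) (hc : 0 < c) (hm : 1 ≤ m)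
    (ε₁ ε₂ : ℤ) (hε₁ : ε₁ = 1 ∨ ε₁ = -1) (hε₂ : ε₂ = 1 ∨ ε₂ = -1) :
    ¬ Irreducible ((X : Polynomial K) ^ (2 * m) +
        C ((b : K) * (ε₁ : K)) * X ^ m + C ((c : K) * (ε₂ : K))) ↔
      ((∃ x : K, (b : K) ^ 2 - 4 * (c : K) * (ε₂ : K) = x ^ 2) ∨
       (∃ p : ℕ, p.Prime ∧ p ∣ m ∧
         ¬ Irreducible ((X : Polynomial K) ^ (2 * p) +
            C ((b : K) * (ε₁ : K)) * X ^ p + C ((c : K) * (ε₂ : K)))) ∨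
       (4 ∣ m ∧
         ¬ Irreducible ((X : Polynomial K) ^ 8 +
            C ((b : K) * (ε₁ : K)) * X ^ 4 + C ((c : K) * (ε₂ : K))))) := by
  have h2 : (2 : K) ≠ 0 := Ring.two_ne_zero hchar
  have hbsq : ((b : K) * (ε₁ : K)) ^ 2 = (b : K) ^ 2 := by
    rcases hε₁ with rfl | rfl <;> simp
  rw [← hbsq, show 4 * (c : K) * (ε₂ : K) = 4 * ((c : K) * (ε₂ : K)) by ring]
  generalize (b : K) * (ε₁ : K) = B
  generalize (c : K) * (ε₂ : K) = D
  set f : K[X] := X ^ 2 + C B * X + C D with hfdef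
  have hexp : ∀ d : ℕ, X ^ (2 * d) + C B * X ^ d + C D = expand K d f := by
    intro d; simp [hfdef, ← pow_mul, mul_comm d 2]
  have h8 : X ^ 8 + C B * X ^ 4 + C D = expand K 4 f := hexp 4
  have hdeg : f.natDegree = 2 := by rw [hfdef]; compute_degree!
  have hmon : f.Monic := by rw [hfdef]; monicity!
  have hirr : ¬ Irreducible f ↔ ∃ x : K, B ^ 2 - 4 * D = x ^ 2 := by
    rw [irreducible_iff_roots_eq_zero_of_degree_le_three hdeg.ge (by omega)]
    constructor
    · intro h
      obtain ⟨x, hx⟩ := Multiset.exists_mem_of_ne_zero h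
      have := isRoot_of_mem_roots hx
      simp only [hfdef, IsRoot.def, eval_add, eval_pow, eval_mul, eval_X, eval_C] at this
      exact ⟨2 * x + B, by linear_combination -4 * this⟩
    · rintro ⟨x, hx⟩ h0
      have : (x - B) / 2 ∈ f.roots := by
        rw [mem_roots hmon.ne_zero]
        simp only [hfdef, IsRoot.def, eval_add, eval_pow, eval_mul, eval_X, eval_C]
        field_simp
        linear_combination -hx
      simp [h0] at this
  have hdvd : ∀ d : ℕ, d ∣ m → Irreducible (expand K m f) → Irreducible (expand K d f) := by
    rintro d ⟨e, rfl⟩ h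
    rw [mul_comm, expand_mul] at h
    exact of_irreducible_expand (by rintro rfl; simp at hm) h
  simp only [hexp, h8, ← hirr]
  constructor
  · intro h
    by_contra! hcon
    obtain ⟨h1, hp, h4⟩ := hcon
    exact h (aux_main hmon (by omega) h1 hp h4)
  · rintro (h | ⟨p, -, hpm, h⟩ | ⟨h4, h⟩) hi
    · exact h (by simpa using hdvd 1 (one_dvd _) hi)
    · exact h (hdvd p hpm hi)
    · exact h (hdvd 4 h4 hi)
end

section
/- Let p be an odd prime, let u ≥ 2 be an integer, and let ε₁ ∈ {−1, +1}. Then the polynomial X^{2p} + ε₁·X^p + u^p is irreducible over ℚ. -/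
open Polynomial

/-- Lucas sequence of the second kind with parameters `t`, `u`. -/
def lucV (t u : ℤ) : ℕ → ℤ
  | 0 => 2
  | 1 => t
  | (n + 2) => t * lucV t u (n + 1) - u * lucV t u n

lemma lucV_eq {R : Type*} [CommRing R] (t u : ℤ) (a b : R) (hs : a + b = t) (hm : a * b = u) :
    ∀ n : ℕ, a ^ n + b ^ n = (lucV t u n : R)
  | 0 => by simp [lucV]; norm_num
  | 1 => by simp [lucV, hs]
  | (n + 2) => by
    have h1 := lucV_eq t u a b hs hm (n + 1)
    have h0 := lucV_eq t u a b hs hm n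
    simp only [lucV]
    push_cast
    rw [← h1, ← h0, ← hs, ← hm]
    ring

lemma lucV_dvd (t u : ℤ) (k : ℕ) : t ∣ lucV t u (2 * k + 1) := by
  induction k with
  | zero => simp [lucV]
  | succ k ih =>
    have : lucV t u (2 * (k + 1) + 1) = t * lucV t u (2 * k + 2) - u * lucV t u (2 * k + 1) := by
      rw [show 2 * (k + 1) + 1 = (2 * k + 1) + 2 by ring, lucV]
    rw [this]
    exact dvd_sub (dvd_mul_right _ _) (ih.mul_left _)

lemma lucV_neg (t u : ℤ) : ∀ n : ℕ, lucV (-t) u n = (-1) ^ n * lucV t u n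
  | 0 => by simp [lucV]
  | 1 => by simp [lucV]
  | (n + 2) => by
    simp only [lucV]
    rw [lucV_neg t u (n + 1), lucV_neg t u n]
    ring

lemma lucV_expand (u : ℤ) (n : ℕ) :
    (∃ c : ℤ, 2 * lucV 1 u (n + 3) =
      2 - 2 * ((n : ℤ) + 3) * u + ((n : ℤ) + 3) * n * u ^ 2 + 2 * u ^ 3 * c) ∧
    (∃ c : ℤ, 2 * lucV 1 u (n + 4) =
      2 - 2 * ((n : ℤ) + 4) * u + ((n : ℤ) + 4) * (n + 1) * u ^ 2 + 2 * u ^ 3 * c) := by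
  induction n with
  | zero =>
    refine ⟨⟨0, ?_⟩, ⟨0, ?_⟩⟩ <;> simp [lucV] <;> ring
  | succ n ih =>
    obtain ⟨⟨c, hc⟩, ⟨d, hd⟩⟩ := ih
    refine ⟨⟨d, ?_⟩, ?_⟩
    · rw [show n + 1 + 3 = n + 4 by ring, hd]; push_cast; ring
    · have e : Even (((n : ℤ) + 2) * ((n : ℤ) + 3) + (n + 3) * (n - 2)) := by
        simp only [Int.even_add, Int.even_mul, Int.even_sub]
        simp [parity_simps]
        try tauto
      have e2 : Even (((n : ℤ) + 3) * n) := by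
        have := Int.even_mul_succ_self (n : ℤ)
        simp [parity_simps] at this ⊢
        tauto
      obtain ⟨k, hk⟩ := e2
      refine ⟨d - k - u * c, ?_⟩
      have : lucV 1 u (n + 1 + 4) = 1 * lucV 1 u (n + 4) - u * lucV 1 u (n + 3) := by
        rw [show n + 1 + 4 = (n + 3) + 2 by ring, lucV]
      rw [this, mul_sub, one_mul, hd, show 2 * (u * lucV 1 u (n + 3)) = u * (2 * lucV 1 u (n + 3)) by ring, hc]
      push_cast
      linear_combination (-u ^ 3) * hk

lemma lucV_ne_aux (p : ℕ) (hp : p.Prime) (hodd : Odd p) (u : ℕ) (hu : 2 ≤ u) :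
    lucV 1 u p ≠ 1 ∧ lucV 1 u p ≠ -1 := by
  obtain ⟨n, rfl⟩ : ∃ n, p = n + 3 := by
    have := hp.two_le
    have : p ≠ 2 := by rintro rfl; revert hodd; decide
    exact ⟨p - 3, by omega⟩
  obtain ⟨⟨c, hc⟩, -⟩ := lucV_expand u n
  have hn : Even n := by
    rcases Nat.even_or_odd n with h | h
    · exact h
    · exfalso
      have : Even (n + 3) := h.add_odd (by decide)
      exact (Nat.not_even_iff_odd.mpr hodd) this
  obtain ⟨m, rfl⟩ := hn
  have hu0 : (u : ℤ) ≠ 0 := by positivity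
  constructor
  · intro h
    rw [h] at hc
    push_cast at hc
    have h1 : ((m : ℤ) + m + 3) = u * (((m : ℤ) + m + 3) * m + u * c) := by
      have : 2 * (u : ℤ) * ((m : ℤ) + m + 3) = 2 * u * (u * (((m : ℤ) + m + 3) * m + u * c)) := by
        linear_combination hc
      exact mul_left_cancel₀ (by positivity) this
    have h2 : u ∣ m + m + 3 := by
      have : (u : ℤ) ∣ ((m + m + 3 : ℕ) : ℤ) := ⟨_, by push_cast; exact h1⟩
      exact_mod_cast this
    have h3 : u = m + m + 3 := by
      rcases (Nat.dvd_prime hp).mp h2 with h | h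
      · omega
      · exact h
    have h4 : ((m : ℤ) + m + 3) = u := by rw [h3]; push_cast; ring
    rw [h4] at h1
    have h5 : (1 : ℤ) = u * (m + c) := by
      apply mul_left_cancel₀ hu0
      linear_combination h1
    have : (u : ℤ) ∣ 1 := ⟨_, h5⟩
    have := Int.le_of_dvd (by norm_num) this
    omega
  · intro h
    rw [h] at hc
    push_cast at hc
    have h1 : (2 : ℤ) = u * (((m : ℤ) + m + 3) - ((m : ℤ) + m + 3) * m * u - u ^ 2 * c) := by
      linarith
    have h2 : (u : ℤ) ∣ 2 := ⟨_, h1⟩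
    have := Int.le_of_dvd (by norm_num) h2
    have h3 : (u : ℤ) = 2 := by omega
    rw [h3] at h1
    obtain ⟨k, hk⟩ := Int.even_mul_succ_self (m : ℤ)
    ring_nf at h1 hk
    have : (m : ℤ) ^ 2 = k * 2 - m := by linarith
    rw [this] at h1
    omega

lemma lucV_ne (p : ℕ) (hp : p.Prime) (hodd : Odd p) (u : ℕ) (hu : 2 ≤ u) (t ε : ℤ)
    (hε : ε = 1 ∨ ε = -1) : lucV t u p ≠ ε := by
  intro h
  have hd : t ∣ ε := by
    obtain ⟨k, rfl⟩ := hodd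
    rw [← h]; exact lucV_dvd _ _ _
  have ht : t = 1 ∨ t = -1 := by
    have : IsUnit ε := Int.isUnit_iff.mpr hε
    exact Int.isUnit_iff.mp (isUnit_of_dvd_unit hd this)
  obtain ⟨h1, h2⟩ := lucV_ne_aux p hp hodd u hu
  rcases ht with rfl | rfl
  · rcases hε with rfl | rfl
    · exact h1 h
    · exact h2 h
  · rw [lucV_neg, hodd.neg_one_pow] at h
    rcases hε with rfl | rfl
    · exact h2 (by linarith)
    · exact h1 (by linarith)

lemma conj_aux {L : Type*} [Field L] (A : Algebra ℚ L) (pb : PowerBasis ℚ L) (p : ℕ) (hp : p.Prime)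
    (hodd : Odd p) (u : ℕ) (hu : 2 ≤ u) (ε : ℤ) (hε : ε = 1 ∨ ε = -1)
    (hmin : minpoly ℚ pb.gen = X ^ 2 + C (ε : ℚ) * X + C ((u : ℚ) ^ p)) (b : L) :
    b ^ p ≠ pb.gen := by
  intro hb
  have hroot : pb.gen ^ 2 + (ε : L) * pb.gen + (u : L) ^ p = 0 := by
    have := minpoly.aeval ℚ pb.gen
    rw [hmin] at this
    simpa using this
  have hroot' : aeval (-(ε : L) - pb.gen) (minpoly ℚ pb.gen) = 0 := by
    rw [hmin]
    simp only [map_add, map_mul, map_pow, aeval_X, map_intCast, map_natCast]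
    linear_combination hroot
  let σ := pb.lift _ hroot'
  have hσ : σ pb.gen = -(ε : L) - pb.gen := pb.lift_gen _ hroot'
  have hdim : pb.dim = 2 := by
    rw [← pb.natDegree_minpoly, hmin]
    compute_degree!
  obtain ⟨q, hq, hbq⟩ := pb.exists_eq_aeval b
  obtain ⟨s, r, rfl⟩ := exists_eq_X_add_C_of_natDegree_le_one (show q.natDegree ≤ 1 by omega)
  have hb1 : b = algebraMap ℚ L s * pb.gen + algebraMap ℚ L r := by simpa using hbq
  have hb2 : σ b = algebraMap ℚ L s * (-(ε : L) - pb.gen) + algebraMap ℚ L r := by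
    rw [hb1]; simp [hσ]
  have hbσ : (σ b) ^ p = -(ε : L) - pb.gen := by rw [← map_pow, hb, hσ]
  -- the trace and norm are rational
  have hT : b + σ b = algebraMap ℚ L (2 * r - s * ε) := by
    rw [hb2]; nth_rw 1 [hb1]
    simp only [map_sub, map_mul, map_intCast, map_ofNat]
    ring
  have hN : b * σ b = algebraMap ℚ L (r ^ 2 - r * s * ε + s ^ 2 * u ^ p) := by
    rw [hb2]; nth_rw 1 [hb1]
    simp only [map_sub, map_add, map_mul, map_pow, map_intCast, map_natCast]
    linear_combination (-(algebraMap ℚ L s) ^ 2) * hroot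
  have hinj : Function.Injective (algebraMap ℚ L) := (algebraMap ℚ L).injective
  have hNu : (r ^ 2 - r * s * ε + s ^ 2 * u ^ p : ℚ) = u := by
    apply hodd.strictMono_pow.injective
    apply hinj
    simp only
    rw [map_pow, ← hN, mul_pow, hb, hbσ, map_pow, map_natCast]
    linear_combination -hroot
  have hintg : IsIntegral ℤ pb.gen := by
    refine ⟨X ^ 2 + C ε * X + C ((u : ℤ) ^ p), by monicity!, ?_⟩
    rw [eval₂_add, eval₂_add, eval₂_mul, eval₂_pow, eval₂_X, eval₂_C, eval₂_C]
    simpa using hroot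
  have hintb : IsIntegral ℤ b := IsIntegral.of_pow hp.pos (by rw [hb]; exact hintg)
  have hintσ : IsIntegral ℤ (σ b) := by
    have := hintb.map (σ.restrictScalars ℤ)
    simpa using this
  have hint := hintb.add hintσ
  rw [hT] at hint
  have hint2 : IsIntegral ℤ (2 * r - s * ε : ℚ) :=
    (isIntegral_algebraMap_iff hinj).mp hint
  obtain ⟨t, ht⟩ := IsIntegrallyClosed.isIntegral_iff.mp hint2
  have h := lucV_eq t (u : ℤ) b (σ b) (by rw [hT, ← ht]; simp) (by rw [hN, hNu]; simp) p
  rw [hb, hbσ] at h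
  have h' : ((-ε : ℤ) : ℚ) = (lucV t u p : ℤ) := by
    apply hinj
    rw [map_intCast, map_intCast, ← h]
    push_cast; ring
  have h'' : -ε = lucV t u p := by exact_mod_cast h'
  refine lucV_ne p hp hodd u hu t (-ε) ?_ h''.symm
  rcases hε with rfl | rfl <;> simp

/-- Filaseta et al.: `X^{2p} + ε₁X^p + u^p` is irreducible over `ℚ`. -/
theorem filaseta_x2p (p : ℕ) (hp : p.Prime) (hodd : Odd p) (u : ℕ) (hu : 2 ≤ u)
    (ε₁ : ℤ) (hε₁ : ε₁ = 1 ∨ ε₁ = -1) :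
    Irreducible ((X : Polynomial ℚ) ^ (2 * p) + C (ε₁ : ℚ) * X ^ p + C ((u : ℚ) ^ p)) := by
  have hmon : (X ^ 2 + C (ε₁ : ℚ) * X + C ((u : ℚ) ^ p)).Monic := by monicity!
  have hdeg : (X ^ 2 + C (ε₁ : ℚ) * X + C ((u : ℚ) ^ p)).natDegree = 2 := by compute_degree!
  have hirr : Irreducible (X ^ 2 + C (ε₁ : ℚ) * X + C ((u : ℚ) ^ p)) := by
    rw [hmon.irreducible_iff_roots_eq_zero_of_degree_le_three (by omega) (by omega)]
    rw [Multiset.eq_zero_iff_forall_notMem]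
    intro x hx
    have h := (mem_roots'.mp hx).2
    simp only [IsRoot.def, eval_add, eval_mul, eval_pow, eval_X, eval_C] at h
    have h1 : (1 : ℚ) ≤ (u : ℚ) ^ p := one_le_pow₀ (by exact_mod_cast (by omega : 1 ≤ u))
    rcases hε₁ with rfl | rfl
    · push_cast at h; nlinarith [sq_nonneg (2 * x + 1)]
    · push_cast at h; nlinarith [sq_nonneg (2 * x - 1)]
  have key := irreducible_comp hmon (monic_X_pow p) hirr (by
    intro E _ _ x hx
    have hxi : IsIntegral ℚ x := by
      by_contra hcon
      rw [minpoly.eq_zero hcon] at hx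
      exact hmon.ne_zero hx.symm
    simp only [Polynomial.map_pow, map_X]
    apply X_pow_sub_C_irreducible_of_prime hp
    intro b
    have := conj_aux _ (IntermediateField.adjoin.powerBasis hxi) p hp hodd u hu ε₁ hε₁ (by
      rw [IntermediateField.adjoin.powerBasis_gen, IntermediateField.minpoly_gen, hx]) b
    rwa [IntermediateField.adjoin.powerBasis_gen] at this)
  have e : ((X : Polynomial ℚ) ^ (2 * p) + C (ε₁ : ℚ) * X ^ p + C ((u : ℚ) ^ p)) =
      (X ^ 2 + C (ε₁ : ℚ) * X + C ((u : ℚ) ^ p)).comp (X ^ p) := by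
    simp [← pow_mul, mul_comm]
  rw [e]
  exact key
end

section
/- Let p be a prime, let c be a positive integer with p ∤ c, and let ε₂ ∈ {−1, +1}. Then the polynomial X^p − X + c·ε₂ is irreducible in ℤ[X]. -/
open Polynomial

theorem artin_schreier_aux (p : ℕ) [Fact p.Prime] (a : ZMod p) (ha : a ≠ 0) :
    Irreducible ((X : Polynomial (ZMod p)) ^ p - X + C a) := by
  have hp : p.Prime := Fact.out
  have hp1 : 1 < p := hp.one_lt
  have hdeg : ((X : Polynomial (ZMod p)) ^ p - X + C a).natDegree = p := by
    compute_degree!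
    · simp [hp1.ne, hp.ne_zero]
    · exact hp1.le
  set f : Polynomial (ZMod p) := X ^ p - X + C a with hf
  have hf0 : f ≠ 0 := by
    intro h
    rw [h] at hdeg
    simp at hdeg
    omega
  have hfu : ¬ IsUnit f := by
    intro h
    have := natDegree_eq_zero_of_isUnit h
    omega
  obtain ⟨g, hg, h, hgh⟩ := WfDvdMonoid.exists_irreducible_factor hfu hf0
  have hg0 := hg.ne_zero
  have hh0 : h ≠ 0 := by
    rintro rfl
    simp at hgh
    exact hf0 hgh
  have : Fact (Irreducible g) := ⟨hg⟩
  let pb := AdjoinRoot.powerBasis hg0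
  have : Module.Finite (ZMod p) (AdjoinRoot g) := pb.finite
  have : Finite (AdjoinRoot g) := Module.finite_of_finite (ZMod p)
  have : Fintype (AdjoinRoot g) := Fintype.ofFinite _
  have : CharP (AdjoinRoot g) p := charP_of_injective_algebraMap
    (algebraMap (ZMod p) (AdjoinRoot g)).injective p
  have hcard : Fintype.card (AdjoinRoot g) = p ^ g.natDegree := by
    rw [Module.card_eq_pow_finrank (K := ZMod p), ZMod.card, pb.finrank]
    rfl
  set r := AdjoinRoot.root g
  set b := algebraMap (ZMod p) (AdjoinRoot g) a with hb
  have hr : r ^ p = r - b := by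
    have h1 : aeval r f = 0 := by
      rw [hgh, map_mul, AdjoinRoot.aeval_eq, AdjoinRoot.mk_self, zero_mul]
    simp only [hf, map_add, map_sub, map_pow, aeval_X, aeval_C] at h1
    linear_combination h1
  have hbp : b ^ p = b := by rw [hb, ← map_pow, ZMod.pow_card]
  have key : ∀ k : ℕ, r ^ (p ^ k) = r - k * b := by
    intro k
    induction k with
    | zero => simp
    | succ k ih =>
      have hk : ((k : AdjoinRoot g)) ^ p = k := by
        have := congrArg (algebraMap (ZMod p) (AdjoinRoot g)) (ZMod.pow_card (k : ZMod p))
        rwa [map_pow, map_natCast] at this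
      rw [pow_succ, pow_mul, ih, sub_pow_char, mul_pow, hk, hbp, hr]
      push_cast
      ring
  have h2 := key g.natDegree
  rw [← hcard, FiniteField.pow_card] at h2
  have hb0 : b ≠ 0 := by simpa [hb] using ha
  have h3 : (g.natDegree : AdjoinRoot g) = 0 := by
    have : (g.natDegree : AdjoinRoot g) * b = 0 := by linear_combination h2
    exact (mul_eq_zero.mp this).resolve_right hb0
  have h4 : p ∣ g.natDegree := (CharP.cast_eq_zero_iff _ p _).mp h3
  have h5 := Nat.le_of_dvd hg.natDegree_pos h4
  have h6 : f.natDegree = g.natDegree + h.natDegree := by rw [hgh, natDegree_mul hg0 hh0]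
  have h7 : h.natDegree = 0 := by omega
  have hu : IsUnit h := by
    rw [isUnit_iff_degree_eq_zero, degree_eq_natDegree hh0, h7]
    rfl
  rw [hgh]
  exact (irreducible_mul_isUnit hu).mpr hg

/-- Serret–Ore: `X^p - X + cε₂` is irreducible when `p` is a prime not dividing `c`. -/
theorem serret_ore (p : ℕ) (hp : p.Prime) (c : ℕ) (hc : 0 < c) (hpc : ¬ p ∣ c)
    (ε₂ : ℤ) (hε₂ : ε₂ = 1 ∨ ε₂ = -1) :
    Irreducible ((X : Polynomial ℤ) ^ p - X + C ((c : ℤ) * ε₂)) := by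
  have : Fact p.Prime := ⟨hp⟩
  have hp1 := hp.one_lt
  have hc0 : (c : ZMod p) ≠ 0 := by rwa [Ne, ZMod.natCast_eq_zero_iff]
  refine Monic.irreducible_of_irreducible_map (Int.castRingHom (ZMod p)) _ ?_ ?_
  · rw [sub_add]
    apply monic_X_pow_sub
    refine lt_of_le_of_lt (b := ((1 : ℕ) : WithBot ℕ)) (by compute_degree; exact le_refl _) ?_
    exact_mod_cast hp1
  · have := artin_schreier_aux p ((c : ZMod p) * (ε₂ : ZMod p)) (by
      rcases hε₂ with rfl | rfl <;> simpa using hc0)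
    simpa using this
end

section
/- Let a, b, c be positive integers, let p be a prime with p ∤ b·c, let r ≥ 0, k ≥ 1, n ≥ 2 be integers, and let ε₁, ε₂ ∈ {−1, +1}. If p^k > b·p^{2r} + c^{n−1}·a·p^{n·r}, then the polynomial a·X^n + b·p^r·ε₁·X + p^k·c·ε₂ is irreducible over ℚ. -/
open Polynomial

lemma bb_prod_gt (M : ℝ) (hM : 1 ≤ M) (s : Multiset ℂ) (hs : ∀ x ∈ s, M < ‖x‖) :
    1 ≤ ‖s.prod‖ ∧ (s ≠ 0 → M < ‖s.prod‖) := by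
  induction s using Multiset.induction_on with
  | empty => simp
  | cons x s ih =>
    obtain ⟨h1, -⟩ := ih (fun y hy => hs y (Multiset.mem_cons_of_mem hy))
    have hx := hs x (Multiset.mem_cons_self x s)
    have : M < ‖(x ::ₘ s).prod‖ := by
      rw [Multiset.prod_cons, norm_mul]
      nlinarith
    exact ⟨by linarith, fun _ => this⟩

lemma bb_root (G : ℤ[X]) (hG : 0 < G.natDegree) (M : ℝ) (hM : 1 ≤ M)
    (h0 : |(G.coeff 0 : ℝ)| ≤ M) : ∃ z : ℂ, aeval z G = 0 ∧ ‖z‖ ≤ M := by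
  by_contra! hcon
  have hinj : Function.Injective (Int.castRingHom ℂ) := RingHom.injective_int _
  set g := G.map (Int.castRingHom ℂ) with hg
  have hdeg : g.natDegree = G.natDegree := natDegree_map_eq_of_injective hinj G
  have hspl : g.Splits := IsAlgClosed.splits g
  have hne : g ≠ 0 := by
    intro h; rw [h] at hdeg; simp at hdeg; omega
  have hroots : ∀ x ∈ g.roots, M < ‖x‖ := by
    intro x hx
    apply hcon
    have := (mem_roots hne).1 hx
    rw [IsRoot.def, hg, eval_map] at this
    rw [aeval_def]
    exact this
  have hcard : g.roots ≠ 0 := by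
    intro h
    have := hspl.natDegree_eq_card_roots
    rw [h] at this; simp at this; omega
  have hp := (bb_prod_gt M hM _ hroots).2 hcard
  have hc := hspl.coeff_zero_eq_leadingCoeff_mul_prod_roots
  have hl : 1 ≤ ‖g.leadingCoeff‖ := by
    rw [hg, leadingCoeff_map_of_injective hinj]
    have hG0 : G.leadingCoeff ≠ 0 := by
      rw [leadingCoeff_ne_zero]; rintro rfl; simp at hG
    simp only [eq_intCast, Complex.norm_intCast]
    exact_mod_cast Int.one_le_abs hG0
  have hn : ‖g.coeff 0‖ = |(G.coeff 0 : ℝ)| := by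
    rw [hg, coeff_map]; simp [Complex.norm_intCast]
  rw [hc] at hn
  simp only [norm_mul, norm_pow, norm_neg, norm_one, one_pow, one_mul] at hn
  nlinarith

lemma bb_dvd (p r k c : ℕ) (hp : p.Prime) (x y : ℤ) (hx : x ≠ 0)
    (hxy : x.natAbs * y.natAbs = p ^ k * c) (h : ¬ ((p : ℤ) ^ (r + 1) ∣ x)) :
    x.natAbs ∣ c * p ^ r := by
  obtain ⟨e, u, hu, he⟩ := Nat.exists_eq_pow_mul_and_not_dvd
    (Int.natAbs_ne_zero.2 hx) p hp.ne_one
  have her : e ≤ r := by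
    by_contra! hlt
    apply h
    have : p ^ (r + 1) ∣ x.natAbs := he ▸ (pow_dvd_pow p hlt).mul_right u
    exact_mod_cast Int.natCast_dvd.2 this
  have hcop : Nat.Coprime u (p ^ k) :=
    ((hp.coprime_iff_not_dvd.2 hu).symm).pow_right k
  have huc : u ∣ c := by
    apply hcop.dvd_of_dvd_mul_left
    rw [← hxy, he]
    exact ⟨p ^ e * y.natAbs, by ring⟩
  rw [he, mul_comm]
  exact mul_dvd_mul huc (pow_dvd_pow p her)

lemma bb_core (a b c : ℕ) (hc : 0 < c)
    (p : ℕ) (hp : p.Prime) (r k n : ℕ) (hn : 2 ≤ n)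
    (ε₁ ε₂ : ℤ) (hε₁ : ε₁ = 1 ∨ ε₁ = -1) (hε₂ : ε₂ = 1 ∨ ε₂ = -1)
    (hbig : p ^ k > b * p ^ (2 * r) + c ^ (n - 1) * a * p ^ (n * r))
    (G H : ℤ[X]) (hG : 0 < G.natDegree)
    (hf : C (a : ℤ) * X ^ n + C ((b : ℤ) * (p : ℤ) ^ r * ε₁) * X +
      C ((p : ℤ) ^ k * (c : ℤ) * ε₂) = G * H)
    (h0 : G.coeff 0 * H.coeff 0 = (p : ℤ) ^ k * c * ε₂)
    (hnd : ¬ ((p : ℤ) ^ (r + 1) ∣ G.coeff 0)) : False := by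
  have hx : G.coeff 0 ≠ 0 := by
    intro h; rw [h] at hnd; simp at hnd
  have hxy : (G.coeff 0).natAbs * (H.coeff 0).natAbs = p ^ k * c := by
    rw [← Int.natAbs_mul, h0, Int.natAbs_mul, Int.natAbs_mul, Int.natAbs_pow]
    rcases hε₂ with rfl | rfl <;> simp
  have hd := bb_dvd p r k c hp _ _ hx hxy hnd
  have hpos : 0 < c * p ^ r := Nat.mul_pos hc (pow_pos hp.pos r)
  have hle := Nat.le_of_dvd hpos hd
  have hM1 : (1 : ℝ) ≤ c * (p : ℝ) ^ r := by exact_mod_cast hpos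
  have hM : |((G.coeff 0 : ℤ) : ℝ)| ≤ c * (p : ℝ) ^ r := by
    have h2 : (((G.coeff 0).natAbs : ℕ) : ℝ) ≤ ((c * p ^ r : ℕ) : ℝ) := by exact_mod_cast hle
    rw [Nat.cast_natAbs] at h2
    push_cast at h2
    exact h2
  obtain ⟨z, hz, hzM⟩ := bb_root G hG _ hM1 hM
  have hfz := congrArg (aeval z) hf
  rw [map_mul (aeval z) G H, hz, zero_mul] at hfz
  simp only [map_add, map_mul, map_pow, aeval_X, aeval_C, eq_intCast, Int.cast_natCast, map_natCast,
    map_intCast] at hfz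
  have hkey : (p : ℝ) ^ k * c ≤ a * ‖z‖ ^ n + b * (p : ℝ) ^ r * ‖z‖ := by
    have := eq_neg_of_add_eq_zero_right hfz
    have h3 := congrArg norm this
    rw [norm_neg] at h3
    have h4 := h3.le.trans (norm_add_le _ _)
    rcases hε₁ with rfl | rfl <;> rcases hε₂ with rfl | rfl <;>
      simpa [norm_mul, norm_pow] using h4
  have hA : (a : ℝ) * ‖z‖ ^ n ≤ a * (c * (p : ℝ) ^ r) ^ n := by gcongr
  have hB : (b : ℝ) * (p : ℝ) ^ r * ‖z‖ ≤ b * (p : ℝ) ^ r * (c * (p : ℝ) ^ r) := by gcongr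
  have hbig' : (b : ℝ) * p ^ (2 * r) + c ^ (n - 1) * a * p ^ (n * r) < (p : ℝ) ^ k := by
    exact_mod_cast hbig
  have hc' : (0 : ℝ) < c := by exact_mod_cast hc
  have h5 := mul_lt_mul_of_pos_right hbig' hc'
  obtain ⟨m, rfl⟩ : ∃ m, n = m + 1 := ⟨n - 1, by omega⟩
  have h6 : ((b : ℝ) * p ^ (2 * r) + c ^ (m + 1 - 1) * a * p ^ ((m + 1) * r)) * c
      = a * (c * (p : ℝ) ^ r) ^ (m + 1) + b * (p : ℝ) ^ r * (c * (p : ℝ) ^ r) := by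
    rw [Nat.add_sub_cancel, mul_pow, ← pow_mul, mul_comm r (m + 1), two_mul, pow_add (p : ℝ) r r]
    ring
  linarith

/-- The Bonciocat–Bonciocat criterion: `aX^n + bp^r ε₁ X + p^k c ε₂` is irreducible
over `ℚ` when `p^k > bp^{2r} + c^{n-1}ap^{nr}`. -/
theorem bonciocat_criterion (a b c : ℕ) (ha : 0 < a) (hb : 0 < b) (hc : 0 < c)
    (p : ℕ) (hp : p.Prime) (hpbc : ¬ p ∣ b * c)
    (r k n : ℕ) (hk : 1 ≤ k) (hn : 2 ≤ n)
    (ε₁ ε₂ : ℤ) (hε₁ : ε₁ = 1 ∨ ε₁ = -1) (hε₂ : ε₂ = 1 ∨ ε₂ = -1)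
    (hbig : p ^ k > b * p ^ (2 * r) + c ^ (n - 1) * a * p ^ (n * r)) :
    Irreducible (C (a : ℚ) * X ^ n +
      C ((b : ℚ) * (p : ℚ) ^ r * (ε₁ : ℚ)) * X +
      C ((p : ℚ) ^ k * (c : ℚ) * (ε₂ : ℚ))) := by
  obtain ⟨f, hf⟩ : ∃ f : ℤ[X], C (a : ℤ) * X ^ n + C ((b : ℤ) * (p : ℤ) ^ r * ε₁) * X +
      C ((p : ℤ) ^ k * (c : ℤ) * ε₂) = f := ⟨_, rfl⟩
  have hmap : C (a : ℚ) * X ^ n + C ((b : ℚ) * (p : ℚ) ^ r * (ε₁ : ℚ)) * X +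
      C ((p : ℚ) ^ k * (c : ℚ) * (ε₂ : ℚ)) = f.map (Int.castRingHom ℚ) := by
    rw [← hf]; simp
  have hcn : f.coeff n = a := by
    rw [← hf]
    simp only [coeff_add, coeff_C_mul, coeff_X_pow, coeff_X, coeff_C]
    simp [show n ≠ 0 by omega, show 1 ≠ n by omega, show 0 ≠ n by omega]
  have hc0 : f.coeff 0 = (p : ℤ) ^ k * c * ε₂ := by
    rw [← hf]
    simp only [coeff_add, coeff_C_mul, coeff_X_pow, coeff_X, coeff_C]
    simp [show n ≠ 0 by omega, show 1 ≠ n by omega, show 0 ≠ n by omega]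
  have hc1 : f.coeff 1 = (b : ℤ) * (p : ℤ) ^ r * ε₁ := by
    rw [← hf]
    simp only [coeff_add, coeff_C_mul, coeff_X_pow, coeff_X, coeff_C]
    simp [show n ≠ 0 by omega, show 1 ≠ n by omega, show 0 ≠ n by omega]
  have hf0 : f ≠ 0 := by
    rintro rfl; simp at hcn; omega
  have hfdeg : 0 < f.natDegree := by
    have : n ≤ f.natDegree := le_natDegree_of_ne_zero (by rw [hcn]; exact_mod_cast ha.ne')
    omega
  have key : ∀ G H : ℤ[X], 0 < G.natDegree → 0 < H.natDegree → f = G * H → False := by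
    intro G H hG hH hGH
    have h0 : G.coeff 0 * H.coeff 0 = (p : ℤ) ^ k * c * ε₂ := by
      rw [← hc0, hGH, mul_coeff_zero]
    have h1 : G.coeff 0 * H.coeff 1 + G.coeff 1 * H.coeff 0 = (b : ℤ) * (p : ℤ) ^ r * ε₁ := by
      rw [← hc1, hGH, mul_coeff_one]
    by_cases hg : (p : ℤ) ^ (r + 1) ∣ G.coeff 0
    · by_cases hh : (p : ℤ) ^ (r + 1) ∣ H.coeff 0
      · have hd : (p : ℤ) ^ (r + 1) ∣ (b : ℤ) * (p : ℤ) ^ r * ε₁ := by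
          rw [← h1]
          exact dvd_add (hg.mul_right _) (hh.mul_left _)
        have hd2 : (p : ℤ) ^ (r + 1) ∣ (b : ℤ) * (p : ℤ) ^ r := by
          rcases hε₁ with rfl | rfl <;> simpa using hd
        have hd3 : p ^ r * p ∣ p ^ r * b := by
          rw [← pow_succ, mul_comm _ b]
          exact_mod_cast hd2
        exact hpbc ((Nat.dvd_of_mul_dvd_mul_left (pow_pos hp.pos r) hd3).mul_right c)
      · exact bb_core a b c hc p hp r k n hn ε₁ ε₂ hε₁ hε₂ hbig H G hH
          (by rw [hf, hGH, mul_comm]) (by rw [mul_comm, h0]) hh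
    · exact bb_core a b c hc p hp r k n hn ε₁ ε₂ hε₁ hε₂ hbig G H hG
          (by rw [hf, hGH]) h0 hg
  have hcont : f.content ≠ 0 := by rwa [Ne, content_eq_zero_iff]
  have hprim := f.isPrimitive_primPart
  have hirr : Irreducible f.primPart := by
    constructor
    · intro hu
      have := natDegree_eq_zero_of_isUnit hu
      rw [natDegree_primPart] at this
      omega
    · intro g h hgh
      have aux : ∀ q : ℤ[X], q ∣ f.primPart → q.natDegree = 0 → IsUnit q := by
        intro q hq hq0
        rw [eq_C_of_natDegree_eq_zero hq0] at hq ⊢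
        exact (hprim _ hq).map C
      by_contra! hcon
      have hg : 0 < g.natDegree :=
        Nat.pos_of_ne_zero fun h' => hcon.1 (aux g ⟨h, hgh⟩ h')
      have hh : 0 < h.natDegree :=
        Nat.pos_of_ne_zero fun h' => hcon.2 (aux h ⟨g, by rw [hgh, mul_comm]⟩ h')
      refine key (C f.content * g) h ?_ hh ?_
      · rwa [natDegree_C_mul hcont]
      · rw [mul_assoc, ← hgh]; exact f.eq_C_content_mul_primPart
  rw [hmap, f.eq_C_content_mul_primPart, Polynomial.map_mul, map_C]
  have hu : IsUnit (C ((Int.castRingHom ℚ) f.content)) := by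
    rw [isUnit_C, isUnit_iff_ne_zero]
    simpa using hcont
  rw [irreducible_isUnit_mul hu]
  exact (IsPrimitive.Int.irreducible_iff_irreducible_map_cast hprim).1 hirr
end

section
/- Let f(X) = a_nX^n + ⋯ + a_1X + a_0 ∈ ℤ[X] have degree n ≥ 1 and satisfy |a_0| > |a_1| + |a_2| + ⋯ + |a_n|. If |a_0| is a prime number, or if √|a_0| − √|a_n| < 1 (square roots taken in ℝ), then f is irreducible over ℚ. -/
open Polynomial Finset

theorem ps_root_norm (f : Polynomial ℤ) (n : ℕ) (hdeg : f.natDegree = n)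
    (hdom : |f.coeff 0| > ∑ i ∈ Finset.Icc 1 n, |f.coeff i|) (z : ℂ)
    (hz : (f.map (Int.castRingHom ℂ)).eval z = 0) : 1 < ‖z‖ := by
  by_contra! hle
  rw [eval_map, eval₂_eq_sum_range, hdeg, Finset.sum_range_succ'] at hz
  have h1 : ((f.coeff 0 : ℤ) : ℂ) =
      -∑ i ∈ Finset.range n, ((f.coeff (i+1) : ℤ) : ℂ) * z ^ (i+1) := by
    simp at hz
    linear_combination hz
  have h2 : (|f.coeff 0| : ℝ) ≤ ∑ i ∈ Finset.range n, (|f.coeff (i+1)| : ℝ) := by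
    have : ‖((f.coeff 0 : ℤ) : ℂ)‖ = (|f.coeff 0| : ℝ) := by
      rw [Complex.norm_intCast]
    rw [← this, h1, norm_neg]
    refine (norm_sum_le _ _).trans (Finset.sum_le_sum fun i _ => ?_)
    rw [norm_mul, norm_pow, Complex.norm_intCast]
    exact mul_le_of_le_one_right (abs_nonneg _) (pow_le_one₀ (norm_nonneg _) hle)
  have h3 : ∑ i ∈ Finset.Icc 1 n, |f.coeff i| = ∑ i ∈ Finset.range n, |f.coeff (i+1)| := by
    rw [Finset.range_eq_Ico, Finset.sum_Ico_add' (fun i => |f.coeff i|) 0 n 1]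
    rfl
  rw [h3] at hdom
  have h4 : |f.coeff 0| ≤ ∑ i ∈ Finset.range n, |f.coeff (i+1)| := by exact_mod_cast h2
  omega

theorem ps_prod (s : Multiset ℂ) (hs : ∀ z ∈ s, 1 < ‖z‖) :
    1 ≤ ‖s.prod‖ ∧ (s ≠ 0 → 1 < ‖s.prod‖) := by
  induction s using Multiset.induction with
  | empty => simp
  | cons a s ih =>
    have h1 := (ih fun z hz => hs z (Multiset.mem_cons_of_mem hz)).1
    have h2 := hs a (Multiset.mem_cons_self a s)
    have : 1 < ‖(a ::ₘ s).prod‖ := by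
      rw [Multiset.prod_cons, norm_mul]
      nlinarith
    exact ⟨this.le, fun _ => this⟩

theorem ps_factor (g : Polynomial ℤ) (hg : g.natDegree ≠ 0)
    (hr : ∀ z : ℂ, (g.map (Int.castRingHom ℂ)).eval z = 0 → 1 < ‖z‖) :
    |g.leadingCoeff| < |g.coeff 0| := by
  have hinj : Function.Injective (Int.castRingHom ℂ) := Int.cast_injective
  have hsp := IsAlgClosed.splits (g.map (Int.castRingHom ℂ))
  have h0 : g ≠ 0 := by rintro rfl; simp at hg
  have hd : (g.map (Int.castRingHom ℂ)).natDegree = g.natDegree :=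
    natDegree_map_eq_of_injective hinj g
  have hc := hsp.coeff_zero_eq_leadingCoeff_mul_prod_roots
  rw [leadingCoeff_map_of_injective hinj, coeff_map] at hc
  have hne : (g.map (Int.castRingHom ℂ)).roots ≠ 0 := by
    intro h
    have := hsp.natDegree_eq_card_roots
    rw [h, hd] at this
    exact hg (by simpa using this)
  have hp := (ps_prod _ (fun z hz => hr z (isRoot_of_mem_roots hz))).2 hne
  have hn := congrArg norm hc
  simp only [norm_mul, norm_pow, norm_neg, norm_one, one_pow, one_mul, eq_intCast,
    Complex.norm_intCast] at hn
  have hl : (0:ℝ) < |(g.leadingCoeff : ℝ)| := by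
    rw [abs_pos]; exact_mod_cast leadingCoeff_ne_zero.mpr h0
  have : |(g.leadingCoeff : ℝ)| < |(g.coeff 0 : ℝ)| := by
    rw [hn]; exact lt_mul_of_one_lt_right hl hp
  exact_mod_cast this

theorem ps_no_factor (f : Polynomial ℤ) (n : ℕ)
    (hdeg : f.natDegree = n)
    (hdom : |f.coeff 0| > ∑ i ∈ Finset.Icc 1 n, |f.coeff i|)
    (h : (f.coeff 0).natAbs.Prime ∨
      Real.sqrt (|f.coeff 0| : ℝ) - Real.sqrt (|f.coeff n| : ℝ) < 1)
    (g k : Polynomial ℤ) (hfgk : f = g * k) (hg : g.natDegree ≠ 0) (hk : k.natDegree ≠ 0) :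
    False := by
  have hroot := ps_root_norm f n hdeg hdom
  have h1 := ps_factor g hg (fun z hz => hroot z (by
    rw [hfgk, Polynomial.map_mul, eval_mul, hz, zero_mul]))
  have h2 := ps_factor k hk (fun z hz => hroot z (by
    rw [hfgk, Polynomial.map_mul, eval_mul, hz, mul_zero]))
  have g0 : g ≠ 0 := by rintro rfl; simp at hg
  have k0 : k ≠ 0 := by rintro rfl; simp at hk
  have hb : 1 ≤ |g.leadingCoeff| := Int.one_le_abs (leadingCoeff_ne_zero.mpr g0)
  have hc : 1 ≤ |k.leadingCoeff| := Int.one_le_abs (leadingCoeff_ne_zero.mpr k0)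
  have e0 : f.coeff 0 = g.coeff 0 * k.coeff 0 := by rw [hfgk, mul_coeff_zero]
  have en : f.coeff n = g.leadingCoeff * k.leadingCoeff := by
    rw [← hdeg, coeff_natDegree, hfgk, leadingCoeff_mul]
  rcases h with h | h
  · rw [e0, Int.natAbs_mul] at h
    rw [Int.abs_eq_natAbs (g.coeff 0)] at h1
    rw [Int.abs_eq_natAbs (k.coeff 0)] at h2
    rcases Nat.prime_mul_iff.mp h with ⟨_, h⟩ | ⟨_, h⟩ <;> omega
  · rw [e0, en] at h
    push_cast at h
    rw [abs_mul, abs_mul] at h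
    have h1' : |(g.leadingCoeff : ℝ)| + 1 ≤ |(g.coeff 0 : ℝ)| := by
      exact_mod_cast h1
    have h2' : |(k.leadingCoeff : ℝ)| + 1 ≤ |(k.coeff 0 : ℝ)| := by
      exact_mod_cast h2
    have hb0 : 0 ≤ |(g.leadingCoeff : ℝ)| := abs_nonneg _
    have hc0 : 0 ≤ |(k.leadingCoeff : ℝ)| := abs_nonneg _
    generalize |(g.leadingCoeff : ℝ)| = b at *
    generalize |(k.leadingCoeff : ℝ)| = c at *
    have hm : (b + 1) * (c + 1) ≤ |(g.coeff 0 : ℝ)| * |(k.coeff 0 : ℝ)| := by gcongr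
    have key : Real.sqrt (b * c) + 1 ≤ Real.sqrt (|(g.coeff 0 : ℝ)| * |(k.coeff 0 : ℝ)|) := by
      apply Real.le_sqrt_of_sq_le
      refine le_trans ?_ hm
      rw [Real.sqrt_mul hb0]
      nlinarith [sq_nonneg (Real.sqrt b - Real.sqrt c), Real.sq_sqrt hb0, Real.sq_sqrt hc0,
        mul_pow (Real.sqrt b) (Real.sqrt c) 2, Real.sq_sqrt (mul_nonneg hb0 hc0),
        Real.sqrt_mul hb0 c]
    linarith

/-- The Panitopol–Ştefănescu irreducibility criterion. -/
theorem panitopol_stefanescu (f : Polynomial ℤ) (n : ℕ) (hn : 1 ≤ n)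
    (hdeg : f.natDegree = n)
    (hdom : |f.coeff 0| > ∑ i ∈ Finset.Icc 1 n, |f.coeff i|)
    (h : (f.coeff 0).natAbs.Prime ∨
      Real.sqrt (|f.coeff 0| : ℝ) - Real.sqrt (|f.coeff n| : ℝ) < 1) :
    Irreducible (f.map (Int.castRingHom ℚ)) := by
  have f0 : f ≠ 0 := by rintro rfl; simp at hdeg; omega
  have hc0 : f.content ≠ 0 := by rwa [Ne, content_eq_zero_iff]
  have hprim := f.isPrimitive_primPart
  have hirr : Irreducible f.primPart := by
    refine ⟨fun hu => ?_, fun g k hgk => ?_⟩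
    · have := natDegree_eq_zero_of_isUnit hu
      rw [natDegree_primPart] at this
      omega
    · by_cases hg : g.natDegree = 0
      · left
        rw [natDegree_eq_zero] at hg
        obtain ⟨u, rfl⟩ := hg
        exact (hprim u ⟨k, hgk⟩).map C
      · by_cases hk : k.natDegree = 0
        · right
          rw [natDegree_eq_zero] at hk
          obtain ⟨u, rfl⟩ := hk
          exact (hprim u ⟨g, by rw [hgk, mul_comm]⟩).map C
        · exfalso
          refine ps_no_factor f n hdeg hdom h (C f.content * g) k ?_ ?_ hk
          · rw [mul_assoc, ← hgk]; exact f.eq_C_content_mul_primPart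
          · rwa [natDegree_C_mul hc0]
  rw [IsPrimitive.Int.irreducible_iff_irreducible_map_cast hprim] at hirr
  rw [f.eq_C_content_mul_primPart, Polynomial.map_mul, map_C]
  refine (irreducible_isUnit_mul ?_).mpr hirr
  rw [isUnit_C]
  exact isUnit_iff_ne_zero.mpr (by simpa using hc0)
end

section
/- Let p be a prime, let a, b be positive integers with p ∤ a·b, let k ≥ 2 with 3 ∤ k, let n ≥ 4, and let ε₁, ε₂ ∈ {−1, +1}. If p^k > a + b, then the polynomial a·X^n + b·ε₁·X^3 + p^k·ε₂ is irreducible in ℤ[X]. -/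
open Polynomial

/-- The arithmetic core: no compatible low coefficients when `p` divides `h1`. -/
lemma kr_core (p : ℤ) (hp : Prime p) (k : ℕ) (h3k : ¬ 3 ∣ k) (s t : ℕ) (hst : s + t = k)
    (u v g0 g1 g2 h0 h1 h2 : ℤ) (hu : IsUnit u) (hv : IsUnit v)
    (hg0 : g0 = p ^ s * u) (hh0 : h0 = p ^ t * v)
    (e1 : g0 * h1 + g1 * h0 = 0) (e2 : g0 * h2 + g1 * h1 + g2 * h0 = 0)
    (d1 : p ∣ h1) (n1 : ¬ p ∣ g1) (n2 : ¬ p ∣ h2) : False := by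
  have hu2 : u * u = 1 := by rcases Int.isUnit_iff.1 hu with h | h <;> simp [h]
  have hv2 : v * v = 1 := by rcases Int.isUnit_iff.1 hv with h | h <;> simp [h]
  have hpow : ∀ m : ℕ, p ^ m ≠ 0 := fun m => pow_ne_zero _ hp.ne_zero
  subst hg0 hh0
  rcases Nat.lt_or_ge s t with hlt | hle
  · obtain ⟨r, rfl⟩ := Nat.exists_eq_add_of_lt hlt
    set q := r + 1 with hq
    have hq' : s + r + 1 = s + q := by omega
    rw [hq'] at *
    have E1 : h1 * u = - (p ^ q * (g1 * v)) := by
      apply mul_left_cancel₀ (hpow s)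
      rw [pow_add] at e1
      linear_combination e1
    have E1' : h1 = - (p ^ q * (g1 * v * u)) := by
      linear_combination u * E1 - h1 * hu2
    have E2 : p ^ s * (u * h2) - p ^ q * (g1 * g1 * (v * u)) + p ^ (s + q) * (g2 * v) = 0 := by
      rw [E1'] at e2; linear_combination e2
    rcases lt_trichotomy s q with h | h | h
    · obtain ⟨c, hc⟩ := Nat.exists_eq_add_of_lt h
      apply n2
      have : u * h2 = p * (p ^ c * (g1 * g1 * (v * u)) - p ^ (s + c) * (g2 * v)) := by
        apply mul_left_cancel₀ (hpow s)
        rw [hc] at E2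
        linear_combination E2
      exact ⟨u * (p ^ c * (g1 * g1 * (v * u)) - p ^ (s + c) * (g2 * v)), by
        linear_combination u * this - h2 * hu2⟩
    · exact h3k ⟨s, by omega⟩
    · obtain ⟨c, hc⟩ := Nat.exists_eq_add_of_lt h
      apply n1
      have : (g1 * g1 * (v * u)) = p * (p ^ c * (u * h2) + p ^ (c + q) * (g2 * v)) := by
        apply mul_left_cancel₀ (hpow q)
        rw [hc] at E2
        linear_combination -E2
      have h' : p ∣ g1 * g1 :=
        ⟨v * u * (p ^ c * (u * h2) + p ^ (c + q) * (g2 * v)), by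
          linear_combination v * u * this - g1 * g1 * u * u * hv2 - g1 * g1 * hu2⟩
      exact (hp.dvd_or_dvd h').elim id id
  · obtain ⟨r, rfl⟩ := Nat.exists_eq_add_of_le hle
    have : p ^ r * u * h1 + g1 * v = 0 := by
      apply mul_left_cancel₀ (hpow t)
      rw [pow_add] at e1
      linear_combination e1
    obtain ⟨c, rfl⟩ := d1
    exact n1 ⟨-(p ^ r * u * c * v), by linear_combination v * this - g1 * hv2⟩

lemma kr_prod (s : Multiset ℂ) (h : ∀ z ∈ s, 1 < ‖z‖) : 1 ≤ ‖s.prod‖ ∧ (s ≠ 0 → 1 < ‖s.prod‖) := by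
  induction s using Multiset.induction_on with
  | empty => simp
  | cons z s ih =>
    have h1 := h z (by simp)
    have h2 := (ih (fun w hw => h w (by simp [hw]))).1
    have : 1 < ‖(z ::ₘ s).prod‖ := by
      rw [Multiset.prod_cons, norm_mul]; nlinarith
    exact ⟨this.le, fun _ => this⟩

lemma kr_unit (g : ℤ[X]) (h0 : IsUnit (g.coeff 0))
    (hr : ∀ z : ℂ, aeval z g = 0 → 1 < ‖z‖) : IsUnit g := by
  by_cases hd : g.natDegree = 0
  · rw [eq_C_of_natDegree_eq_zero hd]; exact h0.map C
  exfalso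
  have hg : g ≠ 0 := by rintro rfl; simp at hd
  have hinj : Function.Injective (algebraMap ℤ ℂ) := (algebraMap ℤ ℂ).injective_int
  set G := g.map (algebraMap ℤ ℂ) with hG
  have hG0 : G ≠ 0 := (Polynomial.map_ne_zero_iff hinj).2 hg
  have hs : G.Splits := IsAlgClosed.splits G
  have hc := hs.coeff_zero_eq_leadingCoeff_mul_prod_roots
  have hcard := hs.natDegree_eq_card_roots
  have hdeg : G.natDegree = g.natDegree := natDegree_map_eq_of_injective hinj g
  have hP := (kr_prod G.roots (fun z hz => hr z (by
    have := (mem_roots hG0).1 hz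
    rwa [IsRoot, hG, eval_map_algebraMap] at this))).2 (by
      intro h; rw [h] at hcard; simp at hcard; omega)
  have hl : G.leadingCoeff = (g.leadingCoeff : ℂ) := by
    rw [hG, leadingCoeff_map_of_injective hinj]; simp
  have hl1 : 1 ≤ ‖G.leadingCoeff‖ := by
    rw [hl, Complex.norm_intCast]
    exact_mod_cast Int.one_le_abs (leadingCoeff_ne_zero.2 hg)
  have hn : ‖G.coeff 0‖ = 1 := by
    rw [hG, coeff_map]
    rcases Int.isUnit_iff.1 h0 with h | h <;> simp [h]
  rw [hc] at hn
  simp only [norm_mul, norm_pow, norm_neg, norm_one, one_pow, one_mul] at hn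
  nlinarith

/-- Koley–Reddy: irreducibility of `aX^n + bε₁X³ + p^kε₂` when `p^k > a + b`,
`p ∤ ab`, `k ≥ 2`, `3 ∤ k`. -/
theorem koley_reddy_S3 (p : ℕ) (hp : p.Prime) (a b : ℕ) (ha : 0 < a) (hb : 0 < b)
    (hpab : ¬ p ∣ a * b) (k : ℕ) (hk : 2 ≤ k) (h3k : ¬ 3 ∣ k)
    (n : ℕ) (hn : 4 ≤ n)
    (ε₁ ε₂ : ℤ) (hε₁ : ε₁ = 1 ∨ ε₁ = -1) (hε₂ : ε₂ = 1 ∨ ε₂ = -1)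
    (hbig : a + b < p ^ k) :
    Irreducible (C (a : ℤ) * (X : Polynomial ℤ) ^ n +
      C ((b : ℤ) * ε₁) * X ^ 3 + C ((p : ℤ) ^ k * ε₂)) := by
  set f : ℤ[X] := C (a : ℤ) * (X : Polynomial ℤ) ^ n +
      C ((b : ℤ) * ε₁) * X ^ 3 + C ((p : ℤ) ^ k * ε₂) with hf
  have hP : Prime (p : ℤ) := Nat.prime_iff_prime_int.1 hp
  have hu2 : IsUnit ε₂ := Int.isUnit_iff.2 hε₂
  have hu1 : IsUnit ε₁ := Int.isUnit_iff.2 hε₁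
  have f0 : f.coeff 0 = (p : ℤ) ^ k * ε₂ := by
    simp only [hf, coeff_add, coeff_C_mul, coeff_X_pow, coeff_C]
    simp [show 0 ≠ n by omega]
  have f1 : f.coeff 1 = 0 := by
    simp only [hf, coeff_add, coeff_C_mul, coeff_X_pow, coeff_C]
    simp [show 1 ≠ n by omega]
  have f2 : f.coeff 2 = 0 := by
    simp only [hf, coeff_add, coeff_C_mul, coeff_X_pow, coeff_C]
    simp [show 2 ≠ n by omega]
  have f3 : f.coeff 3 = b * ε₁ := by
    simp only [hf, coeff_add, coeff_C_mul, coeff_X_pow, coeff_C]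
    simp [show 3 ≠ n by omega]
  have hroot : ∀ z : ℂ, aeval z f = 0 → 1 < ‖z‖ := by
    intro z hz
    by_contra! hle
    have e : (a : ℂ) * z ^ n + b * ε₁ * z ^ 3 = - ((p : ℂ) ^ k * ε₂) := by
      simp [hf] at hz
      linear_combination hz
    have n1 : ‖(ε₁ : ℂ)‖ = 1 := by rcases hε₁ with h | h <;> simp [h]
    have n2 : ‖(ε₂ : ℂ)‖ = 1 := by rcases hε₂ with h | h <;> simp [h]
    have h := norm_add_le ((a : ℂ) * z ^ n) (b * ε₁ * z ^ 3)
    rw [e] at h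
    simp only [norm_neg, norm_mul, norm_pow, n1, n2, mul_one, Complex.norm_natCast] at h
    have h4 : ‖z‖ ^ n ≤ 1 := pow_le_one₀ (norm_nonneg _) hle
    have h5 : ‖z‖ ^ 3 ≤ 1 := pow_le_one₀ (norm_nonneg _) hle
    have hb' : (a : ℝ) + b < p ^ k := by exact_mod_cast hbig
    have h6 := mul_le_mul_of_nonneg_left h4 (Nat.cast_nonneg (α := ℝ) a)
    have h7 := mul_le_mul_of_nonneg_left h5 (Nat.cast_nonneg (α := ℝ) b)
    linarith
  have hpb : ¬ (p : ℤ) ∣ b * ε₁ := by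
    rw [hu1.dvd_mul_right, Int.natCast_dvd_natCast]
    exact fun h => hpab (h.mul_left a)
  have key : ∀ g : ℤ[X], g ∣ f → ∃ s : ℕ, ∃ u : ℤ, IsUnit u ∧ g.coeff 0 = (p : ℤ) ^ s * u ∧
      (s = 0 → IsUnit g) := by
    rintro g ⟨h, hgh⟩
    have h0 : g.coeff 0 ∣ (p : ℤ) ^ k := by
      rw [← hu2.dvd_mul_right, ← f0, hgh, mul_coeff_zero]
      exact dvd_mul_right _ _
    obtain ⟨i, -, w, hw⟩ := (dvd_prime_pow hP k).1 h0
    refine ⟨i, ↑(w⁻¹), Units.isUnit _, by rw [← hw, mul_assoc, Units.mul_inv, mul_one], fun hi => ?_⟩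
    apply kr_unit
    · rw [hi, pow_zero] at hw
      exact IsUnit.of_mul_eq_one _ hw
    · intro z hz
      apply hroot
      rw [hgh, map_mul, hz, zero_mul]
  constructor
  · intro hunit
    have h := (Polynomial.isUnit_iff.1 hunit)
    obtain ⟨r, -, hr⟩ := h
    have : f.coeff 3 = 0 := by rw [← hr, coeff_C]; simp
    rw [f3] at this
    exact hpb (this ▸ dvd_zero _)
  · intro g h hgh
    obtain ⟨s, u, hu, hg0, hgs⟩ := key g ⟨h, hgh⟩
    obtain ⟨t, v, hv, hh0, hht⟩ := key h ⟨g, by rw [hgh, mul_comm]⟩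
    by_contra! hcon
    have hs : s ≠ 0 := fun h => hcon.1 (hgs h)
    have ht : t ≠ 0 := fun h => hcon.2 (hht h)
    rw [hgh] at f0 f1 f2 f3
    simp [coeff_mul, Finset.Nat.antidiagonal_succ] at f0 f1 f2 f3
    have dg : (p : ℤ) ∣ g.coeff 0 := hg0 ▸ (dvd_pow_self _ hs).mul_right _
    have dh : (p : ℤ) ∣ h.coeff 0 := hh0 ▸ (dvd_pow_self _ ht).mul_right _
    have hst : s + t = k := by
      rw [hg0, hh0] at f0
      have := congrArg Int.natAbs f0
      simp only [Int.natAbs_mul, Int.natAbs_pow, Int.natAbs_natCast, Int.isUnit_iff_natAbs_eq.1 hu,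
        Int.isUnit_iff_natAbs_eq.1 hv, Int.isUnit_iff_natAbs_eq.1 hu2, mul_one, ← pow_add] at this
      exact Nat.pow_right_injective hp.two_le this
    have d11 : (p : ℤ) ∣ g.coeff 1 * h.coeff 1 := by
      have : g.coeff 1 * h.coeff 1 = -(g.coeff 0 * h.coeff 2 + g.coeff 2 * h.coeff 0) := by
        linear_combination f2
      rw [this]
      exact (dvd_add (dg.mul_right _) (dh.mul_left _)).neg_right
    have n12 : ¬ (p : ℤ) ∣ g.coeff 1 * h.coeff 2 + g.coeff 2 * h.coeff 1 := by
      intro hd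
      apply hpb
      rw [← f3]
      have := dvd_add hd (dvd_add (dg.mul_right (h.coeff 3)) (dh.mul_left (g.coeff 3)))
      have e : ∀ x y : ℤ, x = y → (p : ℤ) ∣ x → (p : ℤ) ∣ y := fun x y h => h ▸ id
      exact e _ _ (by ring) this
    rcases hP.dvd_or_dvd d11 with d | d
    · refine kr_core p hP k h3k t s (by omega) v u _ (h.coeff 1) (h.coeff 2) _ (g.coeff 1)
        (g.coeff 2) hv hu hh0 hg0 (by linear_combination f1) (by linear_combination f2) d ?_ ?_
      · exact fun hd => n12 (dvd_add (d.mul_right _) (hd.mul_left _))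
      · exact fun hd => n12 (dvd_add (d.mul_right _) (hd.mul_right _))
    · refine kr_core p hP k h3k s t hst u v _ (g.coeff 1) (g.coeff 2) _ (h.coeff 1)
        (h.coeff 2) hu hv hg0 hh0 (by linear_combination f1) (by linear_combination f2) d ?_ ?_
      · exact fun hd => n12 (dvd_add (hd.mul_right _) (d.mul_left _))
      · exact fun hd => n12 (dvd_add (hd.mul_left _) (d.mul_left _))
end

section
/- Let n > m ≥ 1 be integers and ε₁, ε₂ ∈ {−1, +1}, and set f(X) = X^n + ε₁·X^m + 4·ε₂ ∈ ℤ[X]. Assume there is no positive integer k such that (n = 3k, m = 2k, ε₂ = ε₁), or (n = 5k, m = 2k, ε₂ = −ε₁), or (n = 11k, m = 4k, ε₂ = ε₁). Then f is irreducible in ℤ[X]. -/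
open Polynomial

namespace Jon

/-- Interior convolution. -/
def S (u v : ℕ → ℤ) (p : ℕ) : ℤ := ∑ k ∈ Finset.Ioo 0 p, u k * v (p - k)

def W (u v : ℕ → ℤ) (p k : ℕ) : ℤ := u k * v (p - k) + u (p - k) * v k

def Cen (u v : ℕ → ℤ) (p : ℕ) : ℤ := ∑ k ∈ (Finset.Ioo 0 p).filter (fun k => 2 * k = p), u k * v k

def Z (u v : ℕ → ℤ) (k : ℕ) : Prop := u k = 0 ∧ v k = 0

/-- The system satisfied by the coefficients of `g * h.reverse`. -/
structure Sys (n r : ℕ) (ε η : ℤ) (u v : ℕ → ℤ) : Prop where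
  hr : 1 ≤ r
  hn : 2 * r < n
  hε : ε = 1 ∨ ε = -1
  hη : η = 1 ∨ η = -1
  u0 : u 0 = 2
  v0 : v 0 = 2
  mir : ∀ k, k ≤ n → v k = ε * η * u (n - k)
  eq : ∀ p, 0 < p → p < n → 2 * (u p + v p) + S u v p
    = (if p = 2 * r then ε else 0) + (if p + 2 * r = n then 4 * η else 0)
  norm : ∑ k ∈ Finset.range (n + 1), u k ^ 2 = 18
  ev : ∀ p, 0 < p → p < r → Even (u p) ∧ Even (v p)
  od : Odd (u r) ∧ Odd (v r)

lemma sum_split (n : ℕ) (s : Finset ℕ) (f : ℕ → ℤ) (hs : ∀ k ∈ s, k ≤ n ∧ n - k ∈ s) :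
    ∑ k ∈ s, f k = ∑ k ∈ s.filter (fun k => 2 * k < n), (f k + f (n - k))
      + ∑ k ∈ s.filter (fun k => 2 * k = n), f k := by
  classical
  rw [← Finset.sum_filter_add_sum_filter_not s (fun k => 2 * k < n),
    ← Finset.sum_filter_add_sum_filter_not (s.filter (fun k => ¬ 2 * k < n)) (fun k => 2 * k = n),
    Finset.sum_add_distrib]
  have h1 : ∑ k ∈ (s.filter (fun k => ¬ 2 * k < n)).filter (fun k => 2 * k = n), f k
      = ∑ k ∈ s.filter (fun k => 2 * k = n), f k := by
    congr 1
    ext k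
    simp only [Finset.mem_filter]
    constructor
    · rintro ⟨⟨a, b⟩, c⟩; exact ⟨a, c⟩
    · rintro ⟨a, c⟩; exact ⟨⟨a, by omega⟩, c⟩
  have h2 : ∑ k ∈ (s.filter (fun k => ¬ 2 * k < n)).filter (fun k => ¬ 2 * k = n), f k
      = ∑ k ∈ s.filter (fun k => 2 * k < n), f (n - k) := by
    apply Finset.sum_nbij' (fun k => n - k) (fun k => n - k)
    · intro k hk
      simp only [Finset.mem_filter] at hk ⊢
      have := hs k hk.1.1
      exact ⟨this.2, by omega⟩
    · intro k hk
      simp only [Finset.mem_filter] at hk ⊢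
      have := hs k hk.1
      exact ⟨⟨this.2, by omega⟩, by omega⟩
    · intro k hk
      simp only [Finset.mem_filter] at hk
      have := hs k hk.1.1
      omega
    · intro k hk
      simp only [Finset.mem_filter] at hk
      have := hs k hk.1
      omega
    · intro k hk
      simp only [Finset.mem_filter] at hk
      have := hs k hk.1.1
      congr 1
      omega
  rw [h1, h2]
  ring

lemma S_split (u v : ℕ → ℤ) (p : ℕ) :
    S u v p = ∑ k ∈ (Finset.Ioo 0 p).filter (fun k => 2 * k < p), W u v p k + Cen u v p := by
  unfold S Cen W
  rw [sum_split p (Finset.Ioo 0 p)]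
  · congr 1
    · apply Finset.sum_congr rfl
      intro k hk
      simp only [Finset.mem_filter, Finset.mem_Ioo] at hk
      have : p - (p - k) = k := by omega
      rw [this]
    · apply Finset.sum_congr rfl
      intro k hk
      simp only [Finset.mem_filter, Finset.mem_Ioo] at hk
      have : p - k = k := by omega
      rw [this]
  · intro k hk
    simp only [Finset.mem_Ioo] at hk ⊢
    omega

lemma S_par (u v : ℕ → ℤ) (p : ℕ) (s : Finset ℕ) (hs : ∀ k ∈ s, 0 < k ∧ 2 * k < p)
    (hoff : ∀ k, 0 < k → 2 * k < p → k ∉ s → (2 : ℤ) ∣ W u v p k) :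
    ∃ t, S u v p = ∑ k ∈ s, W u v p k + Cen u v p + 2 * t := by
  classical
  have hsub : s ⊆ (Finset.Ioo 0 p).filter (fun k => 2 * k < p) := by
    intro k hk
    have := hs k hk
    simp only [Finset.mem_filter, Finset.mem_Ioo]
    omega
  have h := Finset.sum_sdiff hsub (f := fun k => W u v p k)
  have h2 : (2 : ℤ) ∣ ∑ k ∈ ((Finset.Ioo 0 p).filter (fun k => 2 * k < p)) \ s, W u v p k := by
    apply Finset.dvd_sum
    intro k hk
    simp only [Finset.mem_sdiff, Finset.mem_filter, Finset.mem_Ioo] at hk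
    exact hoff k hk.1.1.1 hk.1.2 hk.2
  obtain ⟨t, ht⟩ := h2
  refine ⟨t, ?_⟩
  rw [S_split, ← h, ht]
  ring

lemma W_zero {u v : ℕ → ℤ} {p k : ℕ} (h : Z u v k ∨ Z u v (p - k)) : W u v p k = 0 := by
  unfold W
  rcases h with h | h <;> simp [h.1, h.2]

lemma S_fin (u v : ℕ → ℤ) (p : ℕ) (s : Finset ℕ) (hs : ∀ k ∈ s, 0 < k ∧ 2 * k < p)
    (hoff : ∀ k, 0 < k → 2 * k < p → k ∉ s → Z u v k ∨ Z u v (p - k)) :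
    S u v p = ∑ k ∈ s, W u v p k + Cen u v p := by
  classical
  have hsub : s ⊆ (Finset.Ioo 0 p).filter (fun k => 2 * k < p) := by
    intro k hk
    have := hs k hk
    simp only [Finset.mem_filter, Finset.mem_Ioo]
    omega
  rw [S_split, Finset.sum_subset hsub]
  intro k hk hks
  simp only [Finset.mem_filter, Finset.mem_Ioo] at hk
  exact W_zero (hoff k hk.1.1 hk.2 hks)

lemma cen_eq (u v : ℕ → ℤ) {p q : ℕ} (hq : 0 < q) (h : 2 * q = p) : Cen u v p = u q * v q := by
  unfold Cen
  have : (Finset.Ioo 0 p).filter (fun k => 2 * k = p) = {q} := by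
    ext k
    simp only [Finset.mem_filter, Finset.mem_Ioo, Finset.mem_singleton]
    omega
  rw [this, Finset.sum_singleton]

lemma cen_zero (u v : ℕ → ℤ) {p : ℕ} (h : ∀ q, 0 < q → 2 * q = p → Z u v q) : Cen u v p = 0 := by
  unfold Cen
  apply Finset.sum_eq_zero
  intro k hk
  simp only [Finset.mem_filter, Finset.mem_Ioo] at hk
  simp [(h k hk.1.1 hk.2).1]

lemma S0 (u v : ℕ → ℤ) (p : ℕ)
    (hoff : ∀ k, 0 < k → 2 * k ≤ p → Z u v k ∨ Z u v (p - k)) : S u v p = 0 := by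
  rw [S_fin u v p ∅ (by simp) (fun k h1 h2 _ => hoff k h1 (by omega)), cen_zero]
  · simp
  · intro q h1 h2
    have := hoff q h1 (by omega)
    have e : p - q = q := by omega
    rw [e] at this
    tauto

lemma S1 (u v : ℕ → ℤ) (p a : ℕ) (ha : 0 < a) (ha2 : 2 * a < p)
    (hoff : ∀ k, 0 < k → 2 * k ≤ p → k ≠ a → Z u v k ∨ Z u v (p - k)) :
    S u v p = W u v p a := by
  rw [S_fin u v p {a} (by simp; omega)
    (fun k h1 h2 h3 => hoff k h1 (by omega) (by simpa using h3)), cen_zero]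
  · simp
  · intro q h1 h2
    have := hoff q h1 (by omega) (by omega)
    have e : p - q = q := by omega
    rw [e] at this
    tauto

lemma S2 (u v : ℕ → ℤ) (p a b : ℕ) (ha : 0 < a) (ha2 : 2 * a < p) (hb : 0 < b) (hb2 : 2 * b < p)
    (hab : a ≠ b)
    (hoff : ∀ k, 0 < k → 2 * k ≤ p → k ≠ a → k ≠ b → Z u v k ∨ Z u v (p - k)) :
    S u v p = W u v p a + W u v p b := by
  rw [S_fin u v p {a, b} (by simp; omega)
    (fun k h1 h2 h3 => hoff k h1 (by omega) (by simp at h3; tauto) (by simp at h3; tauto)), cen_zero,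
    Finset.sum_pair hab]
  · simp
  · intro q h1 h2
    have := hoff q h1 (by omega) (by omega) (by omega)
    have e : p - q = q := by omega
    rw [e] at this
    tauto

lemma S0c (u v : ℕ → ℤ) (p q : ℕ) (hq : 0 < q) (hp : 2 * q = p)
    (hoff : ∀ k, 0 < k → 2 * k < p → Z u v k ∨ Z u v (p - k)) : S u v p = u q * v q := by
  rw [S_fin u v p ∅ (by simp) (fun k h1 h2 _ => hoff k h1 (by omega)), cen_eq u v hq hp]
  simp

lemma S1c (u v : ℕ → ℤ) (p q a : ℕ) (hq : 0 < q) (hp : 2 * q = p) (ha : 0 < a) (ha2 : 2 * a < p)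
    (hoff : ∀ k, 0 < k → 2 * k < p → k ≠ a → Z u v k ∨ Z u v (p - k)) :
    S u v p = W u v p a + u q * v q := by
  rw [S_fin u v p {a} (by simp; omega)
    (fun k h1 h2 h3 => hoff k h1 (by omega) (by simpa using h3)), cen_eq u v hq hp]
  simp

lemma S2c (u v : ℕ → ℤ) (p q a b : ℕ) (hq : 0 < q) (hp : 2 * q = p)
    (ha : 0 < a) (ha2 : 2 * a < p) (hb : 0 < b) (hb2 : 2 * b < p) (hab : a ≠ b)
    (hoff : ∀ k, 0 < k → 2 * k < p → k ≠ a → k ≠ b → Z u v k ∨ Z u v (p - k)) :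
    S u v p = W u v p a + W u v p b + u q * v q := by
  rw [S_fin u v p {a, b} (by simp; omega)
    (fun k h1 h2 h3 => hoff k h1 (by omega) (by simp at h3; tauto) (by simp at h3; tauto)),
    cen_eq u v hq hp, Finset.sum_pair hab]

namespace Sys

variable {n r : ℕ} {ε η : ℤ} {u v : ℕ → ℤ}

lemma mir' (h : Sys n r ε η u v) (k : ℕ) (hk : k ≤ n) : u k = ε * η * v (n - k) := by
  rw [h.mir (n - k) (by omega)]
  have e : n - (n - k) = k := by omega
  rw [e]
  rcases h.hε with h1 | h1 <;> rcases h.hη with h2 | h2 <;> subst h1 <;> subst h2 <;> simp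

lemma Zmir (h : Sys n r ε η u v) (k : ℕ) (hk : k ≤ n) (hz : Z u v k) : Z u v (n - k) := by
  have h1 := h.mir' (n - k) (by omega)
  have h2 := h.mir (n - k) (by omega)
  have e : n - (n - k) = k := by omega
  rw [e] at h1 h2
  exact ⟨by rw [h1, hz.2]; simp, by rw [h2, hz.1]; simp⟩

/-- symmetry of `T = u + v`. -/
lemma Tmir (h : Sys n r ε η u v) (k j : ℕ) (hk : k + j = n) : u j + v j = ε * η * (u k + v k) := by
  have h1 := h.mir' j (by omega)
  have h2 := h.mir j (by omega)
  have e : n - j = k := by omega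
  rw [e] at h1 h2
  rw [h1, h2]; ring

lemma vsq (h : Sys n r ε η u v) (k : ℕ) (hk : k ≤ n) : u (n - k) ^ 2 = v k ^ 2 := by
  rw [h.mir k hk]
  rcases h.hε with h1 | h1 <;> rcases h.hη with h2 | h2 <;> subst h1 <;> subst h2 <;> simp

lemma norm_split (h : Sys n r ε η u v) :
    ∑ k ∈ (Finset.range (n + 1)).filter (fun k => 2 * k < n), (u k ^ 2 + v k ^ 2)
      + ∑ k ∈ (Finset.range (n + 1)).filter (fun k => 2 * k = n), u k ^ 2 = 18 := by
  rw [← h.norm, sum_split n (Finset.range (n + 1)) (fun k => u k ^ 2)]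
  · congr 1
    apply Finset.sum_congr rfl
    intro k hk
    simp only [Finset.mem_filter, Finset.mem_range] at hk
    rw [h.vsq k (by omega)]
  · intro k hk
    simp only [Finset.mem_range] at hk ⊢
    omega

lemma norm_low (h : Sys n r ε η u v) (s : Finset ℕ) (hs : ∀ k ∈ s, 2 * k < n) :
    ∑ k ∈ s, (u k ^ 2 + v k ^ 2) ≤ 18 := by
  have h0 := h.norm_split
  have h1 : ∑ k ∈ s, (u k ^ 2 + v k ^ 2) ≤
      ∑ k ∈ (Finset.range (n + 1)).filter (fun k => 2 * k < n), (u k ^ 2 + v k ^ 2) := by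
    apply Finset.sum_le_sum_of_subset_of_nonneg
    · intro k hk
      have := hs k hk
      simp only [Finset.mem_filter, Finset.mem_range]
      omega
    · intros; positivity
  have h2 : 0 ≤ ∑ k ∈ (Finset.range (n + 1)).filter (fun k => 2 * k = n), u k ^ 2 :=
    Finset.sum_nonneg (fun _ _ => by positivity)
  linarith

lemma norm_low_c (h : Sys n r ε η u v) (s : Finset ℕ) (hs : ∀ k ∈ s, 2 * k < n) (c : ℕ)
    (hc : 2 * c = n) :
    ∑ k ∈ s, (u k ^ 2 + v k ^ 2) + u c ^ 2 ≤ 18 := by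
  have h0 := h.norm_split
  have h1 : ∑ k ∈ s, (u k ^ 2 + v k ^ 2) ≤
      ∑ k ∈ (Finset.range (n + 1)).filter (fun k => 2 * k < n), (u k ^ 2 + v k ^ 2) := by
    apply Finset.sum_le_sum_of_subset_of_nonneg
    · intro k hk
      have := hs k hk
      simp only [Finset.mem_filter, Finset.mem_range]
      omega
    · intros; positivity
  have h2 : (Finset.range (n + 1)).filter (fun k => 2 * k = n) = {c} := by
    ext k
    simp only [Finset.mem_filter, Finset.mem_range, Finset.mem_singleton]
    omega
  rw [h2, Finset.sum_singleton] at h0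
  linarith

end Sys

end Jon

namespace Jon

lemma zor {u v : ℕ → ℤ} {n : ℕ} {P : ℕ → Prop}
    (hs : ∀ k, 0 < k → k < n → ¬ Z u v k → P k) {k j : ℕ} (hk : 0 < k ∧ k < n) (hj : 0 < j ∧ j < n)
    (hP : P k → P j → False) : Z u v k ∨ Z u v j := by
  by_contra hc
  rw [not_or] at hc
  exact hP (hs k hk.1 hk.2 hc.1) (hs j hj.1 hj.2 hc.2)

lemma pm_of_sq {x : ℤ} (h : x ^ 2 ≤ 3) : x = 0 ∨ x = 1 ∨ x = -1 := by
  have h1 : x < 2 := by nlinarith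
  have h2 : -2 < x := by nlinarith
  omega

lemma pm2_of_sq {x : ℤ} (h : x ^ 2 ≤ 8) : x = 0 ∨ x = 1 ∨ x = -1 ∨ x = 2 ∨ x = -2 := by
  have h1 : x < 3 := by nlinarith
  have h2 : -3 < x := by nlinarith
  omega

lemma odd_sq {x : ℤ} (h : Odd x) : 1 ≤ x ^ 2 := by
  have : x ≠ 0 := by rintro rfl; simp at h
  have : 0 < x ^ 2 := by positivity
  omega

namespace Sys
variable {n r : ℕ} {ε η : ℤ} {u v : ℕ → ℤ}

set_option maxHeartbeats 1000000 in
lemma c44 (h : Sys n r ε η u v) (i : ℕ) (hi : 0 < i) (hi2 : 2 * i < n) (hT : u i + v i = 0)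
    (hu : u i ≠ 0 ∧ u i ≠ 1 ∧ u i ≠ -1) : n = 5 * r ∧ ε = -1 := by
  have hr := h.hr
  have hn := h.hn
  have hu0 := h.u0
  have hv0 := h.v0
  obtain ⟨ho1, ho2⟩ := h.od
  have hvi : v i = - u i := by linarith
  have n1 := h.norm_low {0, i} (by simp; omega)
  rw [Finset.sum_pair (by omega), hu0, hv0, hvi] at n1
  have hx : u i = 2 ∨ u i = -2 := by
    have := pm2_of_sq (x := u i) (by nlinarith)
    omega
  have hx2 : u i ^ 2 = 4 := by rcases hx with e | e <;> rw [e] <;> norm_num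
  have hir : i ≠ r := by
    rintro rfl
    rcases hx with e | e <;> rw [e] at ho1 <;> revert ho1 <;> decide
  have q1 := odd_sq ho1
  have q2 := odd_sq ho2
  have n2 := h.norm_low {0, i, r} (by simp; omega)
  rw [Finset.sum_insert (by simp; omega), Finset.sum_pair hir, hu0, hv0, hvi] at n2
  have ha : u r = 1 ∨ u r = -1 := by
    have := pm_of_sq (x := u r) (by nlinarith)
    rcases this with e | e
    · rw [e] at q1; norm_num at q1
    · exact e
  have hb : v r = 1 ∨ v r = -1 := by
    have := pm_of_sq (x := v r) (by nlinarith)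
    rcases this with e | e
    · rw [e] at q2; norm_num at q2
    · exact e
  have hlow : ∀ k, 0 < k → 2 * k < n → k ≠ r → k ≠ i → Z u v k := by
    intro k h1 h2 h3 h4
    have n3 := h.norm_low {0, i, r, k} (by simp; omega)
    rw [Finset.sum_insert (by simp; omega), Finset.sum_insert (by simp; omega),
      Finset.sum_pair (by omega), hu0, hv0, hvi] at n3
    constructor
    · have : u k ^ 2 = 0 := by nlinarith [sq_nonneg (u k), sq_nonneg (v k)]
      simpa using this
    · have : v k ^ 2 = 0 := by nlinarith [sq_nonneg (u k), sq_nonneg (v k)]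
      simpa using this
  have hs : ∀ k, 0 < k → k < n → ¬ Z u v k → (k = r ∨ k = i ∨ k + i = n ∨ k + r = n) := by
    intro k h1 h2 h3
    by_contra hc
    apply h3
    rcases lt_trichotomy (2 * k) n with h4 | h4 | h4
    · exact hlow k h1 h4 (by omega) (by omega)
    · have n3 := h.norm_low_c {0, i, r} (by simp; omega) k h4
      rw [Finset.sum_insert (by simp; omega), Finset.sum_pair hir, hu0, hv0, hvi] at n3
      have e1 : u k = 0 := by
        have : u k ^ 2 = 0 := by nlinarith [sq_nonneg (u k)]
        simpa using this
      have e2 := h.mir k (by omega)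
      have e : n - k = k := by omega
      rw [e, e1] at e2
      exact ⟨e1, by simpa using e2⟩
    · have := h.Zmir (n - k) (by omega) (hlow (n - k) (by omega) (by omega) (by omega) (by omega))
      have e : n - (n - k) = k := by omega
      rwa [e] at this
  have hT0 : ∀ p, 0 < p → p < n → p ≠ r → p + r ≠ n → u p + v p = 0 := by
    intro p h1 h2 h3 h4
    by_cases hz : Z u v p
    · rw [hz.1, hz.2]; rfl
    · have := hs p h1 h2 hz
      have : p = i ∨ p + i = n := by omega
      rcases this with rfl | e
      · exact hT
      · rw [h.Tmir i p (by omega), hT]; ring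
  have hTm := h.Tmir r (n - r) (by omega)
  have hε := h.hε
  have hη := h.hη
  rcases lt_or_gt_of_ne hir with hlt | hgt
  · exfalso
    have E2 := h.eq (2 * i) (by omega) (by omega)
    rw [S0c u v (2 * i) i hi rfl (fun k h1 h2 =>
      zor hs (by omega) (by omega) (by omega)), if_neg (by omega), hvi] at E2
    have Er := h.eq r (by omega) (by omega)
    rw [if_neg (by omega)] at Er
    by_cases h0 : u (2 * i) + v (2 * i) = 0
    · rw [h0] at E2
      split_ifs at E2 with hd
      swap
      · nlinarith
      have hTr : u r + v r = 0 := by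
        by_cases e : 2 * i = r
        · rw [← e]; exact h0
        · rw [S0 u v r (fun k h1 h2 => zor hs (by omega) (by omega) (by omega)),
            if_neg (by omega)] at Er
          linarith
      have Eir := h.eq (i + r) (by omega) (by omega)
      rw [S1 u v (i + r) i hi (by omega) (fun k h1 h2 h3 => zor hs (by omega) (by omega) (by omega)),
        hT0 (i + r) (by omega) (by omega) (by omega) (by omega), if_neg (by omega),
        if_neg (by omega)] at Eir
      unfold W at Eir
      have e : i + r - i = r := by omega
      have e2 : v r = - u r := by linarith
      rw [e, hvi, e2] at Eir
      rcases hx with e | e <;> rcases ha with e' | e' <;> rw [e, e'] at Eir <;> norm_num at Eir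
    · have : 2 * i = r ∨ (2 * i + r = n ∧ 2 * i ≠ r) := by
        have := hT0 (2 * i) (by omega) (by omega)
        by_contra hc
        exact h0 (this (by omega) (by omega))
      rcases this with hb1 | ⟨hc1, hc2⟩
      · have hab : u r = 1 ∧ v r = 1 := by
          rw [hb1] at E2 h0
          have e4 : u i * - u i = -4 := by nlinarith
          rw [e4] at E2
          rcases hη with rfl | rfl <;> split_ifs at E2 <;> constructor <;> omega
        have E3 := h.eq (n - r) (by omega) (by omega)
        rw [hTm, if_neg (c := n - r + 2 * r = n) (by omega), hab.1, hab.2] at E3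
        by_cases h3 : n = 3 * r
        · rw [S0c u v (n - r) r (by omega) (by omega)
            (fun k h1 h2 => zor hs (by omega) (by omega) (by omega)), if_pos (by omega),
            hab.1, hab.2] at E3
          rcases hε with rfl | rfl <;> rcases hη with rfl | rfl <;> norm_num at E3
        · rw [if_neg (by omega)] at E3
          have hS : S u v (n - r) = 0 := by
            by_cases h5 : n = 5 * i
            · rw [S1 u v (n - r) i hi (by omega)
                (fun k h1 h2 h3 => zor hs (by omega) (by omega) (by omega))]
              have e : n - r - i = r := by omega
              unfold W
              rw [e, hab.1, hab.2, hvi]; ring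
            · exact S0 u v (n - r) (fun k h1 h2 => zor hs (by omega) (by omega) (by omega))
          rw [hS] at E3
          rcases hε with rfl | rfl <;> rcases hη with rfl | rfl <;> norm_num at E3
      · rw [S0 u v r (fun k h1 h2 => zor hs (by omega) (by omega) (by omega)),
            if_neg (by omega)] at Er
        have e : n - r = 2 * i := by omega
        rw [e] at hTm
        apply h0
        rw [hTm]
        have : u r + v r = 0 := by linarith
        rw [this]; ring
  · have Er := h.eq r (by omega) (by omega)
    rw [S0 u v r (fun k h1 h2 => zor hs (by omega) (by omega) (by omega)),
            if_neg (by omega)] at Er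
    have E2 := h.eq (2 * r) (by omega) (by omega)
    rw [S0c u v (2 * r) r (by omega) rfl (fun k h1 h2 =>
      zor hs (by omega) (by omega) (by omega)), if_pos rfl] at E2
    by_cases h3 : n = 3 * r
    · exfalso
      have e : n - r = 2 * r := by omega
      rw [if_pos (by omega)] at Er
      rw [if_neg (by omega)] at E2
      rw [e] at hTm
      rw [hTm] at E2
      rcases hε with rfl | rfl <;> rcases hη with rfl | rfl <;> rcases ha with e | e <;>
        rcases hb with e' | e' <;> rw [e, e'] at Er E2 <;> norm_num at Er <;> norm_num at E2
    · rw [if_neg (by omega)] at Er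
      have hTr : u r + v r = 0 := by linarith
      have hvr : v r = - u r := by linarith
      have hT1 : ∀ p, 0 < p → p < n → u p + v p = 0 := by
        intro p h1 h2
        by_cases e : p = r
        · rw [e]; exact hTr
        · by_cases e' : p + r = n
          · rw [h.Tmir r p (by omega), hTr]; ring
          · exact hT0 p h1 h2 e e'
      rw [hT1 _ (by omega) (by omega), hvr] at E2
      have hε' : ε = -1 := by
        have : u r * - u r = -1 := by rcases ha with e | e <;> rw [e] <;> norm_num
        rw [this] at E2
        split_ifs at E2 <;> omega
      have E3 := h.eq (r + i) (by omega) (by omega)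
      rw [S1 u v (r + i) r (by omega) (by omega)
        (fun k h1 h2 h3 => zor hs (by omega) (by omega) (by omega)),
        hT1 _ (by omega) (by omega), if_neg (by omega)] at E3
      have e : r + i - r = i := by omega
      unfold W at E3
      rw [e, hvr, hvi] at E3
      have h4 : r + i + 2 * r = n := by
        by_contra hc
        rw [if_neg hc] at E3
        rcases hx with e | e <;> rcases ha with e' | e' <;> rw [e, e'] at E3 <;> norm_num at E3
      by_cases h5 : i = 2 * r
      · exact ⟨by omega, hε'⟩
      · exfalso
        have E4 := h.eq (2 * i) (by omega) (by omega)
        rw [S0c u v (2 * i) i (by omega) rfl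
          (fun k h1 h2 => zor hs (by omega) (by omega) (by omega)),
          hT1 _ (by omega) (by omega), if_neg (by omega), if_neg (by omega), hvi] at E4
        have e4 : u i * - u i = -(u i ^ 2) := by ring
        rw [e4, hx2] at E4
        norm_num at E4

end Sys
end Jon

namespace Jon
namespace Sys
variable {n r : ℕ} {ε η : ℤ} {u v : ℕ → ℤ}

/-- the complementary hypothesis to `c44` -/
def HH (n : ℕ) (u v : ℕ → ℤ) : Prop :=
  ∀ p, 0 < p → 2 * p < n → u p + v p = 0 → u p = 0 ∨ u p = 1 ∨ u p = -1

lemma HH' (h : Sys n r ε η u v) (H : HH n u v) (p : ℕ) (h0 : 0 < p) (hp : p < n) (h2 : 2 * p ≠ n)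
    (hT : u p + v p = 0) : u p = 0 ∨ u p = 1 ∨ u p = -1 := by
  rcases lt_or_gt_of_ne h2 with h3 | h3
  · exact H p h0 h3 hT
  · have hm := h.mir' p (by omega)
    have hT' := h.Tmir p (n - p) (by omega)
    rw [hT, mul_zero] at hT'
    have := H (n - p) (by omega) (by omega) hT'
    have hv : v (n - p) = - u (n - p) := by linarith
    rw [hv] at hm
    rcases h.hε with h1 | h1 <;> rcases h.hη with h2 | h2 <;> subst h1 <;> subst h2 <;> omega

lemma Z_of_even (H : HH n u v) {p : ℕ} (h0 : 0 < p) (h2 : 2 * p < n)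
    (hT : u p + v p = 0) (he : Even (u p)) : Z u v p := by
  have := H p h0 h2 hT
  rcases he with ⟨t, ht⟩
  constructor <;> omega

lemma norm_exact (h : Sys n r ε η u v) (s : Finset ℕ) (hs : ∀ k ∈ s, 2 * k < n)
    (hz : ∀ k, 2 * k < n → k ∉ s → Z u v k) (c : ℕ) (hc : 2 * c = n) :
    ∑ k ∈ s, (u k ^ 2 + v k ^ 2) + u c ^ 2 = 18 := by
  have h0 := h.norm_split
  have h2 : (Finset.range (n + 1)).filter (fun k => 2 * k = n) = {c} := by
    ext k
    simp only [Finset.mem_filter, Finset.mem_range, Finset.mem_singleton]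
    omega
  rw [h2, Finset.sum_singleton] at h0
  rw [← h0]
  congr 1
  apply Finset.sum_subset
  · intro k hk
    have := hs k hk
    simp only [Finset.mem_filter, Finset.mem_range]
    omega
  · intro k hk hks
    simp only [Finset.mem_filter, Finset.mem_range] at hk
    have := hz k hk.2 hks
    rw [this.1, this.2]; norm_num

lemma odd_pm {x : ℤ} (h : x = 0 ∨ x = 1 ∨ x = -1) (ho : Odd x) : x = 1 ∨ x = -1 := by
  rcases h with e | e
  · rw [e] at ho; exact absurd ho (by decide)
  · exact e

lemma small_lt (h : Sys n r ε η u v) (H : HH n u v) (hd : n < 3 * r) : False := by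
  have hr := h.hr
  have hn := h.hn
  have hu0 := h.u0
  have hv0 := h.v0
  obtain ⟨ho1, ho2⟩ := h.od
  have q1 := odd_sq ho1
  have q2 := odd_sq ho2
  obtain ⟨d, rfl⟩ : ∃ d, n = 2 * r + d := ⟨n - 2 * r, by omega⟩
  have hlow : ∀ p, 0 < p → p < d → Z u v p := by
    intro p
    induction p using Nat.strong_induction_on with
    | _ p ih =>
      intro h1 h2
      have E := h.eq p h1 (by omega)
      rw [S0 u v p (fun k hk hk2 => by
        by_cases hkp : k < p
        · exact Or.inl (ih k hkp hk (by omega))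
        · omega), if_neg (by omega), if_neg (by omega)] at E
      exact Z_of_even H h1 (by omega) (by linarith) (h.ev p h1 (by omega)).1
  have Ed := h.eq d (by omega) (by omega)
  rw [S0 u v d (fun k hk hk2 => Or.inl (hlow k hk (by omega))), if_neg (by omega),
    if_pos (by omega)] at Ed
  have hTd : u d + v d = 2 * η := by linarith
  have n2 := h.norm_low {0, d, r} (by simp; omega)
  rw [Finset.sum_insert (by simp; omega), Finset.sum_pair (by omega), hu0, hv0] at n2
  have b1 := pm2_of_sq (x := u d) (by nlinarith [sq_nonneg (v d)])
  have b2 := pm2_of_sq (x := v d) (by nlinarith [sq_nonneg (u d)])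
  obtain ⟨t1, ht1⟩ := (h.ev d (by omega) (by omega)).1
  obtain ⟨t2, ht2⟩ := (h.ev d (by omega) (by omega)).2
  have hdd : (u d = 2 * η ∧ v d = 0) ∨ (u d = 0 ∧ v d = 2 * η) := by
    rcases h.hη with e | e <;> omega
  have hprod : u d * v d = 0 := by
    rcases hdd with e | e <;> rw [e.1, e.2] <;> ring
  have hS0 : ∀ p, p ≤ r → (∀ k, 0 < k → k < p → k ≠ d → Z u v k) → d < p → S u v p = 0 := by
    intro p hp hz hdp
    by_cases e : 2 * d = p
    · rw [S0c u v p d (by omega) e (fun k h1 h2 => Or.inl (hz k h1 (by omega) (by omega)))]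
      exact hprod
    · apply S0
      intro k h1 h2
      by_cases hk : k = d
      · right; exact hz _ (by omega) (by omega) (by omega)
      · left; exact hz _ (by omega) (by omega) hk
  have hlow2 : ∀ p, 0 < p → p < r → p ≠ d → Z u v p := by
    intro p
    induction p using Nat.strong_induction_on with
    | _ p ih =>
      intro h1 h2 h3
      by_cases h4 : p < d
      · exact hlow p h1 h4
      · have E := h.eq p h1 (by omega)
        rw [hS0 p (by omega) (fun k a b c => ih k b a (by omega) c) (by omega),
          if_neg (by omega), if_neg (by omega)] at E
        exact Z_of_even H h1 (by omega) (by linarith) (h.ev p h1 (by omega)).1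
  have Er := h.eq r (by omega) (by omega)
  rw [hS0 r le_rfl (fun k a b c => hlow2 k a b c) (by omega),
          if_neg (by omega), if_neg (by omega)] at Er
  have hTr : u r + v r = 0 := by linarith
  have hur := odd_pm (H r (by omega) (by omega) hTr) ho1
  have hTm := h.Tmir r (r + d) (by omega)
  have E := h.eq (r + d) (by omega) (by omega)
  rw [S1 u v (r + d) d (by omega) (by omega)
    (fun k h1 h2 h3 => Or.inl (hlow2 k h1 (by omega) h3)), if_neg (by omega),
    if_neg (by omega), hTm, hTr] at E
  have e : r + d - d = r := by omega
  have e' : v r = - u r := by linarith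
  unfold W at E
  rw [e, e'] at E
  rcases h.hη with hη | hη <;> rw [hη] at hdd <;> rcases hdd with c | c <;> rw [c.1, c.2] at E <;>
    rcases hur with f | f <;> rw [f] at E <;> norm_num at E

lemma lowZ (h : Sys n r ε η u v) (H : HH n u v) (hd : 3 * r ≤ n) (p : ℕ) (h1 : 0 < p)
    (h2 : p < r) : Z u v p := by
  have hr := h.hr
  have hn := h.hn
  induction p using Nat.strong_induction_on with
  | _ p ih =>
    have E := h.eq p h1 (by omega)
    rw [S0 u v p (fun k hk hk2 => Or.inl (ih k (by omega) hk (by omega))), if_neg (by omega),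
      if_neg (by omega)] at E
    exact Z_of_even H h1 (by omega) (by linarith) (h.ev p h1 (by omega)).1

lemma small_eq (h : Sys n r ε η u v) (H : HH n u v) (hd : n = 3 * r) : ε = 1 := by
  have hr := h.hr
  have hn := h.hn
  have hz := h.lowZ H (by omega)
  have E1 := h.eq r (by omega) (by omega)
  rw [S0 u v r (fun k hk hk2 => Or.inl (hz k hk (by omega))), if_neg (by omega),
    if_pos (by omega)] at E1
  have E2 := h.eq (2 * r) (by omega) (by omega)
  have hTm := h.Tmir r (2 * r) (by omega)
  rw [S0c u v (2 * r) r (by omega) rfl (fun k hk hk2 => Or.inl (hz k hk (by omega))),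
    if_pos (by omega), if_neg (by omega), hTm] at E2
  rcases h.hε with e | e
  · exact e
  · exfalso
    have e1 : u r + v r = 2 * η := by linarith
    rw [e, e1] at E2
    have e2 : v r = 2 * η - u r := by linarith
    rw [e2] at E2
    rcases h.hη with e | e <;> rw [e] at E2 <;> nlinarith [sq_nonneg (u r - 1), sq_nonneg (u r + 1)]

lemma base (h : Sys n r ε η u v) (H : HH n u v) (hd : 3 * r < n) :
    (u r = 1 ∨ u r = -1) ∧ v r = - u r := by
  have hr := h.hr
  have hn := h.hn
  have hz := h.lowZ H (by omega)
  have E1 := h.eq r (by omega) (by omega)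
  rw [S0 u v r (fun k hk hk2 => Or.inl (hz k hk (by omega))), if_neg (by omega),
    if_neg (by omega)] at E1
  have hTr : u r + v r = 0 := by linarith
  exact ⟨odd_pm (H r (by omega) (by omega) hTr) h.od.1, by linarith⟩

lemma base_prod (h : Sys n r ε η u v) (H : HH n u v) (hd : 3 * r < n) : u r * v r = -1 := by
  obtain ⟨h1, h2⟩ := h.base H hd
  rw [h2]
  rcases h1 with e | e <;> rw [e] <;> norm_num

lemma small_mid (h : Sys n r ε η u v) (H : HH n u v) (hd : 3 * r < n) (hd2 : n < 4 * r) : False := by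
  have hr := h.hr
  have hn := h.hn
  have hz := h.lowZ H (by omega)
  obtain ⟨d, rfl⟩ : ∃ d, n = 2 * r + d := ⟨n - 2 * r, by omega⟩
  have E1 := h.eq d (by omega) (by omega)
  rw [S0 u v d (fun k hk hk2 => Or.inl (hz k hk (by omega))), if_neg (by omega),
    if_pos (by omega)] at E1
  have E2 := h.eq (2 * r) (by omega) (by omega)
  have hTm := h.Tmir d (2 * r) (by omega)
  have hTd : u d + v d = 2 * η := by linarith
  rw [S0c u v (2 * r) r (by omega) rfl (fun k hk hk2 => Or.inl (hz k hk (by omega))),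
    if_pos (by omega), if_neg (by omega), hTm, hTd, h.base_prod H hd] at E2
  rcases h.hε with rfl | rfl <;> rcases h.hη with rfl | rfl <;> norm_num at E2

lemma small_four (h : Sys n r ε η u v) (H : HH n u v) (hd : n = 4 * r) : False := by
  have hr := h.hr
  have hn := h.hn
  have hz := h.lowZ H (by omega)
  have hb := h.base H (by omega)
  have E2 := h.eq (2 * r) (by omega) (by omega)
  rw [S0c u v (2 * r) r (by omega) rfl (fun k hk hk2 => Or.inl (hz k hk (by omega))),
    if_pos (by omega), if_pos (by omega), h.base_prod H (by omega)] at E2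
  have hm := h.mir (2 * r) (by omega)
  have e : n - 2 * r = 2 * r := by omega
  rw [e] at hm
  rw [hm] at E2
  have huc : u (2 * r) = -1 := by
    rcases h.hε with rfl | rfl <;> rcases h.hη with rfl | rfl <;> omega
  have N := h.norm_split
  have h2 : (Finset.range (n + 1)).filter (fun k => 2 * k = n) = {2 * r} := by
    ext k
    simp only [Finset.mem_filter, Finset.mem_range, Finset.mem_singleton]
    omega
  rw [h2, Finset.sum_singleton, huc] at N
  have hdv : (2 : ℤ) ∣ ∑ k ∈ (Finset.range (n + 1)).filter (fun k => 2 * k < n), (u k ^ 2 + v k ^ 2) := by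
    apply Finset.dvd_sum
    intro k hk
    simp only [Finset.mem_filter, Finset.mem_range] at hk
    by_cases k0 : k = 0
    · rw [k0, h.u0, h.v0]; norm_num
    have hv : v k = - u k := by
      rcases lt_trichotomy k r with hk1 | hk1 | hk1
      · have := hz k (by omega) hk1
        rw [this.1, this.2]; rfl
      · rw [hk1]; exact hb.2
      · have E := h.eq k (by omega) (by omega)
        rw [S0 u v k (fun j hj hj2 => Or.inl (hz j hj (by omega))), if_neg (by omega),
          if_neg (by omega)] at E
        linarith
    rw [hv]
    exact ⟨u k ^ 2, by ring⟩
  omega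

lemma mid0 (h : Sys n r ε η u v) (H : HH n u v) (hd : 4 * r < n) (p : ℕ) (h1 : r < p)
    (h2 : p < 2 * r) : u p + v p = 0 := by
  have hr := h.hr
  have hz := h.lowZ H (by omega)
  have E := h.eq p (by omega) (by omega)
  rw [S0 u v p (fun j hj hj2 => Or.inl (hz j hj (by omega))), if_neg (by omega),
          if_neg (by omega)] at E
  linarith

lemma T2r (h : Sys n r ε η u v) (H : HH n u v) (hd : 4 * r < n) :
    2 * (u (2 * r) + v (2 * r)) = 1 + ε := by
  have hr := h.hr
  have hz := h.lowZ H (by omega)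
  have E2 := h.eq (2 * r) (by omega) (by omega)
  rw [S0c u v (2 * r) r (by omega) rfl (fun k hk hk2 => Or.inl (hz k hk (by omega))),
    if_pos (by omega), if_neg (by omega), h.base_prod H (by omega)] at E2
  linarith

end Sys
end Jon

namespace Jon
namespace Sys
variable {n r : ℕ} {ε η : ℤ} {u v : ℕ → ℤ}

/-- case II entry -/
lemma q_small (h : Sys n r ε η u v) (H : HH n u v) (hd : 4 * r < n) (q : ℕ) (hq : r < q)
    (hq2 : q < 2 * r) (hqZ : ¬ Z u v q) (hmin : ∀ k, r < k → k < q → Z u v k) :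
    2 * q = 3 * r ∧ ε = 1 ∧ (u q = 1 ∨ u q = -1) ∧ v q = - u q := by
  have hr := h.hr
  have hz := h.lowZ H (by omega)
  obtain ⟨ha, hb⟩ := h.base H (by omega)
  have hTq := h.mid0 H hd q hq hq2
  have hvq : v q = - u q := by linarith
  have huq : u q = 1 ∨ u q = -1 := by
    rcases H q (by omega) (by omega) hTq with e | e
    · exact absurd ⟨e, by rw [hvq, e]; rfl⟩ hqZ
    · exact e
  have hs : ∀ k, 0 < k → k < n → ¬ Z u v k → (k = r ∨ q ≤ k) := by
    intro k h1 h2 h3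
    by_contra hc
    apply h3
    by_cases hk : k < r
    · exact hz k h1 hk
    · exact hmin k (by omega) (by omega)
  have E := h.eq (2 * q) (by omega) (by omega)
  rw [S1c u v (2 * q) q r (by omega) rfl (by omega) (by omega)
    (fun k h1 h2 h3 => zor hs (by omega) (by omega) (by omega)), if_neg (by omega)] at E
  unfold W at E
  rw [hvq, hb] at E
  have hodd : ∃ t, u (2 * q - r) + v (2 * q - r) = 2 * t + 1 := by
    have : u q * - u q = -1 := by rcases huq with e | e <;> rw [e] <;> norm_num
    rw [this] at E
    rcases ha with e | e <;> rw [e] at E <;> split_ifs at E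
    · exact ⟨u (2 * q - r) + 2 * η - (u (2 * q) + v (2 * q)), by linarith⟩
    · exact ⟨u (2 * q - r) - (u (2 * q) + v (2 * q)), by linarith⟩
    · exact ⟨v (2 * q - r) + 2 * η - (u (2 * q) + v (2 * q)), by linarith⟩
    · exact ⟨v (2 * q - r) - (u (2 * q) + v (2 * q)), by linarith⟩
  obtain ⟨t, ht⟩ := hodd
  by_cases h3 : 2 * q = 3 * r
  · refine ⟨h3, ?_, huq, hvq⟩
    have e : 2 * q - r = 2 * r := by omega
    rw [e] at ht
    have := h.T2r H hd
    rcases h.hε with e | e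
    · exact e
    · omega
  · exfalso
    have E' := h.eq (2 * q - r) (by omega) (by omega)
    rw [S0 u v (2 * q - r) (fun k h1 h2 => zor hs (by omega) (by omega) (by omega)),
      if_neg (by omega), ht] at E'
    split_ifs at E' <;> omega

lemma q_big_pos (h : Sys n r ε η u v) (H : HH n u v) (hd : 4 * r < n) (hε : ε = 1)
    (hmin : ∀ k, r < k → k < 2 * r → Z u v k) : False := by
  have hr := h.hr
  have hz := h.lowZ H (by omega)
  obtain ⟨ha, hb⟩ := h.base H (by omega)
  have hT := h.T2r H hd
  rw [hε] at hT
  have E := h.eq (3 * r) (by omega) (by omega)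
  rw [S1 u v (3 * r) r (by omega) (by omega)
    (fun k h1 h2 h3 => by
      left
      by_cases hk : k < r
      · exact hz k h1 hk
      · exact hmin k (by omega) (by omega)), if_neg (by omega)] at E
  unfold W at E
  have e : 3 * r - r = 2 * r := by omega
  rw [e, hb] at E
  rcases ha with e | e <;> rw [e] at E <;> split_ifs at E <;> omega

lemma q_big_neg (h : Sys n r ε η u v) (H : HH n u v) (hd : 4 * r < n) (hε : ε = -1) (q : ℕ)
    (hq : 2 * r < q) (hqn : q < n) (hqZ : ¬ Z u v q) (hmin : ∀ k, r < k → k < q → Z u v k) :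
    False := by
  have hr := h.hr
  have hz := h.lowZ H (by omega)
  obtain ⟨ha, hb⟩ := h.base H (by omega)
  have hT := h.T2r H hd
  rw [hε] at hT
  have hs : ∀ k, 0 < k → k < n → ¬ Z u v k → (k = r ∨ q ≤ k) := by
    intro k h1 h2 h3
    by_contra hc
    apply h3
    by_cases hk : k < r
    · exact hz k h1 hk
    · exact hmin k (by omega) (by omega)
  obtain ⟨d, rfl⟩ : ∃ d, n = 2 * r + d := ⟨n - 2 * r, by omega⟩
  have hTd := h.Tmir (2 * r) d (by omega)
  have hT0 : u (2 * r) + v (2 * r) = 0 := by linarith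
  rw [hT0, mul_zero] at hTd
  by_cases hqd : d ≤ q
  · have E := h.eq d (by omega) (by omega)
    rw [S0 u v d (fun k h1 h2 => zor hs (by omega) (by omega) (by omega)), hTd,
      if_neg (by omega), if_pos (by omega)] at E
    rcases h.hη with e | e <;> omega
  have E := h.eq q (by omega) (by omega)
  rw [S0 u v q (fun k h1 h2 => zor hs (by omega) (by omega) (by omega)),
      if_neg (by omega), if_neg (by omega)] at E
  have hTq : u q + v q = 0 := by linarith
  have hvq : v q = - u q := by linarith
  have huq : u q ≠ 0 := fun e => hqZ ⟨e, by rw [hvq, e]; rfl⟩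
  have E1 := h.eq (q + r) (by omega) (by omega)
  rw [S1 u v (q + r) r (by omega) (by omega)
    (fun k h1 h2 h3 => zor hs (by omega) (by omega) (by omega)), if_neg (by omega)] at E1
  have E2 := h.eq (q + 2 * r) (by omega) (by omega)
  rw [S1 u v (q + 2 * r) r (by omega) (by omega)
    (fun k h1 h2 h3 => zor hs (by omega) (by omega) (by omega)), if_neg (by omega)] at E2
  unfold W at E1 E2
  have e1 : q + r - r = q := by omega
  have e2 : q + 2 * r - r = q + r := by omega
  rw [e1, hb, hvq] at E1
  rw [e2, hb] at E2
  by_cases h2 : 2 * q = 2 * r + d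
  · have hTm := h.Tmir (q - r) (q + r) (by omega)
    have hz1 := hmin (q - r) (by omega) (by omega)
    rw [hz1.1, hz1.2, add_zero, mul_zero] at hTm
    rw [hTm] at E1
    split_ifs at E1 with hc
    swap
    · rcases ha with e | e <;> rw [e] at E1 <;> omega
    have hq3 : q = 3 * r := by omega
    have hu4 : u q ^ 2 = 4 := by
      have : u q = 2 ∨ u q = -2 := by
        rcases ha with e | e <;> rw [e] at E1 <;> rcases h.hη with e' | e' <;> omega
      rcases this with e | e <;> rw [e] <;> norm_num
    have N := h.norm_exact {0, r} (by simp; omega) (fun k h1 h2 => by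
      by_contra h3
      simp at h2
      have := hs k (by omega) (by omega) h3
      omega) q (by omega)
    rw [Finset.sum_pair (by omega), h.u0, h.v0, hb, hu4] at N
    rcases ha with e | e <;> rw [e] at N <;> norm_num at N
  · have := h.HH' H q (by omega) (by omega) h2 hTq
    rcases ha with e | e <;> rw [e] at E1 E2 <;> split_ifs at E1 E2 <;> omega

/-- the main dichotomy for `n > 4 r` -/
lemma dich (h : Sys n r ε η u v) (H : HH n u v) (hd : 4 * r < n) :
    (ε = -1 ∧ (∀ k, r < k → k < 2 * r → Z u v k) ∧
      (u (2 * r) = 1 ∨ u (2 * r) = -1) ∧ v (2 * r) = - u (2 * r)) ∨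
    (∃ ρ, r = 2 * ρ ∧ ε = 1 ∧ (∀ k, 2 * ρ < k → k < 3 * ρ → Z u v k) ∧
      (u (3 * ρ) = 1 ∨ u (3 * ρ) = -1) ∧ v (3 * ρ) = - u (3 * ρ)) := by
  classical
  have hr := h.hr
  have hex : ∃ q, r < q ∧ q < n ∧ ¬ Z u v q := by
    refine ⟨n - r, by omega, by omega, fun hz => ?_⟩
    have := h.Zmir (n - r) (by omega) hz
    have e : n - (n - r) = r := by omega
    rw [e] at this
    have ho := h.od.1
    rw [this.1] at ho
    exact absurd ho (by decide)
  obtain ⟨h1, h2, h3⟩ := Nat.find_spec hex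
  have hmin : ∀ k, r < k → k < Nat.find hex → Z u v k := by
    intro k hk hk2
    have := Nat.find_min hex hk2
    by_contra hc
    exact this ⟨hk, by omega, hc⟩
  generalize Nat.find hex = q at *
  by_cases hq : q < 2 * r
  · right
    obtain ⟨c1, c2, c3, c4⟩ := h.q_small H hd q h1 hq h3 hmin
    refine ⟨q - r, by omega, c2, ?_⟩
    have e : 3 * (q - r) = q := by omega
    rw [e]
    refine ⟨fun k hk hk2 => hmin k (by omega) hk2, c3, c4⟩
  · left
    rcases h.hε with e | e
    · exact (h.q_big_pos H hd e (fun k hk hk2 => hmin k hk (by omega))).elim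
    · by_cases hq2 : 2 * r < q
      · exact (h.q_big_neg H hd e q hq2 h2 h3 hmin).elim
      · have : q = 2 * r := by omega
        subst this
        have hT := h.T2r H hd
        rw [e] at hT
        have hvq : v (2 * r) = - u (2 * r) := by linarith
        refine ⟨e, hmin, ?_, hvq⟩
        rcases H (2 * r) (by omega) (by omega) (by linarith) with f | f
        · exact absurd ⟨f, by rw [hvq, f]; rfl⟩ h3
        · exact f

end Sys
end Jon

namespace Jon

lemma ndvd_add {r e : ℕ} (c : ℕ) (h : ¬ r ∣ e) : ¬ r ∣ e + c * r := fun h' =>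
  h ((Nat.dvd_add_left (Dvd.intro_left c rfl)).1 h')

lemma ndvd_false {r p k j : ℕ} (h : ¬ r ∣ p) (hk : r ∣ k) (hj : r ∣ j) (e : k + j = p) : False :=
  h (e ▸ dvd_add hk hj)

namespace Sys
variable {n r : ℕ} {ε η : ℤ} {u v : ℕ → ℤ}

lemma caseI_mult (h : Sys n r ε η u v) (H : HH n u v) (hd : 4 * r < n) (hε : ε = -1)
    (hmid : ∀ k, r < k → k < 2 * r → Z u v k)
    (hB : u (2 * r) = 1 ∨ u (2 * r) = -1) (hvB : v (2 * r) = - u (2 * r)) :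
    ∀ k, 0 < k → k < n → ¬ Z u v k → r ∣ k := by
  classical
  by_contra hcon
  have hex : ∃ e, 0 < e ∧ e < n ∧ ¬ Z u v e ∧ ¬ r ∣ e := by push Not at hcon; exact hcon
  obtain ⟨he0, hen, heZ, her⟩ := Nat.find_spec hex
  have hmin : ∀ k, 0 < k → k < Nat.find hex → ¬ r ∣ k → Z u v k := by
    intro k hk hk2 hk3
    have := Nat.find_min hex hk2
    by_contra hc
    exact this ⟨hk, by omega, hc, hk3⟩
  generalize Nat.find hex = e at *
  clear hex hcon
  have hr := h.hr
  have hz := h.lowZ H (by omega)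
  obtain ⟨ha, hb⟩ := h.base H (by omega)
  have hT := h.T2r H hd
  rw [hε] at hT
  have he2 : 2 * r < e := by
    by_contra hc
    rcases lt_trichotomy e r with c | c | c
    · exact heZ (hz e he0 c)
    · exact her (by rw [c])
    · by_cases c2 : e = 2 * r
      · exact her (by rw [c2]; exact Dvd.intro_left 2 rfl)
      · exact heZ (hmid e c (by omega))
  have hs : ∀ k, 0 < k → k < n → ¬ Z u v k → ((k = r ∨ k = 2 * r ∨ 2 * r < k) ∧ (r ∣ k ∨ e ≤ k)) := by
    intro k h1 h2 h3
    constructor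
    · by_contra hc
      apply h3
      by_cases hk : k < r
      · exact hz k h1 hk
      · exact hmid k (by omega) (by omega)
    · by_contra hc
      rw [not_or] at hc
      exact h3 (hmin k h1 (by omega) hc.1)
  have her1 : ¬ r ∣ e + r := by simpa using ndvd_add 1 her
  have her2 : ¬ r ∣ e + 2 * r := ndvd_add 2 her
  obtain ⟨d, rfl⟩ : ∃ d, n = 2 * r + d := ⟨n - 2 * r, by omega⟩
  have hTd := h.Tmir (2 * r) d (by omega)
  have hT0 : u (2 * r) + v (2 * r) = 0 := by linarith
  rw [hT0, mul_zero] at hTd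
  have hed : e < d := by
    by_contra hc
    by_cases hrd : r ∣ d
    · have hnz : ¬ Z u v (2 * r + d - e) := by
        intro hz'
        have := h.Zmir (2 * r + d - e) (by omega) hz'
        have e' : 2 * r + d - (2 * r + d - e) = e := by omega
        rw [e'] at this
        exact heZ this
      have hne : d ≠ e := fun c => her (c ▸ hrd)
      apply hnz
      apply hmin _ (by omega) (by omega)
      intro hdv
      apply her
      have e1 : r ∣ 2 * r + d := dvd_add (Dvd.intro_left 2 rfl) hrd
      have e2 : 2 * r + d = (2 * r + d - e) + e := by omega
      rw [e2] at e1
      exact (Nat.dvd_add_right hdv).1 e1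
    · have E := h.eq d (by omega) (by omega)
      rw [S0 u v d (fun k h1 h2 => zor hs (by omega) (by omega) (fun c1 c2 =>
        ndvd_false hrd (c1.2.resolve_right (by omega)) (c2.2.resolve_right (by omega)) (by omega))),
        hTd, if_neg (by omega), if_pos (by omega)] at E
      rcases h.hη with e | e <;> omega
  have E := h.eq e (by omega) (by omega)
  rw [S0 u v e (fun k h1 h2 => zor hs (by omega) (by omega) (fun c1 c2 =>
        ndvd_false her (c1.2.resolve_right (by omega)) (c2.2.resolve_right (by omega)) (by omega))),
        if_neg (by omega), if_neg (by omega)] at E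
  have hTe : u e + v e = 0 := by linarith
  have hve : v e = - u e := by linarith
  have hue : u e ≠ 0 := fun c => heZ ⟨c, by rw [hve, c]; rfl⟩
  have E1 := h.eq (e + r) (by omega) (by omega)
  rw [S1 u v (e + r) r (by omega) (by omega)
    (fun k h1 h2 h3 => zor hs (by omega) (by omega) (fun c1 c2 =>
        ndvd_false her1 (c1.2.resolve_right (by omega)) (c2.2.resolve_right (by omega)) (by omega))),
        if_neg (by omega)] at E1
  have E2 := h.eq (e + 2 * r) (by omega) (by omega)
  rw [S2 u v (e + 2 * r) r (2 * r) (by omega) (by omega) (by omega) (by omega) (by omega)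
    (fun k h1 h2 h3 h4 => zor hs (by omega) (by omega) (fun c1 c2 =>
        ndvd_false her2 (c1.2.resolve_right (by omega)) (c2.2.resolve_right (by omega)) (by omega))),
        if_neg (by omega)] at E2
  unfold W at E1 E2
  have e1 : e + r - r = e := by omega
  have e2 : e + 2 * r - r = e + r := by omega
  have e3 : e + 2 * r - 2 * r = e := by omega
  rw [e1, hb, hve] at E1
  rw [e2, e3, hb, hvB, hve] at E2
  by_cases h2 : 2 * e = 2 * r + d
  · have hTm := h.Tmir (e - r) (e + r) (by omega)
    have hz1 := hmin (e - r) (by omega) (by omega) (fun c => her (by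
      have : e = (e - r) + r := by omega
      rw [this]; exact dvd_add c dvd_rfl))
    rw [hz1.1, hz1.2, add_zero, mul_zero] at hTm
    rw [hTm] at E1
    split_ifs at E1 with hc
    swap
    · rcases ha with e | e <;> rw [e] at E1 <;> omega
    have hq3 : e = 3 * r := by omega
    exact her (by rw [hq3]; exact Dvd.intro_left 3 rfl)
  · have := h.HH' H e (by omega) (by omega) h2 hTe
    rcases ha with e | e <;> rcases hB with e' | e' <;> rw [e] at E1 E2 <;> rw [e'] at E2 <;>
      split_ifs at E1 E2 <;> omega

/-- final parity contradiction in case II -/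
lemma parity (h : Sys n r ε η u v) (ρ x : ℕ) (hr : r = 2 * ρ) (hx : 4 * ρ < x) (hxn : x + 5 * ρ < n)
    (ha : u (2 * ρ) = 1 ∨ u (2 * ρ) = -1) (hva : v (2 * ρ) = - u (2 * ρ))
    (hb : u (3 * ρ) = 1 ∨ u (3 * ρ) = -1) (hvb : v (3 * ρ) = - u (3 * ρ))
    (h4 : u (4 * ρ) + v (4 * ρ) = 1) (t5 : ℤ) (h5 : u (5 * ρ) + v (5 * ρ) = 2 * t5 + 1)
    (hux : u x = 1 ∨ u x = -1) (hvx : v x = - u x) (hx1 : v (x + ρ) = - u (x + ρ))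
    (S2' : S u v (x + 2 * ρ) = W u v (x + 2 * ρ) (2 * ρ))
    (S3' : S u v (x + 3 * ρ) = W u v (x + 3 * ρ) (2 * ρ) + W u v (x + 3 * ρ) (3 * ρ))
    (t : ℤ) (S5' : S u v (x + 5 * ρ) = W u v (x + 5 * ρ) (2 * ρ) + W u v (x + 5 * ρ) (3 * ρ) +
      W u v (x + 5 * ρ) (4 * ρ) + W u v (x + 5 * ρ) (5 * ρ) + 2 * t) : False := by
  have E2 := h.eq (x + 2 * ρ) (by omega) (by omega)
  have E3 := h.eq (x + 3 * ρ) (by omega) (by omega)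
  have E5 := h.eq (x + 5 * ρ) (by omega) (by omega)
  rw [S2', if_neg (by omega)] at E2
  rw [S3', if_neg (by omega)] at E3
  rw [S5', if_neg (by omega)] at E5
  unfold W at E2 E3 E5
  have e1 : x + 2 * ρ - 2 * ρ = x := by omega
  have e2 : x + 3 * ρ - 2 * ρ = x + ρ := by omega
  have e3 : x + 3 * ρ - 3 * ρ = x := by omega
  have e4 : x + 5 * ρ - 2 * ρ = x + 3 * ρ := by omega
  have e5 : x + 5 * ρ - 3 * ρ = x + 2 * ρ := by omega
  have e6 : x + 5 * ρ - 4 * ρ = x + ρ := by omega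
  have e7 : x + 5 * ρ - 5 * ρ = x := by omega
  rw [e1, hva, hvx] at E2
  rw [e2, e3, hva, hvb, hvx, hx1] at E3
  have hv4 : v (4 * ρ) = 1 - u (4 * ρ) := by linarith
  have hv5 : v (5 * ρ) = 2 * t5 + 1 - u (5 * ρ) := by linarith
  rw [e4, e5, e6, e7, hva, hvb, hvx, hx1, hv4, hv5] at E5
  have key : u (4 * ρ) * -u (x + ρ) + u (x + ρ) * (1 - u (4 * ρ))
    = u (x + ρ) - 2 * (u (4 * ρ) * u (x + ρ)) := by ring
  rw [key] at E5
  generalize u (4 * ρ) * u (x + ρ) = w at E5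
  have hη : ∀ p : ℕ, ∃ s : ℤ, (if p + 2 * r = n then 4 * η else 0) = 4 * s := by
    intro p
    split_ifs
    · exact ⟨η, rfl⟩
    · exact ⟨0, rfl⟩
  obtain ⟨s2, hs2⟩ := hη (x + 2 * ρ)
  obtain ⟨s3, hs3⟩ := hη (x + 3 * ρ)
  obtain ⟨s5, hs5⟩ := hη (x + 5 * ρ)
  rw [hs2] at E2
  rw [hs3] at E3
  rw [hs5] at E5
  clear hs2 hs3 hs5 hη key S2' S3' S5'
  rcases ha with ha | ha <;> rcases hb with hb | hb <;> rcases hux with hux | hux <;>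
    rw [ha, hux] at E2 <;> rw [ha, hb, hux] at E3 <;> rw [ha, hb, hux] at E5 <;> omega

end Sys
end Jon

namespace Jon
lemma W_symm (u v : ℕ → ℤ) {p k j : ℕ} (h : k + j = p) : W u v p k = W u v p j := by
  unfold W
  have e1 : p - k = j := by omega
  have e2 : p - j = k := by omega
  rw [e1, e2]; ring

namespace Sys
variable {n r : ℕ} {ε η : ℤ} {u v : ℕ → ℤ}

/-- the data of case II -/
structure CII (n ρ : ℕ) (η : ℤ) (u v : ℕ → ℤ) : Prop where
  h : Sys n (2 * ρ) 1 η u v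
  H : HH n u v
  hd : 8 * ρ < n
  hρ : 0 < ρ
  z1 : ∀ k, 0 < k → k < 2 * ρ → Z u v k
  z2 : ∀ k, 2 * ρ < k → k < 3 * ρ → Z u v k
  ha : u (2 * ρ) = 1 ∨ u (2 * ρ) = -1
  hva : v (2 * ρ) = - u (2 * ρ)
  hb : u (3 * ρ) = 1 ∨ u (3 * ρ) = -1
  hvb : v (3 * ρ) = - u (3 * ρ)
  h4 : u (4 * ρ) + v (4 * ρ) = 1
  h5 : ∃ t, u (5 * ρ) + v (5 * ρ) = 2 * t + 1

lemma CII.mk' (h : Sys n r ε η u v) (H : HH n u v) (hd : 4 * r < n) (ρ : ℕ) (hr : r = 2 * ρ)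
    (hε : ε = 1) (z2 : ∀ k, 2 * ρ < k → k < 3 * ρ → Z u v k)
    (hb : u (3 * ρ) = 1 ∨ u (3 * ρ) = -1) (hvb : v (3 * ρ) = - u (3 * ρ)) : CII n ρ η u v := by
  subst hr hε
  have hr := h.hr
  have z1 := h.lowZ H (by omega)
  obtain ⟨ha, hva⟩ := h.base H (by omega)
  have hT := h.T2r H hd
  have e4 : 2 * (2 * ρ) = 4 * ρ := by omega
  rw [e4] at hT
  refine ⟨h, H, by omega, by omega, z1, z2, ha, hva, hb, hvb, by linarith, ?_⟩
  have E := h.eq (5 * ρ) (by omega) (by omega)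
  rw [S1 u v (5 * ρ) (2 * ρ) (by omega) (by omega) (fun k h1 h2 h3 => by
    left
    by_cases hk : k < 2 * ρ
    · exact z1 k h1 hk
    · exact z2 k (by omega) (by omega)), if_neg (by omega)] at E
  have e : 5 * ρ - 2 * ρ = 3 * ρ := by omega
  unfold W at E
  rw [e, hva, hvb] at E
  rcases ha with ha | ha <;> rcases hb with hb | hb <;> rw [ha, hb] at E <;> split_ifs at E
  · exact ⟨η, by linarith⟩
  · exact ⟨0, by linarith⟩
  · exact ⟨η - 1, by linarith⟩
  · exact ⟨-1, by linarith⟩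
  · exact ⟨η - 1, by linarith⟩
  · exact ⟨-1, by linarith⟩
  · exact ⟨η, by linarith⟩
  · exact ⟨0, by linarith⟩

variable {ρ : ℕ}

lemma CII.z3 (c : CII n ρ η u v) : ∀ k, 3 * ρ < k → k < 4 * ρ → Z u v k := by
  classical
  by_contra hcon
  have hex : ∃ e, 3 * ρ < e ∧ e < 4 * ρ ∧ ¬ Z u v e := by push Not at hcon; exact hcon
  obtain ⟨he0, hen, heZ⟩ := Nat.find_spec hex
  have hmin : ∀ k, 3 * ρ < k → k < Nat.find hex → Z u v k := by
    intro k hk hk2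
    have := Nat.find_min hex hk2
    by_contra hc
    exact this ⟨hk, by omega, hc⟩
  generalize Nat.find hex = e at *
  clear hex hcon
  obtain ⟨h, H, hd, hρ, z1, z2, ha, hva, hb, hvb, h4, t5, h5⟩ := c
  have hs : ∀ k, 0 < k → k < n → ¬ Z u v k → (k = 2 * ρ ∨ k = 3 * ρ ∨ e ≤ k) := by
    intro k h1 h2 h3
    by_contra hc
    apply h3
    by_cases hk : k < 2 * ρ
    · exact z1 k h1 hk
    · by_cases hk : k < 3 * ρ
      · exact z2 k (by omega) hk
      · exact hmin k (by omega) (by omega)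
  have hTe := h.mid0 H (by omega) e (by omega) (by omega)
  have hve : v e = - u e := by linarith
  have hue : u e = 1 ∨ u e = -1 := by
    rcases H e (by omega) (by omega) hTe with e' | e'
    · exact absurd ⟨e', by rw [hve, e']; rfl⟩ heZ
    · exact e'
  have hpr : u e * v e = -1 := by rw [hve]; rcases hue with e | e <;> rw [e] <;> norm_num
  have E := h.eq (2 * e) (by omega) (by omega)
  rw [S2c u v (2 * e) e (2 * ρ) (3 * ρ) (by omega) rfl (by omega) (by omega) (by omega) (by omega)
    (by omega) (fun k h1 h2 h3 h4 => zor hs (by omega) (by omega) (by omega)),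
    if_neg (by omega), hpr] at E
  unfold W at E
  rw [hva, hvb] at E
  obtain ⟨s, hs4⟩ : ∃ s : ℤ, (if 2 * e + 2 * (2 * ρ) = n then 4 * η else 0) = 4 * s := by
    split_ifs
    · exact ⟨η, rfl⟩
    · exact ⟨0, rfl⟩
  rw [hs4] at E
  have hsum : ∃ t, (u (2 * e - 2 * ρ) + v (2 * e - 2 * ρ)) + (u (2 * e - 3 * ρ) + v (2 * e - 3 * ρ))
      = 2 * t + 1 := by
    have key : (((u (2 * e - 2 * ρ) + v (2 * e - 2 * ρ)) +
      (u (2 * e - 3 * ρ) + v (2 * e - 3 * ρ))) % 2 = 1) := by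
      rcases ha with ha | ha <;> rcases hb with hb | hb <;> rw [ha, hb] at E <;> omega
    exact ⟨((u (2 * e - 2 * ρ) + v (2 * e - 2 * ρ)) +
      (u (2 * e - 3 * ρ) + v (2 * e - 3 * ρ))) / 2, by omega⟩
  obtain ⟨t, ht⟩ := hsum
  by_cases h7 : 2 * e = 7 * ρ
  · have e1 : 2 * e - 2 * ρ = 5 * ρ := by omega
    have e2 : 2 * e - 3 * ρ = 4 * ρ := by omega
    rw [e1, e2] at ht
    omega
  · have E1 := h.eq (2 * e - 2 * ρ) (by omega) (by omega)
    rw [S0 u v _ (fun k h1 h2 => zor hs (by omega) (by omega) (by omega)),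
      if_neg (by omega)] at E1
    have E2 := h.eq (2 * e - 3 * ρ) (by omega) (by omega)
    rw [S0 u v _ (fun k h1 h2 => zor hs (by omega) (by omega) (by omega)),
      if_neg (by omega)] at E2
    split_ifs at E1 E2 <;> omega

lemma CII.supp (c : CII n ρ η u v) : ∀ k, 0 < k → k < n → ¬ Z u v k →
    (k = 2 * ρ ∨ k = 3 * ρ ∨ 4 * ρ ≤ k) := by
  intro k h1 h2 h3
  by_contra hc
  apply h3
  by_cases hk : k < 2 * ρ
  · exact c.z1 k h1 hk
  · by_cases hk : k < 3 * ρ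
    · exact c.z2 k (by omega) hk
    · exact c.z3 k (by omega) (by omega)

lemma CII.Td (c : CII n ρ η u v) (d : ℕ) (hd : d + 4 * ρ = n) : u d + v d = η := by
  rw [c.h.Tmir (4 * ρ) d (by omega), c.h4]; ring

lemma CII.mid (c : CII n ρ η u v) (p : ℕ) (h1 : 4 * ρ < p) (h2 : p < 6 * ρ) (h3 : p ≠ 5 * ρ)
    (hpn : p < n) : p + 4 * ρ ≠ n ∧ u p + v p = 0 := by
  have hs := c.supp
  have hρ := c.hρ
  have E := c.h.eq p (by omega) hpn
  rw [S0 u v p (fun k h1 h2 => zor hs (by omega) (by omega) (by omega)), if_neg (by omega)] at E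
  have hne : p + 4 * ρ ≠ n := by
    intro hc
    rw [if_pos (by omega), c.Td p hc] at E
    rcases c.h.hη with e | e <;> omega
  rw [if_neg (by omega)] at E
  exact ⟨hne, by linarith⟩

lemma CII.z4 (c : CII n ρ η u v) : ∀ k, 4 * ρ < k → k < 5 * ρ → Z u v k := by
  classical
  by_contra hcon
  have hex : ∃ e, 4 * ρ < e ∧ e < 5 * ρ ∧ ¬ Z u v e := by push Not at hcon; exact hcon
  obtain ⟨x0, hx0⟩ := hex
  have hfs := Nat.findGreatest_spec (P := fun e => 4 * ρ < e ∧ e < 5 * ρ ∧ ¬ Z u v e)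
    (m := x0) (n := 5 * ρ) (by omega) hx0
  have hmax : ∀ k, Nat.findGreatest (fun e => 4 * ρ < e ∧ e < 5 * ρ ∧ ¬ Z u v e) (5 * ρ) < k →
      k < 5 * ρ → Z u v k := by
    intro k hk hk2
    have := Nat.findGreatest_is_greatest hk (by omega)
    by_contra hc
    exact this ⟨by omega, hk2, hc⟩
  generalize Nat.findGreatest (fun e => 4 * ρ < e ∧ e < 5 * ρ ∧ ¬ Z u v e) (5 * ρ) = x at *
  clear hx0 hcon
  obtain ⟨hx4, hx5, hxZ⟩ := hfs
  have hs := c.supp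
  have hmid := c.mid
  have z2 := c.z2
  obtain ⟨h, H, hd, hρ, z1, -, ha, hva, hb, hvb, h4, t5, h5⟩ := c
  have hTx := (hmid x hx4 (by omega) (by omega) (by omega)).2
  have hvx : v x = - u x := by linarith
  have hux : u x ≠ 0 := fun e => hxZ ⟨e, by rw [hvx, e]; rfl⟩
  have S2' : S u v (x + 2 * ρ) = W u v (x + 2 * ρ) (2 * ρ) :=
    S1 u v _ _ (by omega) (by omega) (fun k h1 h2 h3 => by
      by_cases hk : k = 3 * ρ
      · right
        by_contra hc
        have := hs _ (by omega) (by omega) hc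
        omega
      · exact zor hs (by omega) (by omega) (by omega))
  by_cases h9 : n = 9 * ρ
  · have E := h.eq (x + 2 * ρ) (by omega) (by omega)
    have hzz := z2 (7 * ρ - x) (by omega) (by omega)
    have hTm := h.Tmir (7 * ρ - x) (x + 2 * ρ) (by omega)
    rw [hzz.1, hzz.2, add_zero, mul_zero] at hTm
    rw [hTm, S2', if_neg (by omega), if_neg (by omega)] at E
    have e1 : x + 2 * ρ - 2 * ρ = x := by omega
    unfold W at E
    rw [e1, hva, hvx] at E
    rcases ha with ha | ha <;> rw [ha] at E <;> omega
  · have hn10 : 10 * ρ ≤ n := by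
      by_contra hc
      exact (hmid (n - 4 * ρ) (by omega) (by omega) (by omega) (by omega)).1 (by omega)
    have hux' : u x = 1 ∨ u x = -1 := by
      rcases H x (by omega) (by omega) hTx with e | e
      · exact absurd e hux
      · exact e
    have hTx1 := (hmid (x + ρ) (by omega) (by omega) (by omega) (by omega)).2
    have S3' : S u v (x + 3 * ρ) = W u v (x + 3 * ρ) (2 * ρ) + W u v (x + 3 * ρ) (3 * ρ) :=
      S2 u v _ _ _ (by omega) (by omega) (by omega) (by omega) (by omega)
        (fun k h1 h2 h3 h4 => zor hs (by omega) (by omega) (by omega))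
    obtain ⟨t, ht⟩ := S_par u v (x + 5 * ρ) {2 * ρ, 3 * ρ, 4 * ρ, x}
      (by simp; omega) (fun k h1 h2 h3 => by
        simp at h3
        by_cases hkZ : Z u v k
        · rw [W_zero (Or.inl hkZ)]; exact dvd_zero _
        · have hk4 := hs k h1 (by omega) hkZ
          have hkx : k < x := by
            by_contra hc
            exact hkZ (hmax k (by omega) (by omega))
          have c1 := (hmid k (by omega) (by omega) (by omega) (by omega)).2
          have c2 := (hmid (x + 5 * ρ - k) (by omega) (by omega) (by omega) (by omega)).2
          unfold W
          have d1 : v k = - u k := by linarith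
          have d2 : v (x + 5 * ρ - k) = - u (x + 5 * ρ - k) := by linarith
          rw [d1, d2]
          exact ⟨-(u k * u (x + 5 * ρ - k)), by ring⟩)
    rw [cen_zero u v (fun q h1 h2 => hmax q (by omega) (by omega)),
      Finset.sum_insert (by simp; omega), Finset.sum_insert (by simp; omega),
      Finset.sum_pair (by omega), W_symm u v (k := x) (j := 5 * ρ) rfl] at ht
    exact h.parity ρ x rfl hx4 (by omega) ha hva hb hvb h4 t5 h5 hux' hvx (by linarith) S2' S3' t
      (by rw [ht]; ring)

lemma CII.mult (c : CII n ρ η u v) : ∀ k, 0 < k → k < n → ¬ Z u v k → ρ ∣ k := by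
  classical
  by_contra hcon
  have hex : ∃ e, 0 < e ∧ e < n ∧ ¬ Z u v e ∧ ¬ ρ ∣ e := by push Not at hcon; exact hcon
  obtain ⟨he0, hen, heZ, her⟩ := Nat.find_spec hex
  have hmin : ∀ k, 0 < k → k < Nat.find hex → ¬ ρ ∣ k → Z u v k := by
    intro k hk hk2 hk3
    have := Nat.find_min hex hk2
    by_contra hc
    exact this ⟨hk, by omega, hc, hk3⟩
  generalize Nat.find hex = e at *
  clear hex hcon
  have hs' := c.supp
  have hm : ∀ i : ℕ, ρ ∣ i * ρ := fun i => Dvd.intro_left i rfl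
  have hs : ∀ k, 0 < k → k < n → ¬ Z u v k →
      ((k = 2 * ρ ∨ k = 3 * ρ ∨ k = 4 * ρ ∨ 5 * ρ ≤ k) ∧ (ρ ∣ k ∨ e ≤ k)) := by
    intro k h1 h2 h3
    constructor
    · have := hs' k h1 h2 h3
      by_contra hc
      exact h3 (c.z4 k (by omega) (by omega))
    · by_contra hc
      rw [not_or] at hc
      exact h3 (hmin k h1 (by omega) hc.1)
  have he5 : 5 * ρ < e := by
    have := (hs e he0 hen heZ).1
    rcases this with c | c | c | c
    · exact absurd (c ▸ hm 2) her
    · exact absurd (c ▸ hm 3) her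
    · exact absurd (c ▸ hm 4) her
    · rcases c.eq_or_lt with c | c
      · exact absurd (c ▸ hm 5) her
      · exact c
  have hTd := c.Td
  obtain ⟨h, H, hd, hρ, z1, z2, ha, hva, hb, hvb, h4, t5, h5⟩ := c
  have her1 : ¬ ρ ∣ e + ρ := by simpa using ndvd_add 1 her
  have her2 : ¬ ρ ∣ e + 2 * ρ := ndvd_add 2 her
  have her3 : ¬ ρ ∣ e + 3 * ρ := ndvd_add 3 her
  have her5 : ¬ ρ ∣ e + 5 * ρ := ndvd_add 5 her
  obtain ⟨d, rfl⟩ : ∃ d, n = d + 4 * ρ := ⟨n - 4 * ρ, by omega⟩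
  have hed : e + ρ < d := by
    by_contra hc
    by_cases hrd : ρ ∣ d
    · have hnz : ¬ Z u v (d + 4 * ρ - e) := by
        intro hz'
        have := h.Zmir (d + 4 * ρ - e) (by omega) hz'
        have e' : d + 4 * ρ - (d + 4 * ρ - e) = e := by omega
        rw [e'] at this
        exact heZ this
      apply hnz
      apply hmin _ (by omega) (by omega)
      intro hdv
      apply her
      have e1 : ρ ∣ d + 4 * ρ := dvd_add hrd (hm 4)
      have e2 : d + 4 * ρ = (d + 4 * ρ - e) + e := by omega
      rw [e2] at e1
      exact (Nat.dvd_add_right hdv).1 e1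
    · have E := h.eq d (by omega) (by omega)
      rw [S0 u v d (fun k h1 h2 => zor hs (by omega) (by omega) (fun c1 c2 =>
        ndvd_false hrd (c1.2.resolve_right (by omega)) (c2.2.resolve_right (by omega)) (by omega))),
        hTd d rfl, if_neg (by omega), if_pos (by omega)] at E
      rcases h.hη with e | e <;> omega
  have E := h.eq e (by omega) (by omega)
  rw [S0 u v e (fun k h1 h2 => zor hs (by omega) (by omega) (fun c1 c2 =>
        ndvd_false her (c1.2.resolve_right (by omega)) (c2.2.resolve_right (by omega)) (by omega))),
        if_neg (by omega), if_neg (by omega)] at E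
  have hTe : u e + v e = 0 := by linarith
  have hve : v e = - u e := by linarith
  have hue : u e ≠ 0 := fun c => heZ ⟨c, by rw [hve, c]; rfl⟩
  have E1 := h.eq (e + ρ) (by omega) (by omega)
  rw [S0 u v (e + ρ) (fun k h1 h2 => zor hs (by omega) (by omega) (fun c1 c2 =>
        ndvd_false her1 (c1.2.resolve_right (by omega)) (c2.2.resolve_right (by omega)) (by omega))),
        if_neg (by omega), if_neg (by omega)] at E1
  have S2' : S u v (e + 2 * ρ) = W u v (e + 2 * ρ) (2 * ρ) :=
    S1 u v _ _ (by omega) (by omega) (fun k h1 h2 h3 => zor hs (by omega) (by omega) (fun c1 c2 =>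
        ndvd_false her2 (c1.2.resolve_right (by omega)) (c2.2.resolve_right (by omega)) (by omega)))
  have S3' : S u v (e + 3 * ρ) = W u v (e + 3 * ρ) (2 * ρ) + W u v (e + 3 * ρ) (3 * ρ) :=
    S2 u v _ _ _ (by omega) (by omega) (by omega) (by omega) (by omega)
      (fun k h1 h2 h3 h4 => zor hs (by omega) (by omega) (fun c1 c2 =>
        ndvd_false her3 (c1.2.resolve_right (by omega)) (c2.2.resolve_right (by omega)) (by omega)))
  have S5' := S_fin u v (e + 5 * ρ) {2 * ρ, 3 * ρ, 4 * ρ, 5 * ρ} (by simp; omega)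
    (fun k h1 h2 h3 => by
      simp at h3
      exact zor hs (by omega) (by omega) (fun c1 c2 =>
        ndvd_false her5 (c1.2.resolve_right (by omega)) (c2.2.resolve_right (by omega)) (by omega)))
  rw [cen_zero u v (fun q h1 h2 => by
      by_contra hc
      have := (hs q h1 (by omega) hc).2.resolve_right (by omega)
      exact ndvd_false her5 this this (by omega)),
      Finset.sum_insert (by simp; omega), Finset.sum_insert (by simp; omega),
      Finset.sum_pair (by omega)] at S5'
  have hue' : u e = 1 ∨ u e = -1 := by
    by_cases h2 : 2 * e = d + 4 * ρ
    · exfalso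
      have E := h.eq (e + 2 * ρ) (by omega) (by omega)
      have hzz := hmin (e - 2 * ρ) (by omega) (by omega) (fun c => her (by
        have : e = (e - 2 * ρ) + 2 * ρ := by omega
        rw [this]; exact dvd_add c (hm 2)))
      have hTm := h.Tmir (e - 2 * ρ) (e + 2 * ρ) (by omega)
      rw [hzz.1, hzz.2, add_zero, mul_zero] at hTm
      have hne : e ≠ 6 * ρ := fun c => her (c ▸ hm 6)
      rw [hTm, S2', if_neg (by omega), if_neg (by omega)] at E
      have e1 : e + 2 * ρ - 2 * ρ = e := by omega
      unfold W at E
      rw [e1, hva, hve] at E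
      rcases ha with ha | ha <;> rw [ha] at E <;> omega
    · rcases h.HH' H e (by omega) (by omega) h2 hTe with c | c
      · exact absurd c hue
      · exact c
  exact h.parity ρ e rfl (by omega) (by omega) ha hva hb hvb h4 t5 h5 hue' hve (by linarith) S2' S3' 0
    (by rw [S5']; ring)

end Sys
end Jon

namespace Jon

def dot : List ℤ → List ℤ → ℤ
  | a :: as, b :: bs => a * b + dot as bs
  | _, _ => 0

def cands (M p : ℕ) (e T : ℤ) (us vs : List ℤ) : List (ℤ × ℤ × ℤ) :=
  if 2 * p < M then
    if T % 2 = 0 then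
      [-2, -1, 0, 1, 2].map (fun a => (a, T / 2 - a, a * a + (T / 2 - a) * (T / 2 - a)))
    else []
  else if 2 * p = M then
    ([-2, -1, 0, 1, 2].filter (fun a => 2 * (a + e * a) = T)).map (fun a => (a, e * a, a * a))
  else if 2 * (e * vs.getD (M - p - 1) 0 + e * us.getD (2 * p - 1 - M) 0) = T then
    [(e * vs.getD (M - p - 1) 0, e * us.getD (2 * p - 1 - M) 0, 0)]
  else []

/-- evaluate an integer before passing it on (speeds up kernel reduction) -/
def force (z : ℤ) (k : ℤ → Bool) : Bool :=
  match z with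
  | Int.ofNat 0 => k (Int.ofNat 0)
  | Int.ofNat (n + 1) => k (Int.ofNat (n + 1))
  | Int.negSucc 0 => k (Int.negSucc 0)
  | Int.negSucc (n + 1) => k (Int.negSucc (n + 1))

lemma force_eq (z : ℤ) (k : ℤ → Bool) : force z k = k z := by
  unfold force
  split <;> rfl

/-- evaluate the spine of a list before passing it on -/
def forceL : List ℤ → (List ℤ → Bool) → Bool
  | [], k => k []
  | x :: xs, k => forceL xs (fun ys => k (x :: ys))

lemma forceL_eq (l : List ℤ) : ∀ k : List ℤ → Bool, forceL l k = k l := by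
  induction l with
  | nil => intro k; rfl
  | cons x xs ih => intro k; rw [forceL, ih]

/-- exhaustive search; `true` means that no solution exists -/
def srch (M c : ℕ) (ε η : ℤ) (ex : Bool) : ℕ → ℕ → List ℤ → List ℤ → ℤ → Bool
  | 0, _, _, _, bud => ex && decide (bud ≠ 0)
  | fuel + 1, p, us, vs, bud =>
    force ((if p = c then ε else 0) + (if p + c = M then 4 * η else 0) - dot us vs) fun T =>
    (cands M p (ε * η) T us vs).all (fun x => decide (bud < x.2.2) ||
        force x.1 fun a => force x.2.1 fun b => force (bud - x.2.2) fun bud' =>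
        forceL (vs ++ [b]) fun vs' => srch M c ε η ex fuel (p + 1) (a :: us) vs' bud')

def rv (u : ℕ → ℤ) : ℕ → List ℤ
  | 0 => []
  | p + 1 => u p :: rv u p

def fw (v : ℕ → ℤ) : ℕ → ℕ → List ℤ
  | _, 0 => []
  | s, l + 1 => v s :: fw v (s + 1) l

lemma fw_snoc (v : ℕ → ℤ) (l : ℕ) : ∀ s, fw v s l ++ [v (s + l)] = fw v s (l + 1) := by
  induction l with
  | zero => intro s; simp [fw]
  | succ l ih =>
    intro s
    have := ih (s + 1)
    rw [fw, List.cons_append, show s + (l + 1) = s + 1 + l by omega, this]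
    rfl

lemma fw_getD (v : ℕ → ℤ) (l : ℕ) : ∀ s i, i < l → (fw v s l).getD i 0 = v (s + i) := by
  induction l with
  | zero => intro s i hi; omega
  | succ l ih =>
    intro s i hi
    cases i with
    | zero => simp [fw]
    | succ i =>
      have := ih (s + 1) i (by omega)
      rw [fw, List.getD_cons_succ, this]
      congr 1; omega

lemma rv_getD (u : ℕ → ℤ) (p : ℕ) : ∀ i, i < p → (rv u p).getD i 0 = u (p - 1 - i) := by
  induction p with
  | zero => intro i hi; omega
  | succ p ih =>
    intro i hi
    cases i with
    | zero => simp [rv]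
    | succ i =>
      have := ih i (by omega)
      rw [rv, List.getD_cons_succ, this]
      congr 1; omega

lemma dot_eq (u v : ℕ → ℤ) (l : ℕ) : ∀ p s, l ≤ p →
    dot (rv u p) (fw v s l) = ∑ i ∈ Finset.range l, u (p - 1 - i) * v (s + i) := by
  induction l with
  | zero => intro p s _; cases p <;> simp [rv, fw, dot]
  | succ l ih =>
    intro p s hp
    obtain ⟨p, rfl⟩ : ∃ p', p = p' + 1 := ⟨p - 1, by omega⟩
    rw [rv, fw, dot, ih p (s + 1) (by omega), Finset.sum_range_succ', add_comm]
    congr 1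
    apply Finset.sum_congr rfl
    intro i hi
    congr 2 <;> omega

lemma dot_S (u v : ℕ → ℤ) (p : ℕ) : dot (rv u p) (fw v 1 (p - 1)) = S u v p := by
  rw [dot_eq u v (p - 1) p 1 (by omega)]
  unfold S
  apply Finset.sum_nbij' (fun i => p - 1 - i) (fun k => p - 1 - k)
  · intro i hi; simp only [Finset.mem_range, Finset.mem_Ioo] at *; omega
  · intro i hi; simp only [Finset.mem_range, Finset.mem_Ioo] at *; omega
  · intro i hi; simp only [Finset.mem_range] at *; omega
  · intro i hi; simp only [Finset.mem_Ioo] at *; omega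
  · intro i hi
    simp only [Finset.mem_range] at *
    congr 2; omega

def wt (N : ℕ) (u v : ℕ → ℤ) (k : ℕ) : ℤ :=
  if 2 * k < N then u k ^ 2 + v k ^ 2 else if 2 * k = N then u k ^ 2 else 0

lemma wt_nonneg (N : ℕ) (u v : ℕ → ℤ) (k : ℕ) : 0 ≤ wt N u v k := by
  unfold wt; split_ifs <;> positivity

namespace Sys
variable {n r : ℕ} {ε η : ℤ} {u v : ℕ → ℤ}

lemma wt_sum (h : Sys n r ε η u v) : ∑ k ∈ Finset.range n, wt n u v k = 18 := by
  have hn := h.hn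
  have : ∑ k ∈ Finset.range (n + 1), wt n u v k = 18 := by
    rw [← h.norm_split, Finset.sum_filter, Finset.sum_filter, ← Finset.sum_add_distrib]
    apply Finset.sum_congr rfl
    intro k _
    unfold wt
    split_ifs <;> first | omega | simp
  rw [Finset.sum_range_succ] at this
  have e : wt n u v n = 0 := by
    unfold wt
    rw [if_neg (by omega), if_neg (by omega)]
  rw [e, add_zero] at this
  exact this

lemma wt_le (h : Sys n r ε η u v) (p : ℕ) (hp : p ≤ n) : ∑ k ∈ Finset.range p, wt n u v k ≤ 18 := by
  rw [← h.wt_sum]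
  exact Finset.sum_le_sum_of_subset_of_nonneg (Finset.range_mono hp) (fun k _ _ => wt_nonneg n u v k)

lemma mem5 {x : ℤ} (h : x ^ 2 ≤ 8) : x ∈ ([-2, -1, 0, 1, 2] : List ℤ) := by
  have := pm2_of_sq h
  simp; omega

lemma srch_sound (h : Sys n r ε η u v) (M : ℕ) (ex : Bool) :
    ∀ fuel p, 0 < p → p + fuel ≤ n → (ex = true → p + fuel = n) →
      (M = n ∨ ∀ q, q < p + fuel → 2 * q < M ∧ 2 * q < n ∧ q + 2 * r < M ∧ q + 2 * r < n) →
      10 ≤ ∑ k ∈ Finset.range p, wt n u v k →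
      srch M (2 * r) ε η ex fuel p (rv u p) (fw v 1 (p - 1))
        (18 - ∑ k ∈ Finset.range p, wt n u v k) = false := by
  intro fuel
  induction fuel with
  | zero =>
    intro p hp hpn hex hM h10
    rw [srch]
    cases ex with
    | false => rfl
    | true =>
      have : p = n := by simpa using hex rfl
      rw [this, h.wt_sum]; rfl
  | succ fuel ih =>
    intro p hp hpn hex hM h10
    rw [srch, force_eq, dot_S, List.all_eq_false]
    simp only [force_eq, forceL_eq]
    have E := h.eq p hp (by omega)
    have hw := h.wt_le (p + 1) (by omega)
    rw [Finset.sum_range_succ] at hw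
    have hcond : (p + 2 * r = M ↔ p + 2 * r = n) ∧ (2 * p < M ↔ 2 * p < n) ∧
        (2 * p = M ↔ 2 * p = n) ∧ (M = n ∨ 2 * p < n) := by
      rcases hM with rfl | hM
      · simp
      · have := hM p (by omega)
        omega
    obtain ⟨c1, c2, c3, c4⟩ := hcond
    have hR : (if p = 2 * r then ε else 0) + (if p + 2 * r = M then 4 * η else 0) - S u v p
        = 2 * (u p + v p) := by
      simp only [c1]
      linarith
    rw [hR]
    refine ⟨(u p, v p, wt n u v p), ?_, ?_⟩
    · unfold cands
      simp only [c2, c3]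
      have hw8 : wt n u v p ≤ 8 := by linarith
      unfold wt at hw8 ⊢
      by_cases d1 : 2 * p < n
      · rw [if_pos d1] at hw8
        rw [if_pos d1, if_pos (by omega), if_pos d1, List.mem_map]
        have e2 : 2 * (u p + v p) / 2 = u p + v p := by omega
        refine ⟨u p, mem5 (by nlinarith [sq_nonneg (v p)]), ?_⟩
        rw [e2]
        ext <;> simp; ring
      · rw [if_neg d1] at hw8
        rw [if_neg d1, if_neg d1]
        by_cases d2 : 2 * p = n
        · rw [if_pos d2] at hw8
          rw [if_pos d2, if_pos d2, List.mem_map]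
          have hv := h.mir p (by omega)
          have e : n - p = p := by omega
          rw [e] at hv
          refine ⟨u p, List.mem_filter.2 ⟨mem5 (by nlinarith), by rw [hv]; simp⟩, ?_⟩
          rw [hv]
          ext <;> simp; ring
        · have hMn : M = n := by omega
          subst hMn
          rw [if_neg d2, if_neg d2, fw_getD v _ _ _ (by omega), rv_getD u _ _ (by omega)]
          have e1 : 1 + (M - p - 1) = M - p := by omega
          have e2 : p - 1 - (2 * p - 1 - M) = M - p := by omega
          rw [e1, e2, ← h.mir p (by omega), ← h.mir' p (by omega), if_pos rfl]
          simp
    · have hlt : ¬ (18 - ∑ k ∈ Finset.range p, wt n u v k < wt n u v p) := by linarith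
      have hrec := ih (p + 1) (by omega) (by omega) (fun c => by have := hex c; omega)
        (by rcases hM with hM | hM
            · exact Or.inl hM
            · exact Or.inr (fun q hq => hM q (by omega)))
        (by rw [Finset.sum_range_succ]; linarith [wt_nonneg n u v p])
      rw [Finset.sum_range_succ] at hrec
      have e1 : fw v 1 (p - 1) ++ [v p] = fw v 1 (p + 1 - 1) := by
        have := fw_snoc v (p - 1) 1
        rw [show 1 + (p - 1) = p by omega, show p - 1 + 1 = p by omega] at this
        exact this
      simp only [decide_eq_false hlt, Bool.false_or, e1]
      rw [show u p :: rv u p = rv u (p + 1) from rfl, ← sub_sub] at *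
      rw [hrec]
      simp

end Sys

def runI (M fuel : ℕ) (ex : Bool) (η : ℤ) : Bool :=
  [(1 : ℤ), -1].all fun a => [(1 : ℤ), -1].all fun b =>
    srch M 2 (-1) η ex fuel 3 [b, a, 2] [-a, -b] 6

def runII (M fuel : ℕ) (ex : Bool) (η : ℤ) : Bool :=
  [(1 : ℤ), -1].all fun a => [(1 : ℤ), -1].all fun b =>
    srch M 4 1 η ex fuel 4 [b, a, 0, 2] [0, -a, -b] 6

lemma runI_inf : ([1, -1] : List ℤ).all (fun η => runI 100 8 false η) = true := by decide +kernel
lemma runII_inf : ([1, -1] : List ℤ).all (fun η => runII 100 11 false η) = true := by decide +kernel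
lemma runI_fin : ([1, -1] : List ℤ).all (fun η => (List.range 16).all fun i =>
    runI (i + 5) (i + 2) true η) = true := by decide +kernel
lemma runII_fin : ([1, -1] : List ℤ).all (fun η => (List.range 20).all fun i =>
    (i == 2) || runII (i + 9) (i + 5) true η) = true := by decide +kernel

end Jon

namespace Jon
namespace Sys
variable {n r : ℕ} {ε η : ℤ} {u v : ℕ → ℤ}

lemma S_scale (u v : ℕ → ℤ) (n ρ p : ℕ) (hρ : 0 < ρ) (hp : p * ρ < n)
    (hm : ∀ k, 0 < k → k < n → ¬ Z u v k → ρ ∣ k) :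
    S (fun k => u (k * ρ)) (fun k => v (k * ρ)) p = S u v (p * ρ) := by
  classical
  unfold S
  have hinj : Set.InjOn (fun k : ℕ => k * ρ) (Finset.Ioo 0 p : Finset ℕ) := by
    intro a _ b _ hab
    exact Nat.eq_of_mul_eq_mul_right hρ hab
  have hsub : (Finset.Ioo 0 p).image (fun k => k * ρ) ⊆ Finset.Ioo 0 (p * ρ) := by
    intro k hk
    simp only [Finset.mem_image, Finset.mem_Ioo] at hk ⊢
    obtain ⟨a, ⟨ha, hb⟩, rfl⟩ := hk
    exact ⟨Nat.mul_pos ha hρ, Nat.mul_lt_mul_of_pos_right hb hρ⟩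
  rw [← Finset.sum_subset hsub, Finset.sum_image hinj]
  · apply Finset.sum_congr rfl
    intro k hk
    simp only [Nat.sub_mul]
  · intro k hk hk2
    simp only [Finset.mem_Ioo] at hk
    have hnd : ¬ ρ ∣ k := by
      rintro ⟨a, rfl⟩
      apply hk2
      simp only [Finset.mem_image, Finset.mem_Ioo]
      refine ⟨a, ⟨?_, ?_⟩, by ring⟩
      · exact Nat.pos_of_mul_pos_left hk.1
      · have := hk.2
        rw [mul_comm] at this
        exact lt_of_mul_lt_mul_right this (Nat.zero_le _)
    by_contra hc
    exact hnd (hm k hk.1 (by omega) (fun hz => hc (by rw [hz.1, zero_mul])))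

lemma scale (c ρ N : ℕ) (h : Sys (N * ρ) (c * ρ) ε η u v) (hρ : 0 < ρ)
    (hm : ∀ k, 0 < k → k < N * ρ → ¬ Z u v k → ρ ∣ k) :
    Sys N c ε η (fun k => u (k * ρ)) (fun k => v (k * ρ)) where
  hr := by
    have := h.hr
    rcases Nat.eq_zero_or_pos c with rfl | h
    · simp at this
    · exact h
  hn := by
    have := h.hn
    rw [← mul_assoc] at this
    exact lt_of_mul_lt_mul_right this (Nat.zero_le _)
  hε := h.hε
  hη := h.hη
  u0 := by simpa using h.u0
  v0 := by simpa using h.v0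
  mir := by
    intro k hk
    have := h.mir (k * ρ) (Nat.mul_le_mul_right _ hk)
    rw [this, Nat.sub_mul]
  eq := by
    intro p hp hpN
    have hlt : p * ρ < N * ρ := Nat.mul_lt_mul_of_pos_right hpN hρ
    rw [S_scale u v (N * ρ) ρ p hρ hlt hm, h.eq (p * ρ) (Nat.mul_pos hp hρ) hlt]
    have e1 : (p * ρ = 2 * (c * ρ)) ↔ p = 2 * c := by
      rw [← mul_assoc]; exact Nat.mul_left_inj hρ.ne'
    have e2 : (p * ρ + 2 * (c * ρ) = N * ρ) ↔ p + 2 * c = N := by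
      rw [← mul_assoc, ← add_mul]; exact Nat.mul_left_inj hρ.ne'
    simp only [e1, e2]
  norm := by
    classical
    rw [← h.norm]
    have hinj : Set.InjOn (fun k : ℕ => k * ρ) (Finset.range (N + 1) : Finset ℕ) := by
      intro a _ b _ hab
      exact Nat.eq_of_mul_eq_mul_right hρ hab
    have hsub : (Finset.range (N + 1)).image (fun k => k * ρ) ⊆ Finset.range (N * ρ + 1) := by
      intro k hk
      simp only [Finset.mem_image, Finset.mem_range] at hk ⊢
      obtain ⟨a, ha, rfl⟩ := hk
      have := Nat.mul_le_mul_right ρ (show a ≤ N by omega)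
      omega
    rw [← Finset.sum_subset hsub, Finset.sum_image hinj]
    intro k hk hk2
    simp only [Finset.mem_range] at hk
    have hnd : ¬ ρ ∣ k := by
      rintro ⟨a, rfl⟩
      apply hk2
      simp only [Finset.mem_image, Finset.mem_range]
      refine ⟨a, ?_, by ring⟩
      have h2 : a * ρ ≤ N * ρ := by rw [mul_comm a]; omega
      have := le_of_mul_le_mul_right h2 hρ
      omega
    have hk0 : k ≠ 0 := by rintro rfl; exact hnd (dvd_zero _)
    have hkN : k ≠ N * ρ := by rintro rfl; exact hnd (Dvd.intro_left _ rfl)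
    by_contra hc
    exact hnd (hm k (by omega) (by omega) (fun hz => hc (by rw [hz.1]; norm_num)))
  ev := by
    intro p hp hpc
    exact h.ev (p * ρ) (Nat.mul_pos hp hρ) (Nat.mul_lt_mul_of_pos_right hpc hρ)
  od := h.od

lemma finI (h : Sys n 1 (-1) η u v) (hn : 5 ≤ n) (ha : u 1 = 1 ∨ u 1 = -1) (hva : v 1 = - u 1)
    (hb : u 2 = 1 ∨ u 2 = -1) (hvb : v 2 = - u 2) : False := by
  have hu0 := h.u0
  have hv0 := h.v0
  have hsum : ∑ k ∈ Finset.range 3, wt n u v k = 12 := by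
    simp only [Finset.sum_range_succ, Finset.sum_range_zero, wt]
    rw [if_pos (by omega), if_pos (by omega), if_pos (by omega), hu0, hv0, hva, hvb]
    rcases ha with e | e <;> rcases hb with e' | e' <;> rw [e, e'] <;> norm_num
  have key : ∀ M fuel ex, runI M fuel ex η = true →
      srch M (2 * 1) (-1) η ex fuel 3 (rv u 3) (fw v 1 (3 - 1))
        (18 - ∑ k ∈ Finset.range 3, wt n u v k) = true := by
    intro M fuel ex hr
    rw [hsum]
    simp only [runI, List.all_cons, List.all_nil, Bool.and_true, Bool.and_eq_true] at hr
    simp only [rv, fw, hu0, hva, hvb, Nat.reduceAdd, Nat.reduceSub]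
    obtain ⟨⟨h1, h2⟩, h3, h4⟩ := hr
    rcases ha with e | e <;> rcases hb with e' | e' <;> rw [e, e'] <;> assumption
  by_cases hN : n ≤ 20
  · have hrun : runI n (n - 3) true η = true := by
      have := runI_fin
      simp only [List.all_cons, List.all_nil, Bool.and_true, Bool.and_eq_true, List.all_eq_true,
        List.mem_range] at this
      have e1 : n - 5 + 5 = n := by omega
      have e2 : n - 5 + 2 = n - 3 := by omega
      rcases h.hη with e | e
      · have := this.1 (n - 5) (by omega)
        rw [e1, e2] at this
        rw [e]; exact this
      · have := this.2 (n - 5) (by omega)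
        rw [e1, e2] at this
        rw [e]; exact this
    have f := h.srch_sound n true (n - 3) 3 (by omega) (by omega) (by omega) (Or.inl rfl)
      (by rw [hsum]; norm_num)
    rw [key _ _ _ hrun] at f
    exact absurd f (by decide)
  · have hrun : runI 100 8 false η = true := by
      have := runI_inf
      simp only [List.all_cons, List.all_nil, Bool.and_true, Bool.and_eq_true] at this
      rcases h.hη with e | e
      · rw [e]; exact this.1
      · rw [e]; exact this.2
    have f := h.srch_sound 100 false 8 3 (by omega) (by omega) (by simp)
      (Or.inr (fun q hq => by omega)) (by rw [hsum]; norm_num)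
    rw [key _ _ _ hrun] at f
    exact absurd f (by decide)

lemma finII (h : Sys n 2 1 η u v) (hn : 9 ≤ n) (h1 : Z u v 1)
    (ha : u 2 = 1 ∨ u 2 = -1) (hva : v 2 = - u 2)
    (hb : u 3 = 1 ∨ u 3 = -1) (hvb : v 3 = - u 3) : n = 11 := by
  by_contra h11
  have hu0 := h.u0
  have hv0 := h.v0
  have hu1 := h1.1
  have hv1 := h1.2
  have hsum : ∑ k ∈ Finset.range 4, wt n u v k = 12 := by
    simp only [Finset.sum_range_succ, Finset.sum_range_zero, wt]
    rw [if_pos (by omega), if_pos (by omega), if_pos (by omega), if_pos (by omega),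
      hu0, hv0, hva, hvb, hu1, hv1]
    rcases ha with e | e <;> rcases hb with e' | e' <;> rw [e, e'] <;> norm_num
  have key : ∀ M fuel ex, runII M fuel ex η = true →
      srch M (2 * 2) 1 η ex fuel 4 (rv u 4) (fw v 1 (4 - 1))
        (18 - ∑ k ∈ Finset.range 4, wt n u v k) = true := by
    intro M fuel ex hr
    rw [hsum]
    simp only [runII, List.all_cons, List.all_nil, Bool.and_true, Bool.and_eq_true] at hr
    simp only [rv, fw, hu0, hu1, hv1, hva, hvb, Nat.reduceAdd, Nat.reduceSub]
    obtain ⟨⟨h1, h2⟩, h3, h4⟩ := hr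
    rcases ha with e | e <;> rcases hb with e' | e' <;> rw [e, e'] <;> assumption
  by_cases hN : n ≤ 28
  · have hrun : runII n (n - 4) true η = true := by
      have := runII_fin
      simp only [List.all_cons, List.all_nil, Bool.and_true, Bool.and_eq_true, List.all_eq_true,
        List.mem_range, Bool.or_eq_true, beq_iff_eq] at this
      have e1 : n - 9 + 9 = n := by omega
      have e2 : n - 9 + 5 = n - 4 := by omega
      rcases h.hη with e | e
      · have := (this.1 (n - 9) (by omega)).resolve_left (by omega)
        rw [e1, e2] at this
        rw [e]; exact this
      · have := (this.2 (n - 9) (by omega)).resolve_left (by omega)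
        rw [e1, e2] at this
        rw [e]; exact this
    have f := h.srch_sound n true (n - 4) 4 (by omega) (by omega) (by omega) (Or.inl rfl)
      (by rw [hsum]; norm_num)
    rw [key _ _ _ hrun] at f
    exact absurd f (by decide)
  · have hrun : runII 100 11 false η = true := by
      have := runII_inf
      simp only [List.all_cons, List.all_nil, Bool.and_true, Bool.and_eq_true] at this
      rcases h.hη with e | e
      · rw [e]; exact this.1
      · rw [e]; exact this.2
    have f := h.srch_sound 100 false 11 4 (by omega) (by omega) (by simp)
      (Or.inr (fun q hq => by omega)) (by rw [hsum]; norm_num)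
    rw [key _ _ _ hrun] at f
    exact absurd f (by decide)

lemma n_dvd (h : Sys n r ε η u v) (ρ : ℕ) (hρr : ρ ∣ r)
    (hm : ∀ k, 0 < k → k < n → ¬ Z u v k → ρ ∣ k) : ρ ∣ n := by
  have hr := h.hr
  have hn := h.hn
  have := hm (n - r) (by omega) (by omega) (fun hz => by
    have := h.Zmir (n - r) (by omega) hz
    have e : n - (n - r) = r := by omega
    rw [e] at this
    have ho := h.od.1
    rw [this.1] at ho
    exact absurd ho (by decide))
  have e : n = (n - r) + r := by omega
  rw [e]
  exact dvd_add this hρr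

theorem core (h : Sys n r ε η u v) :
    (n = 3 * r ∧ ε = 1) ∨ (n = 5 * r ∧ ε = -1) ∨ (2 * n = 11 * r ∧ ε = 1) := by
  have hr := h.hr
  have hn := h.hn
  by_cases H : HH n u v
  · rcases lt_trichotomy n (3 * r) with c | c | c
    · exact (h.small_lt H c).elim
    · exact Or.inl ⟨c, h.small_eq H c⟩
    rcases lt_trichotomy n (4 * r) with c' | c' | c'
    · exact (h.small_mid H c c').elim
    · exact (h.small_four H c').elim
    obtain ⟨ha, hva⟩ := h.base H (by omega)
    rcases h.dich H c' with ⟨hε, hz, hb, hvb⟩ | ⟨ρ, hrρ, hε, hz, hb, hvb⟩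
    · exfalso
      have hm := h.caseI_mult H c' hε hz hb hvb
      obtain ⟨N, hN⟩ := h.n_dvd r dvd_rfl hm
      rw [mul_comm] at hN
      subst hN hε
      have h' := scale 1 r N (by rw [one_mul]; exact h) hr hm
      have h5 : 5 ≤ N := by
        have := lt_of_mul_lt_mul_right c' (Nat.zero_le _)
        omega
      exact h'.finI h5 (by simpa using ha) (by simpa using hva) hb hvb
    · have hC := CII.mk' h H c' ρ hrρ hε hz hb hvb
      have hm := hC.mult
      obtain ⟨N, hN⟩ := h.n_dvd ρ (by rw [hrρ]; exact Dvd.intro_left 2 rfl) hm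
      rw [mul_comm] at hN
      subst hN hε hrρ
      have hρ := hC.hρ
      have h' := scale 2 ρ N h hρ hm
      have h9 : 9 ≤ N := by
        have := lt_of_mul_lt_mul_right hC.hd (Nat.zero_le _)
        omega
      have := h'.finII h9 (by
        have := hC.z1 ρ hρ (by omega)
        exact ⟨by simpa using this.1, by simpa using this.2⟩) ha hva hb hvb
      right; right
      rw [this]
      exact ⟨by ring, rfl⟩
  · unfold HH at H
    push Not at H
    obtain ⟨p, h0, h2, hT, hu⟩ := H
    exact Or.inr (Or.inl (h.c44 p h0 h2 hT hu))

end Sys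
end Jon

namespace Jon

lemma coeff_even (g h : ℤ[X]) (α β p : ℕ) (hg : ∀ i < α, Even (g.coeff i))
    (hh : ∀ i < β, Even (h.coeff i)) (hp : p < α + β) : Even ((g * h).coeff p) := by
  rw [coeff_mul, even_iff_two_dvd]
  apply Finset.dvd_sum
  rintro ⟨i, j⟩ hij
  rw [Finset.HasAntidiagonal.mem_antidiagonal] at hij
  simp only at hij ⊢
  by_cases hi : i < α
  · exact Dvd.dvd.mul_right (hg i hi).two_dvd _
  · exact Dvd.dvd.mul_left (hh j (by omega)).two_dvd _

lemma coeff_lead (g h : ℤ[X]) (α β : ℕ) (hg : ∀ i < α, Even (g.coeff i))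
    (hh : ∀ i < β, Even (h.coeff i)) (hα : Odd (g.coeff α)) (hβ : Odd (h.coeff β)) :
    Odd ((g * h).coeff (α + β)) := by
  classical
  rw [coeff_mul, ← Finset.add_sum_erase _ _ (show (α, β) ∈ Finset.HasAntidiagonal.antidiagonal (α + β) by simp)]
  apply Odd.add_even (hα.mul hβ)
  rw [even_iff_two_dvd]
  apply Finset.dvd_sum
  rintro ⟨i, j⟩ hij
  rw [Finset.mem_erase, Finset.HasAntidiagonal.mem_antidiagonal] at hij
  simp only [ne_eq, Prod.mk.injEq] at hij ⊢
  by_cases hi : i < α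
  · exact Dvd.dvd.mul_right (hg i hi).two_dvd _
  · exact Dvd.dvd.mul_left (hh j (by omega)).two_dvd _

lemma coeff_four (g h : ℤ[X]) (α β : ℕ) (hg : ∀ i < α, Even (g.coeff i))
    (hh : ∀ i < β, Even (h.coeff i)) (hα : Odd (g.coeff α)) (h0 : h.coeff 0 = 2 ∨ h.coeff 0 = -2)
    (hlt : α < β) : (g * h).coeff α ≠ 0 := by
  classical
  rw [coeff_mul, ← Finset.add_sum_erase _ _ (show (α, 0) ∈ Finset.HasAntidiagonal.antidiagonal α by simp)]
  have : (4 : ℤ) ∣ ∑ x ∈ (Finset.HasAntidiagonal.antidiagonal α).erase (α, 0), g.coeff x.1 * h.coeff x.2 := by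
    apply Finset.dvd_sum
    rintro ⟨i, j⟩ hij
    rw [Finset.mem_erase, Finset.HasAntidiagonal.mem_antidiagonal] at hij
    simp only [ne_eq, Prod.mk.injEq] at hij ⊢
    have := mul_dvd_mul (hg i (by omega)).two_dvd (hh j (by omega)).two_dvd
    simpa using this
  obtain ⟨t, ht⟩ := this
  obtain ⟨w, hw⟩ := hα
  rw [ht, hw]
  rcases h0 with e | e <;> simp only [e] <;> omega

lemma first_odd (g : ℤ[X]) (hg : g.Monic) : ∃ α, Odd (g.coeff α) ∧ ∀ i < α, Even (g.coeff i) := by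
  classical
  have hex : ∃ α, Odd (g.coeff α) := ⟨g.natDegree, by rw [hg.coeff_natDegree]; exact odd_one⟩
  refine ⟨Nat.find hex, Nat.find_spec hex, fun i hi => ?_⟩
  have := Nat.find_min hex hi
  exact Int.not_odd_iff_even.1 this

lemma norm_prod (s : Multiset ℂ) : (∀ z ∈ s, 1 < ‖z‖) → 1 ≤ ‖s.prod‖ ∧ (s ≠ 0 → 1 < ‖s.prod‖) := by
  induction s using Multiset.induction with
  | empty => intro _; simp
  | cons a s ih =>
    intro h
    have h1 := (ih (fun z hz => h z (Multiset.mem_cons_of_mem hz))).1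
    have h2 := h a (Multiset.mem_cons_self a s)
    rw [Multiset.prod_cons, norm_mul]
    have : 1 < ‖a‖ * ‖s.prod‖ := by nlinarith
    exact ⟨this.le, fun _ => this⟩

lemma coeff_zero_gt (g : ℤ[X]) (hg : g.Monic) (hd : 0 < g.natDegree)
    (hr : ∀ z : ℂ, aeval z g = 0 → 1 < ‖z‖) : 1 < |g.coeff 0| := by
  set G := g.map (Int.castRingHom ℂ) with hG
  have hGm : G.Monic := hg.map _
  have hs : G.Splits := IsAlgClosed.splits G
  have h0 := hs.coeff_zero_eq_prod_roots_of_monic hGm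
  have hdeg : G.natDegree = g.natDegree := hg.natDegree_map _
  have hne : G.roots ≠ 0 := by
    intro h
    have := hs.natDegree_eq_card_roots
    rw [h, hdeg] at this
    simp at this
    omega
  have hroot : ∀ z ∈ G.roots, 1 < ‖z‖ := by
    intro z hz
    apply hr
    rw [mem_roots hGm.ne_zero, IsRoot.def, hG, eval_map] at hz
    rw [aeval_def]
    exact hz
  have h1 := (norm_prod _ hroot).2 hne
  have h2 : ‖G.coeff 0‖ = ‖G.roots.prod‖ := by
    rw [h0, norm_mul, norm_pow, norm_neg, norm_one, one_pow, one_mul]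
  rw [← h2, hG, coeff_map] at h1
  simp only [eq_intCast, Complex.norm_intCast] at h1
  exact_mod_cast h1

lemma root_gt (n m : ℕ) (ε₁ ε₂ : ℤ) (hε₁ : ε₁ = 1 ∨ ε₁ = -1) (hε₂ : ε₂ = 1 ∨ ε₂ = -1) (z : ℂ)
    (hz : aeval z ((X : ℤ[X]) ^ n + C ε₁ * X ^ m + C (4 * ε₂)) = 0) : 1 < ‖z‖ := by
  by_contra hc
  push Not at hc
  simp only [map_add, map_mul, aeval_X_pow, eq_intCast, map_intCast] at hz
  have e1 : ‖(ε₁ : ℂ)‖ = 1 := by rcases hε₁ with rfl | rfl <;> simp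
  have e2 : ‖((4 * ε₂ : ℤ) : ℂ)‖ = 4 := by
    rcases hε₂ with rfl | rfl <;> norm_num
  have h1 : ((4 * ε₂ : ℤ) : ℂ) = -(z ^ n + ε₁ * z ^ m) := by
    rw [eq_neg_iff_add_eq_zero, ← hz]; push_cast; ring
  have h2 : ‖((4 * ε₂ : ℤ) : ℂ)‖ ≤ 2 := by
    rw [h1, norm_neg]
    refine (norm_add_le _ _).trans ?_
    rw [norm_mul, norm_pow, norm_pow, e1]
    have := pow_le_one₀ (n := n) (norm_nonneg z) hc
    have := pow_le_one₀ (n := m) (norm_nonneg z) hc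
    linarith
  rw [e2] at h2
  norm_num at h2

lemma coeff_tri (n m : ℕ) (ε₁ ε₂ : ℤ) (k : ℕ) :
    ((X : ℤ[X]) ^ n + C ε₁ * X ^ m + C (4 * ε₂)).coeff k =
      (if k = n then 1 else 0) + (if k = m then ε₁ else 0) + (if k = 0 then 4 * ε₂ else 0) := by
  simp only [coeff_add, coeff_X_pow, coeff_C_mul, coeff_C]
  split_ifs <;> simp

lemma reflect_tri (n m : ℕ) (hmn : m ≤ n) (ε₁ ε₂ : ℤ) :
    reflect n ((X : ℤ[X]) ^ n + C ε₁ * X ^ m + C (4 * ε₂)) =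
      1 + C ε₁ * X ^ (n - m) + C (4 * ε₂) * X ^ n := by
  rw [reflect_add, reflect_add, reflect_monomial, reflect_C_mul_X_pow, revAt_le le_rfl,
    revAt_le hmn, Nat.sub_self, pow_zero]
  congr 1
  have := reflect_C_mul_X_pow n 0 (c := 4 * ε₂)
  rw [pow_zero, mul_one, revAt_le (Nat.zero_le _), Nat.sub_zero] at this
  exact this

lemma coeff_prod (m d : ℕ) (hm : 0 < m) (hd : 0 < d) (ε₁ ε₂ : ℤ) (k : ℕ) (hk : k ≤ m + d) :
    (((X : ℤ[X]) ^ (m + d) + C ε₁ * X ^ m + C (4 * ε₂)) *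
      (1 + C ε₁ * X ^ d + C (4 * ε₂) * X ^ (m + d))).coeff k =
      (if k = m + d then 1 + ε₁ * ε₁ + 16 * (ε₂ * ε₂) else 0) + (if k = m then ε₁ else 0)
        + (if k = d then 4 * (ε₁ * ε₂) else 0) + (if k = 0 then 4 * ε₂ else 0) := by
  have : (((X : ℤ[X]) ^ (m + d) + C ε₁ * X ^ m + C (4 * ε₂)) *
      (1 + C ε₁ * X ^ d + C (4 * ε₂) * X ^ (m + d))) =
      C (1 + ε₁ * ε₁ + 16 * (ε₂ * ε₂)) * X ^ (m + d) + C ε₁ * X ^ m + C (4 * (ε₁ * ε₂)) * X ^ d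
        + C (4 * ε₂) + (C ε₁ * X ^ (m + d + d) + C (4 * ε₂) * X ^ (m + d + (m + d))
        + C (4 * (ε₁ * ε₂)) * X ^ (m + d + m)) := by
    simp only [map_add, map_mul, map_one, pow_add, map_ofNat]
    ring
  rw [this]
  simp only [coeff_add, coeff_C_mul, coeff_X_pow, coeff_C]
  rw [if_neg (c := k = m + d + d) (by omega), if_neg (c := k = m + d + (m + d)) (by omega),
    if_neg (c := k = m + d + m) (by omega)]
  split_ifs <;> simp

lemma antidiag_split (F F' : ℤ[X]) (p : ℕ) (hp : 0 < p) :
    (F * F').coeff p = F.coeff 0 * F'.coeff p + F.coeff p * F'.coeff 0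
      + ∑ k ∈ Finset.Ioo 0 p, F.coeff k * F'.coeff (p - k) := by
  rw [coeff_mul, Finset.Nat.sum_antidiagonal_eq_sum_range_succ (fun i j => F.coeff i * F'.coeff j),
    Finset.sum_range_succ, Nat.sub_self, Finset.range_eq_Ico, Finset.sum_eq_sum_Ico_succ_bot hp]
  have : Finset.Ico (0 + 1) p = Finset.Ioo 0 p := by
    ext k; simp only [Finset.mem_Ico, Finset.mem_Ioo]; omega
  rw [this, Nat.sub_zero]
  ring

theorem toSys (n r : ℕ) (ε₁ ε₂ : ℤ) (hε₁ : ε₁ = 1 ∨ ε₁ = -1) (hε₂ : ε₂ = 1 ∨ ε₂ = -1)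
    (hr : 1 ≤ r) (hn : 2 * r < n) (g h : ℤ[X]) (hg : g.Monic) (hh : h.Monic)
    (hgh : g * h = (X : ℤ[X]) ^ n + C ε₁ * X ^ (2 * r) + C (4 * ε₂))
    (hdeg : g.natDegree + h.natDegree = n)
    (s : ℤ) (hs : s = 1 ∨ s = -1) (hg0 : g.coeff 0 = 2 * s) (hh0 : h.coeff 0 = 2 * ε₂ * s)
    (ge : ∀ i < r, Even (g.coeff i)) (he : ∀ i < r, Even (h.coeff i))
    (go : Odd (g.coeff r)) (hho : Odd (h.coeff r)) :
    ∃ u v, Sys n r (ε₁ * ε₂) ε₁ u v := by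
  set a := g.natDegree with ha
  set b := h.natDegree with hb
  set F := g * reflect b h with hF
  set F' := reflect a g * h with hF'
  have hss : s * s = 1 := by rcases hs with e | e <;> rw [e] <;> norm_num
  have h22 : ε₂ * ε₂ = 1 := by rcases hε₂ with e | e <;> rw [e] <;> norm_num
  have h11 : ε₁ * ε₁ = 1 := by rcases hε₁ with e | e <;> rw [e] <;> norm_num
  have hrefl : reflect n F = F' := by
    rw [hF, ← hdeg, reflect_mul g (reflect b h) le_rfl
      (by refine (natDegree_reflect_le).trans ?_; simp [hb]), reflect_reflect]
  have hmir : ∀ k, k ≤ n → F'.coeff k = F.coeff (n - k) := by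
    intro k hk
    rw [← hrefl, coeff_reflect, revAt_le hk]
  have hg00 : (reflect a g).coeff 0 = 1 := by
    rw [coeff_reflect, revAt_le (Nat.zero_le _), Nat.sub_zero]; exact hg.coeff_natDegree
  have hh00 : (reflect b h).coeff 0 = 1 := by
    rw [coeff_reflect, revAt_le (Nat.zero_le _), Nat.sub_zero]; exact hh.coeff_natDegree
  have hFF : F * F' = ((X : ℤ[X]) ^ (2 * r + (n - 2 * r)) + C ε₁ * X ^ (2 * r) + C (4 * ε₂)) *
      (1 + C ε₁ * X ^ (n - 2 * r) + C (4 * ε₂) * X ^ (2 * r + (n - 2 * r))) := by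
    have e : 2 * r + (n - 2 * r) = n := by omega
    rw [e, ← reflect_tri n (2 * r) (by omega), ← hgh, ← hdeg, reflect_mul g h le_rfl le_rfl]
    ring
  have hco : ∀ k, k ≤ n → (F * F').coeff k = (if k = n then 18 else 0) +
      (if k = 2 * r then ε₁ else 0) + (if k + 2 * r = n then 4 * (ε₁ * ε₂) else 0)
      + (if k = 0 then 4 * ε₂ else 0) := by
    intro k hk
    rw [hFF, coeff_prod (2 * r) (n - 2 * r) (by omega) (by omega) _ _ k (by omega), h11, h22]
    have e : 2 * r + (n - 2 * r) = n := by omega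
    have e' : (k = n - 2 * r) ↔ (k + 2 * r = n) := by omega
    simp only [e, e']
    norm_num
  have hF0 : F.coeff 0 = 2 * s := by rw [hF, mul_coeff_zero, hh00, hg0, mul_one]
  have hF0' : F'.coeff 0 = 2 * ε₂ * s := by rw [hF', mul_coeff_zero, hg00, hh0, one_mul]
  have hpm : ∀ x : ℤ, (x = 1 ∨ x = -1) → ∀ y, (Even y → Even (x * y)) ∧ (Odd y → Odd (x * y)) := by
    intro x hx y
    rcases hx with rfl | rfl <;> simp
  have hse : s * ε₂ = 1 ∨ s * ε₂ = -1 := by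
    rcases hs with rfl | rfl <;> rcases hε₂ with rfl | rfl <;> simp
  refine ⟨fun k => s * F.coeff k, fun k => s * ε₂ * F'.coeff k, ?_⟩
  constructor
  · exact hr
  · exact hn
  · rcases hε₁ with rfl | rfl <;> rcases hε₂ with rfl | rfl <;> simp
  · exact hε₁
  · rw [hF0]; linear_combination 2 * hss
  · rw [hF0']; linear_combination 2 * s * s * h22 + 2 * hss
  · intro k hk
    rw [hmir k hk]
    linear_combination (-(ε₂ * s * F.coeff (n - k))) * h11
  · intro p hp hpn
    have e1 := hco p (by omega)
    rw [antidiag_split F F' p hp, if_neg (by omega), if_neg (c := p = 0) (by omega), hF0, hF0'] at e1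
    have e2 : S (fun k => s * F.coeff k) (fun k => s * ε₂ * F'.coeff k) p
        = ε₂ * ∑ k ∈ Finset.Ioo 0 p, F.coeff k * F'.coeff (p - k) := by
      unfold S
      rw [Finset.mul_sum]
      apply Finset.sum_congr rfl
      intro k _
      linear_combination (ε₂ * F.coeff k * F'.coeff (p - k)) * hss
    rw [e2]
    have e3 : (if p = 2 * r then ε₁ * ε₂ else 0) + (if p + 2 * r = n then 4 * ε₁ else 0)
      = ε₂ * ((if p = 2 * r then ε₁ else 0) + (if p + 2 * r = n then 4 * (ε₁ * ε₂) else 0)) := by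
      rcases hε₂ with rfl | rfl <;> split_ifs <;> ring
    rw [e3]
    linear_combination ε₂ * e1 - 2 * s * F.coeff p * h22
  · have e1 := hco n le_rfl
    rw [if_pos rfl, if_neg (by omega), if_neg (by omega), if_neg (by omega), coeff_mul,
      Finset.Nat.sum_antidiagonal_eq_sum_range_succ (fun i j => F.coeff i * F'.coeff j)] at e1
    have e2 : (18 : ℤ) = 18 + 0 + 0 + 0 := by norm_num
    rw [e2, ← e1]
    apply Finset.sum_congr rfl
    intro k hk
    rw [Finset.mem_range] at hk
    rw [hmir (n - k) (by omega), show n - (n - k) = k by omega]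
    linear_combination (F.coeff k ^ 2) * hss
  · intro p hp hpr
    exact ⟨(hpm s hs _).1 (coeff_even g _ r 0 p ge (by simp) (by omega)),
      (hpm _ hse _).1 (coeff_even _ h 0 r p (by simp) he (by omega))⟩
  · refine ⟨(hpm s hs _).2 ?_, (hpm _ hse _).2 ?_⟩
    · exact coeff_lead g (reflect b h) r 0 ge (by simp) go (by rw [hh00]; exact odd_one)
    · have := coeff_lead (reflect a g) h 0 r (by simp) he (by rw [hg00]; exact odd_one) hho
      rwa [zero_add] at this

end Jon

/-- Jonassen's theorem: `X^n + ε₁X^m + 4ε₂` is irreducible outside three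
exceptional families. -/
theorem jonassen_trinomial (n m : ℕ) (hm : 1 ≤ m) (hmn : m < n)
    (ε₁ ε₂ : ℤ) (hε₁ : ε₁ = 1 ∨ ε₁ = -1) (hε₂ : ε₂ = 1 ∨ ε₂ = -1)
    (hexc : ¬ ∃ k : ℕ, 0 < k ∧
      ((n = 3 * k ∧ m = 2 * k ∧ ε₂ = ε₁) ∨
       (n = 5 * k ∧ m = 2 * k ∧ ε₂ = -ε₁) ∨
       (n = 11 * k ∧ m = 4 * k ∧ ε₂ = ε₁))) :
    Irreducible ((X : Polynomial ℤ) ^ n + C ε₁ * X ^ m + C (4 * ε₂)) := by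
  have hroot := Jon.root_gt n m ε₁ ε₂ hε₁ hε₂
  have hco := Jon.coeff_tri n m ε₁ ε₂
  have hnat : ((X : Polynomial ℤ) ^ n + C ε₁ * X ^ m + C (4 * ε₂)).natDegree = n := by
    apply natDegree_eq_of_le_of_coeff_ne_zero
    · rw [natDegree_le_iff_coeff_eq_zero]
      intro k hk
      rw [hco, if_neg (by omega), if_neg (by omega), if_neg (by omega)]; rfl
    · rw [hco, if_pos rfl, if_neg (by omega), if_neg (by omega)]; norm_num
  have hmonic : ((X : Polynomial ℤ) ^ n + C ε₁ * X ^ m + C (4 * ε₂)).Monic := by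
    rw [Monic, leadingCoeff, hnat, hco, if_pos rfl, if_neg (by omega), if_neg (by omega)]
    norm_num
  rw [hmonic.irreducible_iff_natDegree']
  refine ⟨fun h1 => ?_, fun g h hg hh hgh hmem => ?_⟩
  · rw [h1, natDegree_one] at hnat; omega
  rw [Finset.mem_Ioc, hnat] at hmem
  have hdeg : g.natDegree + h.natDegree = n := by rw [← hnat, ← hgh, hg.natDegree_mul hh]
  have g1 := Jon.coeff_zero_gt g hg (by omega) (fun z hz => hroot z (by
    rw [← hgh, map_mul, hz, zero_mul]))
  have h1 := Jon.coeff_zero_gt h hh (by omega) (fun z hz => hroot z (by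
    rw [← hgh, map_mul, hz, mul_zero]))
  have h0 : g.coeff 0 * h.coeff 0 = 4 * ε₂ := by
    rw [← mul_coeff_zero, hgh, hco, if_neg (by omega), if_neg (by omega), if_pos rfl]; ring
  have habs : |g.coeff 0| * |h.coeff 0| = 4 := by
    rw [← abs_mul, h0]
    rcases hε₂ with e | e <;> rw [e] <;> norm_num
  have hg2 : |g.coeff 0| = 2 := by nlinarith
  obtain ⟨s, hs, hgs⟩ : ∃ s : ℤ, (s = 1 ∨ s = -1) ∧ g.coeff 0 = 2 * s := by
    rcases (abs_eq (by norm_num)).1 hg2 with e | e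
    · exact ⟨1, by simp, by rw [e]; norm_num⟩
    · exact ⟨-1, by simp, by rw [e]; norm_num⟩
  have hhs : h.coeff 0 = 2 * ε₂ * s := by
    rw [hgs] at h0
    rcases hs with e | e <;> rw [e] at h0 ⊢ <;> linarith
  obtain ⟨α, hα, gα⟩ := Jon.first_odd g hg
  obtain ⟨β, hβ, hβ'⟩ := Jon.first_odd h hh
  have hlead := Jon.coeff_lead g h α β gα hβ' hα hβ
  have hα0 : α ≠ 0 := by
    rintro rfl
    rw [hgs] at hα
    exact Int.not_even_iff_odd.2 hα (even_two_mul s)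
  have hβ0 : β ≠ 0 := by
    rintro rfl
    rw [hhs, mul_assoc] at hβ
    exact Int.not_even_iff_odd.2 hβ (even_two_mul _)
  have hmle : α + β ≤ m := by
    by_contra hc
    have := Jon.coeff_even g h α β m gα hβ' (by omega)
    rw [hgh, hco, if_neg (by omega), if_pos rfl, if_neg (by omega)] at this
    rcases hε₁ with e | e <;> rw [e] at this <;> exact absurd this (by decide)
  have hm2 : α + β = m := by
    by_contra hc
    rw [hgh, hco, if_neg (by omega), if_neg hc, if_neg (by omega)] at hlead
    exact absurd hlead (by decide)
  have hzero : ∀ k, 0 < k → k < m → (g * h).coeff k = 0 := by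
    intro k h1 h2
    rw [hgh, hco, if_neg (by omega), if_neg (by omega), if_neg (by omega)]; rfl
  have hαβ : α = β := by
    rcases lt_trichotomy α β with c | c | c
    · exact absurd (hzero α (by omega) (by omega)) (Jon.coeff_four g h α β gα hβ' hα (by
        rw [hhs]; rcases hs with rfl | rfl <;> rcases hε₂ with rfl | rfl <;> simp) c)
    · exact c
    · exact absurd (by rw [mul_comm]; exact hzero β (by omega) (by omega))
        (Jon.coeff_four h g β α hβ' gα hβ (by
        rw [hgs]; rcases hs with rfl | rfl <;> simp) c)
  subst hαβ
  have hm3 : m = 2 * α := by omega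
  subst hm3
  obtain ⟨u, v, hsys⟩ := Jon.toSys n α ε₁ ε₂ hε₁ hε₂ (by omega) hmn g h hg hh hgh hdeg s hs hgs hhs
    gα hβ' hα hβ
  apply hexc
  rcases hsys.core with ⟨c1, c2⟩ | ⟨c1, c2⟩ | ⟨c1, c2⟩
  · refine ⟨α, by omega, Or.inl ⟨c1, rfl, ?_⟩⟩
    rcases hε₁ with rfl | rfl <;> rcases hε₂ with rfl | rfl <;> omega
  · refine ⟨α, by omega, Or.inr (Or.inl ⟨c1, rfl, ?_⟩)⟩
    rcases hε₁ with rfl | rfl <;> rcases hε₂ with rfl | rfl <;> omega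
  · refine ⟨α / 2, by omega, Or.inr (Or.inr ⟨by omega, by omega, ?_⟩)⟩
    rcases hε₁ with rfl | rfl <;> rcases hε₂ with rfl | rfl <;> omega
end

section
/- Let n > m ≥ 1 be integers, d = gcd(n, m), and let b, c be nonzero integers. Let f(X) = X^n + bX^m + c ∈ ℂ[X] and let f′ be its derivative. Then the product of f′(α) over the complex roots α of f, counted with multiplicity, equals c^{m−1}·( n^{n/d}·c^{(n−m)/d} − (−1)^{n/d}·(n−m)^{(n−m)/d}·m^{m/d}·b^{n/d} )^d. Equivalently, the discriminant of f, D = (−1)^{n(n−1)/2}·∏_α f′(α), equals (−1)^{n(n−1)/2}·c^{m−1}·( n^{n/d}·c^{(n−m)/d} − (−1)^{n/d}·(n−m)^{(n−m)/d}·m^{m/d}·b^{n/d} )^d. -/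
open Polynomial

lemma gd_periodic (g : ℕ → ℂ) (M : ℕ) (hg : ∀ i, g (i + M) = g i) (d : ℕ) :
    ∏ i ∈ Finset.range (d * M), g i = (∏ i ∈ Finset.range M, g i) ^ d := by
  induction d with
  | zero => simp
  | succ d ih =>
    have h : ∀ d i, g (d * M + i) = g i := by
      intro d
      induction d with
      | zero => simp
      | succ d ihd => intro i; rw [← ihd i, ← hg (d * M + i)]; congr 1; ring
    rw [add_mul, one_mul, Finset.prod_range_add, ih, pow_succ]
    simp [h]

lemma gd_eval (m : ℕ) (hm : 0 < m) (ζ β t x : ℂ) (hζ : IsPrimitiveRoot ζ m) (hβ : β ^ m = t) :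
    ∏ i ∈ Finset.range m, (x - ζ ^ i * β) = x ^ m - t := by
  have := congrArg (eval x) (X_pow_sub_C_eq_prod hζ hm hβ)
  simpa [eval_prod] using this.symm

lemma gd_inner (d N M : ℕ) (hd : 0 < d) (hM : 0 < M) (hco : N.Coprime M) (ζ β t s : ℂ)
    (hζ : IsPrimitiveRoot ζ (d * M)) (hβ : β ^ (d * M) = t) :
    ∏ i ∈ Finset.range (d * M), (s - (ζ ^ i * β) ^ (d * N)) = (s ^ M - t ^ N) ^ d := by
  have h1 : IsPrimitiveRoot ((ζ ^ d) ^ N) M :=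
    (hζ.pow (by positivity) rfl).pow_of_coprime N hco
  have h2 : ∀ i, (ζ ^ i * β) ^ (d * N) = ((ζ ^ d) ^ N) ^ i * β ^ (d * N) := by
    intro i; rw [mul_pow, ← pow_mul, ← pow_mul, ← pow_mul]; congr 2; ring
  simp_rw [h2]
  rw [gd_periodic _ M _ d, gd_eval M hM _ _ (t ^ N) s h1]
  · rw [← hβ, ← pow_mul, ← pow_mul]; congr 1; ring
  · intro i; rw [pow_add, h1.pow_eq_one, mul_one]

lemma gd_swap (f : ℂ[X]) (hf : f.Monic) (m : ℕ) (hm : 0 < m) (ζ β t : ℂ)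
    (hζ : IsPrimitiveRoot ζ m) (hβ : β ^ m = t) :
    (f.roots.map (fun α => α ^ m - t)).prod =
      ∏ i ∈ Finset.range m, ((-1) ^ f.natDegree * f.eval (ζ ^ i * β)) := by
  have hs : f.Splits := IsAlgClosed.splits f
  have h1 : ∀ x : ℂ, (-1) ^ f.natDegree * f.eval x = (f.roots.map (fun α => α - x)).prod := by
    intro x
    rw [hs.eval_eq_prod_roots_of_monic hf x, hs.natDegree_eq_card_roots]
    rw [← Multiset.card_map (fun a => x - a) f.roots, ← Multiset.prod_map_neg, Multiset.map_map]
    simp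
  simp_rw [h1, ← gd_eval m hm ζ β t _ hζ hβ]
  exact Multiset.prod_map_prod_map f.roots (Finset.range m).val

lemma gd_core (d N M : ℕ) (hd : 0 < d) (hM : 0 < M) (hMN : M < N) (hco : N.Coprime M)
    (b c : ℂ) (hb : b ≠ 0) (hc : c ≠ 0) :
    (((X ^ (d * N) + C b * X ^ (d * M) + C c).roots).map
        (fun α => (X ^ (d * N) + C b * X ^ (d * M) + C c).derivative.eval α)).prod =
      c ^ (d * M - 1) *
        (((d * N : ℕ) : ℂ) ^ N * c ^ (N - M) -
          (-1 : ℂ) ^ N * ((d * N - d * M : ℕ) : ℂ) ^ (N - M) *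
            ((d * M : ℕ) : ℂ) ^ M * b ^ N) ^ d := by
  have hn : d * M < d * N := Nat.mul_lt_mul_of_pos_left hMN hd
  have hm : 0 < d * M := by positivity
  obtain ⟨K, rfl⟩ : ∃ K, N = M + K := ⟨N - M, by omega⟩
  have hK : 0 < K := by omega
  have hk0 : ((d * K : ℕ) : ℂ) ≠ 0 := by exact_mod_cast (by positivity : d * K ≠ 0)
  rw [show d * (M + K) - d * M = d * K by rw [mul_add]; omega, show M + K - M = K by omega]
  set f : ℂ[X] := X ^ (d * (M + K)) + C b * X ^ (d * M) + C c with hfdef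
  have hlt : (C b * X ^ (d * M) + C c : ℂ[X]).degree < (d * (M + K) : ℕ) := by
    refine (degree_add_le _ _).trans_lt (max_lt ?_ ?_)
    · exact (degree_C_mul_X_pow_le _ _).trans_lt (by exact_mod_cast hn)
    · exact degree_C_le.trans_lt (by exact_mod_cast (by omega : 0 < d * (M + K)))
  have hmonic : f.Monic := by
    rw [hfdef, add_assoc]; exact monic_X_pow_add hlt
  have hdeg : f.natDegree = d * (M + K) := by
    rw [hfdef, add_assoc]
    apply natDegree_eq_of_degree_eq_some
    rw [degree_add_eq_left_of_degree_lt (by rwa [degree_X_pow]), degree_X_pow]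
  have hs : f.Splits := IsAlgClosed.splits f
  have hcard : f.roots.card = d * (M + K) := by rw [← hs.natDegree_eq_card_roots, hdeg]
  have heval : ∀ x, f.eval x = x ^ (d * (M + K)) + b * x ^ (d * M) + c := by
    intro x; simp [hfdef]
  -- product of roots
  have hprod : c = (-1) ^ (d * (M + K)) * f.roots.prod := by
    have h := hs.coeff_zero_eq_prod_roots_of_monic hmonic
    rw [hdeg, coeff_zero_eq_eval_zero, heval, zero_pow (by omega), zero_pow (by omega)] at h
    simpa using h
  set k : ℂ := ((d * K : ℕ) : ℂ) with hk
  set t : ℂ := -(((d * (M + K) : ℕ) : ℂ) * c / (k * b)) with ht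
  set s : ℂ := ((d * M : ℕ) : ℂ) * c / k with hsdef
  have hnk : ((d * (M + K) : ℕ) : ℂ) = ((d * M : ℕ) : ℂ) + k := by rw [hk]; push_cast; ring
  have hst : b * t + c = -s := by
    rw [ht, hsdef, hnk]; field_simp; ring
  have hroot : ∀ α ∈ f.roots, α * f.derivative.eval α = -(k * b) * (α ^ (d * M) - t) := by
    intro α hα
    have h0 : f.eval α = 0 := (mem_roots'.1 hα).2
    rw [heval] at h0
    have hp : ∀ j : ℕ, 0 < j → α * ((j : ℂ) * α ^ (j - 1)) = j * α ^ j := by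
      intro j hj
      obtain ⟨j, rfl⟩ : ∃ i, j = i + 1 := ⟨j - 1, by omega⟩
      simp [pow_succ]; ring
    have h1 : α * f.derivative.eval α = ((d * (M + K) : ℕ) : ℂ) * α ^ (d * (M + K)) +
        b * (((d * M : ℕ) : ℂ) * α ^ (d * M)) := by
      rw [← hp _ hm, ← hp _ (by omega : 0 < d * (M + K))]
      simp only [hfdef, derivative_add, derivative_X_pow, derivative_C_mul, derivative_C, eval_add,
        eval_mul, eval_C, eval_pow, eval_X, eval_zero]
      simp
      ring
    have h2 : k * b * t = -(((d * (M + K) : ℕ) : ℂ) * c) := by rw [ht]; field_simp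
    rw [h1]
    linear_combination ((d * (M + K) : ℕ) : ℂ) * h0 - h2 - b * α ^ (d * M) * hnk
  have hm1 := congrArg Multiset.prod (Multiset.map_congr rfl hroot)
  rw [Multiset.prod_map_mul, Multiset.prod_map_mul, Multiset.map_id', Multiset.map_const',
    Multiset.prod_replicate, hcard] at hm1
  obtain ⟨β, hβ⟩ := IsAlgClosed.exists_pow_nat_eq t hm
  have hζ := Complex.isPrimitiveRoot_exp (d * M) hm.ne'
  set ζ := Complex.exp (2 * Real.pi * Complex.I / ((d * M : ℕ) : ℂ))
  have hev : ∀ i ∈ Finset.range (d * M), (-1) ^ f.natDegree * f.eval (ζ ^ i * β) =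
      (-1) ^ (d * (M + K) + 1) * (s - (ζ ^ i * β) ^ (d * (M + K))) := by
    intro i _
    rw [hdeg, heval, mul_pow _ _ (d * M), hβ, ← pow_mul, mul_comm i, pow_mul ζ, hζ.pow_eq_one,
      one_pow, one_mul, add_assoc, hst]
    ring
  rw [gd_swap f hmonic (d * M) hm ζ β t hζ hβ, Finset.prod_congr rfl hev, Finset.prod_mul_distrib,
    gd_inner d (M + K) M hd hM hco ζ β t s hζ hβ, Finset.prod_const, Finset.card_range] at hm1
  have hfin : (k * b) ^ (M + K) * (s ^ M - t ^ (M + K)) = (-1) ^ (M + K + 1) * c ^ M *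
      (((d * (M + K) : ℕ) : ℂ) ^ (M + K) * c ^ K -
          (-1 : ℂ) ^ (M + K) * k ^ K * ((d * M : ℕ) : ℂ) ^ M * b ^ (M + K)) := by
    have e1 : (k * b) ^ (M + K) * s ^ M = b ^ (M + K) * k ^ K * ((d * M : ℕ) : ℂ) ^ M * c ^ M := by
      rw [hsdef, div_pow, mul_pow, mul_pow, pow_add k]; field_simp
    have e2 : (k * b) ^ (M + K) * t ^ (M + K) =
        (-1) ^ (M + K) * ((d * (M + K) : ℕ) : ℂ) ^ (M + K) * c ^ (M + K) := by
      rw [ht, ← mul_pow, ← mul_pow, ← mul_pow]; congr 1; field_simp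
    have e3 : ((-1 : ℂ) ^ (M + K)) * (-1) ^ (M + K) = 1 := by
      rw [← mul_pow]; simp
    rw [mul_sub, e1, e2, pow_succ, pow_add c]
    linear_combination (-c ^ M * k ^ K * ((d * M : ℕ) : ℂ) ^ M * b ^ (M + K)) * e3
  set P := (f.roots.map (fun α => f.derivative.eval α)).prod
  set A := (((d * (M + K) : ℕ) : ℂ) ^ (M + K) * c ^ K -
          (-1 : ℂ) ^ (M + K) * k ^ K * ((d * M : ℕ) : ℂ) ^ M * b ^ (M + K))
  have hfin2 := congrArg (· ^ d) hfin
  simp only [mul_pow _ _ d, ← pow_mul] at hfin2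
  have hsign : ((-1 : ℂ) ^ (d * (M + K) + 1)) ^ (d * M) * (-1) ^ ((M + K + 1) * d) = 1 := by
    rw [← pow_mul, ← pow_add]
    apply Even.neg_one_pow
    have hpar : ¬ (Even (M + K) ∧ Even M) := by
      rintro ⟨h1, h2⟩
      have := Nat.dvd_gcd h1.two_dvd h2.two_dvd
      rw [hco] at this
      omega
    simp only [Nat.even_add, Nat.even_mul, Nat.not_even_one] at hpar ⊢
    tauto
  have hcP : c * P = c ^ (d * M) * A ^ d := by
    rw [neg_pow] at hm1
    have e4 : ((-1 : ℂ) ^ (d * (M + K))) * (-1) ^ (d * (M + K)) = 1 := by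
      rw [← mul_pow]; simp
    have e5 : (k * b) ^ (d * (M + K)) * (s ^ M - t ^ (M + K)) ^ d =
        (-1) ^ ((M + K + 1) * d) * c ^ (d * M) * A ^ d := by
      rw [mul_comm d M, ← hfin2]; congr 1; rw [mul_pow]; ring
    calc c * P = (-1) ^ (d * (M + K)) * (f.roots.prod * P) := by
          conv_lhs => rw [hprod]
          ring
      _ = ((-1 : ℂ) ^ (d * (M + K))) * (-1) ^ (d * (M + K)) *
            ((-1 : ℂ) ^ (d * (M + K) + 1)) ^ (d * M) *
            ((k * b) ^ (d * (M + K)) * (s ^ M - t ^ (M + K)) ^ d) := by rw [hm1]; ring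
      _ = (((-1 : ℂ) ^ (d * (M + K) + 1)) ^ (d * M) * (-1) ^ ((M + K + 1) * d)) *
            (c ^ (d * M) * A ^ d) := by rw [e4, e5]; ring
      _ = _ := by rw [hsign, one_mul]
  apply mul_left_cancel₀ hc
  rw [hcP, ← mul_assoc, ← pow_succ', Nat.sub_add_cancel hm]

/-- The Greenfield–Drucker discriminant formula for the trinomial `X^n + bX^m + c`:
the product of `f'(α)` over the complex roots `α` of `f` (with multiplicity), and
the resulting formula for the discriminant `D = (-1)^{n(n-1)/2} ∏ f'(α)`. -/
theorem greenfield_drucker_discriminant (n m : ℕ) (hm : 1 ≤ m) (hmn : m < n)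
    (b c : ℤ) (hb : b ≠ 0) (hc : c ≠ 0) (d : ℕ) (hd : d = Nat.gcd n m) :
    (((X ^ n + C (b : ℂ) * X ^ m + C (c : ℂ)).roots).map
        (fun α => (X ^ n + C (b : ℂ) * X ^ m + C (c : ℂ)).derivative.eval α)).prod =
      (c : ℂ) ^ (m - 1) *
        ((n : ℂ) ^ (n / d) * (c : ℂ) ^ ((n - m) / d) -
          (-1 : ℂ) ^ (n / d) * ((n - m : ℕ) : ℂ) ^ ((n - m) / d) *
            (m : ℂ) ^ (m / d) * (b : ℂ) ^ (n / d)) ^ d ∧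
    (-1 : ℂ) ^ (n * (n - 1) / 2) *
      (((X ^ n + C (b : ℂ) * X ^ m + C (c : ℂ)).roots).map
        (fun α => (X ^ n + C (b : ℂ) * X ^ m + C (c : ℂ)).derivative.eval α)).prod =
      (-1 : ℂ) ^ (n * (n - 1) / 2) * (c : ℂ) ^ (m - 1) *
        ((n : ℂ) ^ (n / d) * (c : ℂ) ^ ((n - m) / d) -
          (-1 : ℂ) ^ (n / d) * ((n - m : ℕ) : ℂ) ^ ((n - m) / d) *
            (m : ℂ) ^ (m / d) * (b : ℂ) ^ (n / d)) ^ d := by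
  have key : (((X ^ n + C (b : ℂ) * X ^ m + C (c : ℂ)).roots).map
        (fun α => (X ^ n + C (b : ℂ) * X ^ m + C (c : ℂ)).derivative.eval α)).prod =
      (c : ℂ) ^ (m - 1) *
        ((n : ℂ) ^ (n / d) * (c : ℂ) ^ ((n - m) / d) -
          (-1 : ℂ) ^ (n / d) * ((n - m : ℕ) : ℂ) ^ ((n - m) / d) *
            (m : ℂ) ^ (m / d) * (b : ℂ) ^ (n / d)) ^ d := by
    have hd0 : 0 < d := by rw [hd]; exact Nat.gcd_pos_of_pos_right _ hm
    have hdn : d ∣ n := hd ▸ Nat.gcd_dvd_left n m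
    have hdm : d ∣ m := hd ▸ Nat.gcd_dvd_right n m
    have hco : (n / d).Coprime (m / d) := by
      rw [hd]; exact Nat.coprime_div_gcd_div_gcd (hd ▸ hd0)
    have h := gd_core d (n / d) (m / d) hd0 (Nat.div_pos (Nat.le_of_dvd hm hdm) hd0)
      (Nat.div_lt_div_of_lt_of_dvd hdn hmn) hco (b : ℂ) (c : ℂ)
      (by exact_mod_cast hb) (by exact_mod_cast hc)
    have hsub : n / d - m / d = (n - m) / d := by
      obtain ⟨u, rfl⟩ := hdn
      obtain ⟨v, rfl⟩ := hdm
      rw [← Nat.mul_sub, Nat.mul_div_cancel_left _ hd0, Nat.mul_div_cancel_left _ hd0,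
        Nat.mul_div_cancel_left _ hd0]
    rw [Nat.mul_div_cancel' hdn, Nat.mul_div_cancel' hdm, hsub] at h
    exact h
  exact ⟨key, by rw [key]; exact (mul_assoc _ _ _).symm⟩
end
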